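/- arXiv:1804.10128 — 5 statements merged into one kernel-verified Lean document; each statement's English description precedes it below -/
import Mathlib

section
/- Let N ≥ 1 be an integer. Every 2×2 integer matrix M with determinant N whose four entries have greatest common divisor 1 can be written uniquely as a product M = γ·σ, where γ ∈ SL₂(ℤ) and σ ∈ C(N). -/
open Matrix

/-- The set `C(N)` of upper-triangular integer matrices `(a b; 0 d)` with `a·d = N`, `a > 0`,
`0 ≤ b < d`, and `gcd(a, b, d) = 1`. -/
def CN (N : ℕ) : Set (Matrix (Fin 2) (Fin 2) ℤ) :=
  {σ | σ 1 0 = 0 ∧ σ 0 0 * σ 1 1 = (N : ℤ) ∧ 0 < σ 0 0 ∧ 0 ≤ σ 0 1 ∧ σ 0 1 < σ 1 1 ∧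
    Int.gcd (σ 0 0) (Int.gcd (σ 0 1) (σ 1 1)) = 1}

/-! Left multiplication by `SL(2, ℤ)` acts on the matrices of determinant `m ≠ 0`, preserving the
common divisors of the entries. The Euclidean algorithm on the first column (in Mathlib,
`FixedDetMatrices.induction_on`) moves every matrix into the set `reps m` of matrices `(a b; 0 d)`
with `a > 0` and `0 ≤ b < |d|`. If `γ` maps one of these to another, then `γ = (1 n; 0 1)`, and the
upper right entries, both in `[0, |d|)`, differ by `n d`, so `n = 0`. Hence exactly one `γ` moves a
given matrix into `reps m`. For `m = N`, the elements of `reps N` with coprime entries are those of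
`C(N)`. -/

open FixedDetMatrices
open scoped MatrixGroups

section Content

variable {l m n R : Type*} [CommSemiring R]

/-- The matrix analogue of `Polynomial.IsPrimitive`: only units divide all entries. (In Mathlib,
`Matrix.IsPrimitive` is the unrelated notion of Perron–Frobenius theory.) -/
def HasUnitContent (M : Matrix m n R) : Prop :=
  ∀ k : R, (∀ i j, k ∣ M i j) → IsUnit k

theorem HasUnitContent.of_mul_right [Fintype m] {A : Matrix l m R} {B : Matrix m n R}
    (h : HasUnitContent (A * B)) : HasUnitContent B := fun k hk ↦
  h k fun i j ↦ Finset.dvd_sum fun t _ ↦ (hk t j).mul_left (A i t)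

end Content

theorem hasUnitContent_fin_two_iff {M : Matrix (Fin 2) (Fin 2) ℤ} :
    HasUnitContent M ↔
      Int.gcd (Int.gcd (M 0 0) (M 0 1)) (Int.gcd (M 1 0) (M 1 1)) = 1 := by
  have dvd_gcd_iff (k : ℤ) : (∀ i j, k ∣ M i j) ↔
      k ∣ (Int.gcd (Int.gcd (M 0 0) (M 0 1)) (Int.gcd (M 1 0) (M 1 1)) : ℤ) := by
    simp only [Fin.forall_fin_two, Int.dvd_coe_gcd_iff]
  simp only [HasUnitContent, dvd_gcd_iff]
  constructor
  · intro h
    exact Nat.isUnit_iff.1 (Int.ofNat_isUnit.1 (h _ dvd_rfl))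
  · intro h k hk
    rw [h] at hk
    exact isUnit_of_dvd_one hk

section Representatives

variable {m : ℤ}

theorem exists_smul_mem_reps (hm : m ≠ 0) (A : FixedDetMatrix (Fin 2) ℤ m) :
    ∃ γ : SL(2, ℤ), γ • A ∈ reps m := by
  have of_smul (δ : SL(2, ℤ)) (B : FixedDetMatrix (Fin 2) ℤ m) :
      (∃ γ : SL(2, ℤ), γ • B ∈ reps m) → ∃ γ : SL(2, ℤ), γ • δ • B ∈ reps m := by
    rintro ⟨γ, hγ⟩
    exact ⟨γ * δ⁻¹, by rwa [mul_smul, inv_smul_smul]⟩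
  induction A using induction_on hm with
  | h0 A h10 h00 h01 h11 => exact ⟨1, by rw [one_smul]; exact ⟨h10, h00, h01, h11⟩⟩
  | hS B hB => exact of_smul _ B hB
  | hT B hB => exact of_smul _ B hB

theorem eq_one_of_smul_mem_reps {A : FixedDetMatrix (Fin 2) ℤ m} {γ : SL(2, ℤ)}
    (hA : A ∈ reps m) (hγA : γ • A ∈ reps m) : γ = 1 := by
  obtain ⟨a10, a00, a01, a11⟩ := hA
  obtain ⟨b10, b00, b01, b11⟩ := hγA
  simp only [smul_coe, Matrix.mul_apply, Fin.sum_univ_two, a10, mul_zero, add_zero]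
    at b10 b00 b01 b11
  have γ10 : γ 1 0 = 0 := (mul_eq_zero.1 b10).resolve_right a00.ne'
  have diag : γ 0 0 * γ 1 1 = 1 := by
    have := γ.det_coe
    rwa [Matrix.det_fin_two, γ10, mul_zero, sub_zero] at this
  have γ00 : γ 0 0 = 1 :=
    Int.eq_one_of_mul_eq_one_right (pos_of_mul_pos_left b00 a00.le).le diag
  have γ11 : γ 1 1 = 1 := by rwa [γ00, one_mul] at diag
  rw [γ00, one_mul] at b01
  rw [abs_of_nonneg a01] at a11
  rw [γ00, one_mul, γ10, zero_mul, zero_add, γ11, one_mul, abs_of_nonneg b01] at b11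
  have γ01 : γ 0 1 = 0 := by
    have shift_lt : |γ 0 1 * A.1 1 1| < |A.1 1 1| := by
      simpa only [add_sub_cancel_left] using abs_sub_lt_of_nonneg_of_lt b01 b11 a01 a11
    rw [abs_mul, mul_lt_iff_lt_one_left (a01.trans_lt a11)] at shift_lt
    exact Int.abs_lt_one_iff.1 shift_lt
  ext i j
  fin_cases i <;> fin_cases j
  exacts [γ00, γ01, γ10, γ11]

theorem existsUnique_mem_reps_smul_eq (hm : m ≠ 0) (A : FixedDetMatrix (Fin 2) ℤ m) :
    ∃! p : SL(2, ℤ) × FixedDetMatrix (Fin 2) ℤ m, p.2 ∈ reps m ∧ p.1 • p.2 = A := by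
  obtain ⟨γ, hγA⟩ := exists_smul_mem_reps hm A
  refine ⟨(γ⁻¹, γ • A), ⟨hγA, inv_smul_smul γ A⟩, ?_⟩
  rintro ⟨δ, B⟩ ⟨hB, rfl⟩
  have γδ : γ * δ = 1 := eq_one_of_smul_mem_reps hB (by rwa [mul_smul])
  rw [← mul_smul, γδ, one_smul, ← eq_inv_of_mul_eq_one_right γδ]

end Representatives

theorem mem_CN_iff {N : ℕ} {σ : Matrix (Fin 2) (Fin 2) ℤ} :
    σ ∈ CN N ↔ HasUnitContent σ ∧
      ∃ hσ : σ.det = N, (⟨σ, hσ⟩ : FixedDetMatrix (Fin 2) ℤ N) ∈ reps (N : ℤ) := by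
  have content_iff (h10 : σ 1 0 = 0) :
      HasUnitContent σ ↔ Int.gcd (σ 0 0) (Int.gcd (σ 0 1) (σ 1 1)) = 1 := by
    simp only [hasUnitContent_fin_two_iff, h10, Int.gcd, Int.natAbs_natCast, Int.natAbs_zero,
      Nat.gcd_zero_left, Nat.gcd_assoc]
  constructor
  · rintro ⟨h10, hdet, h00, h01, h11, hgcd⟩
    refine ⟨(content_iff h10).2 hgcd, by rw [Matrix.det_fin_two, h10, mul_zero, sub_zero, hdet],
      h10, h00, h01, ?_⟩
    exact (abs_of_nonneg h01).trans_lt (h11.trans_le (le_abs_self _))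
  · rintro ⟨hcontent, hdet, h10, h00, h01, h11⟩
    dsimp only at h10 h00 h01 h11
    rw [Matrix.det_fin_two, h10, mul_zero, sub_zero] at hdet
    have d_nonneg : 0 ≤ σ 1 1 := nonneg_of_mul_nonneg_right (hdet ▸ N.cast_nonneg) h00
    rw [abs_of_nonneg h01, abs_of_nonneg d_nonneg] at h11
    exact ⟨h10, hdet, h00, h01, h11, (content_iff h10).1 hcontent⟩

/-- Let `N ≥ 1` be an integer.  Every `2 × 2` integer matrix `M` with
determinant `N` whose four entries have greatest common divisor `1` can be written uniquely as
a product `M = γ · σ` with `γ ∈ SL₂(ℤ)` and `σ ∈ C(N)`. -/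
theorem exists_unique_SL2_mul_CN (N : ℕ) (hN : 1 ≤ N)
    (M : Matrix (Fin 2) (Fin 2) ℤ) (hdet : M.det = (N : ℤ))
    (hgcd : Int.gcd (Int.gcd (M 0 0) (M 0 1)) (Int.gcd (M 1 0) (M 1 1)) = 1) :
    ∃! p : Matrix.SpecialLinearGroup (Fin 2) ℤ × Matrix (Fin 2) (Fin 2) ℤ,
      p.2 ∈ CN N ∧ (p.1 : Matrix (Fin 2) (Fin 2) ℤ) * p.2 = M := by
  have hN₀ : (N : ℤ) ≠ 0 := by exact_mod_cast Nat.one_le_iff_ne_zero.1 hN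
  obtain ⟨⟨γ, σ⟩, ⟨hσ, hγσ⟩, unique⟩ := existsUnique_mem_reps_smul_eq hN₀ ⟨M, hdet⟩
  have hM : γ.1 * σ.1 = M := Subtype.mk.inj hγσ
  have content_σ : HasUnitContent σ.1 :=
    .of_mul_right (A := γ.1) (by rwa [hM, hasUnitContent_fin_two_iff])
  refine ⟨(γ, σ.1), ⟨mem_CN_iff.2 ⟨content_σ, σ.2, hσ⟩, hM⟩, ?_⟩
  rintro ⟨δ, τ⟩ ⟨hτ, hδτ⟩
  obtain ⟨-, det_τ, τ_mem_reps⟩ := mem_CN_iff.1 hτ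
  have δτ_eq : (δ, ⟨τ, det_τ⟩) = (γ, σ) := unique _ ⟨τ_mem_reps, Subtype.ext hδτ⟩
  exact congrArg (Prod.map id Subtype.val) δτ_eq
end

section
/- For every ε > 0 there exists a constant C > 0 with the following property: for every imaginary quadratic number field K whose discriminant d_K satisfies |d_K| ≥ C, one has |log(h_K) / log(√|d_K|) − 1| < ε. (Brauer–Siegel theorem for imaginary quadratic fields.) -/
/-!
The class number formula reads `h_K = w √|d_K| · ρ_K / (2π)`, where `ρ_K` is the residue of `ζ_K`
at `1` and `w ≤ 2` once `d_K < -4`, so it suffices that `ρ_K` lies between `|d_K| ^ (-ε)` and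
`|d_K| ^ ε` for large `|d_K|`.

Let `χ` be the Jacobi symbol `(d_K / ·)` made into a Dirichlet character mod `4|d_K|`. At every
prime `p` the number of ideals of norm `n` satisfies the degree-two Hecke recursion with the same
parameters as the Dirichlet convolution `1 * χ` (except at `p = 2`, where `χ` vanishes). Hence
`ζ_K(s) = ζ(s) L(s, χ)` up to an Euler factor at `2`, and `ρ_K` equals `L(1, χ)` up to a bounded
factor. Partial summation bounds `L(1, χ)` from above by `O(|d_K| ^ δ)`.

The lower bound is Siegel's theorem, proved as in Estermann: if some quadratic `L(s, χ₀)` has a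
real zero near `1`, then nonnegativity of the coefficients of `ζ(s) L(s, χ) L(s, χ₀) L(s, χχ₀)`
bounds `L(1, χ)` from below for every other quadratic `χ`, and if there is no such zero the same
argument applies to `ζ(s) L(s, χ)`. At most one discriminant induces the same primitive character
as `χ₀`, and it is avoided by taking `|d_K|` large.
-/

open NumberField Module

section PartialSummation

open Filter Finset Asymptotics MeasureTheory

variable {N : ℕ}

/-- The summatory function `t ↦ ∑_{1 ≤ k ≤ t} χ(k)` of a Dirichlet character. -/
noncomputable def charSum (χ : DirichletCharacter ℂ N) (t : ℝ) : ℂ :=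
  ∑ k ∈ Icc 1 ⌊t⌋₊, χ k

lemma charSum_eq_zero_of_lt_one (χ : DirichletCharacter ℂ N) {t : ℝ} (ht : t < 1) :
    charSum χ t = 0 := by
  simp [charSum, Nat.floor_eq_zero.mpr ht]

lemma measurable_charSum (χ : DirichletCharacter ℂ N) : Measurable (charSum χ) :=
  (measurable_from_nat (f := fun n ↦ ∑ k ∈ Icc 1 n, χ k)).comp Nat.measurable_floor

lemma norm_charSum_le (χ : DirichletCharacter ℂ N) {t : ℝ} (ht : 0 ≤ t) : ‖charSum χ t‖ ≤ t :=
  calc ‖charSum χ t‖ ≤ ∑ _k ∈ Icc 1 ⌊t⌋₊, (1 : ℝ) := norm_sum_le_of_le _ fun _ _ ↦ χ.norm_le_one _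
    _ = ⌊t⌋₊ := by simp
    _ ≤ t := Nat.floor_le ht

lemma map_zero_of_ne_one {χ : DirichletCharacter ℂ N} (hχ : χ ≠ 1) : χ 0 = 0 :=
  χ.map_nonunit fun h ↦ hχ <| by
    have := subsingleton_of_zero_eq_one (isUnit_zero_iff.mp h)
    exact MulChar.ext fun a ↦ by simp [Subsingleton.elim a 1]

variable [NeZero N] {χ : DirichletCharacter ℂ N}

lemma sum_range_level_eq_zero (hχ : χ ≠ 1) : ∑ k ∈ range N, χ k = 0 := by
  rw [← MulChar.sum_eq_zero_of_ne_one hχ]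
  exact sum_nbij' (fun k ↦ (k : ZMod N)) ZMod.val (by simp) (by simp [ZMod.val_lt])
    (fun k hk ↦ ZMod.val_cast_of_lt (mem_range.mp hk)) (by simp) (by simp)

lemma sum_range_add_level_mul (hχ : χ ≠ 1) (r q : ℕ) :
    ∑ k ∈ range (r + N * q), χ k = ∑ k ∈ range r, χ k := by
  induction q with
  | zero => simp
  | succ q ih =>
    rw [← ih, show r + N * (q + 1) = N + (r + N * q) by ring, sum_range_add,
      sum_range_level_eq_zero hχ]
    simp

lemma norm_sum_range_le_level (hχ : χ ≠ 1) (n : ℕ) : ‖∑ k ∈ range n, χ k‖ ≤ N := by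
  rw [← Nat.mod_add_div n N, sum_range_add_level_mul hχ]
  calc ‖∑ k ∈ range (n % N), χ k‖ ≤ ∑ _k ∈ range (n % N), (1 : ℝ) :=
        norm_sum_le_of_le _ fun _ _ ↦ χ.norm_le_one _
    _ = (n % N : ℕ) := by simp
    _ ≤ N := mod_cast (Nat.mod_lt n (NeZero.pos N)).le

lemma norm_charSum_le_level (hχ : χ ≠ 1) (t : ℝ) : ‖charSum χ t‖ ≤ N := by
  have hsum : charSum χ t = ∑ k ∈ range (⌊t⌋₊ + 1), χ k := by
    rw [sum_range_eq_add_Ico _ (Nat.succ_pos _), Nat.cast_zero, map_zero_of_ne_one hχ, zero_add]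
    rfl
  exact hsum ▸ norm_sum_range_le_level hχ _

lemma norm_charSum_le_rpow (hχ : χ ≠ 1) {δ : ℝ} (hδ₀ : 0 ≤ δ) (hδ₁ : δ ≤ 1) {t : ℝ} (ht : 0 < t) :
    ‖charSum χ t‖ ≤ N ^ δ * t ^ (1 - δ) :=
  calc ‖charSum χ t‖ = ‖charSum χ t‖ ^ δ * ‖charSum χ t‖ ^ (1 - δ) := by
        rw [← Real.rpow_add' (norm_nonneg _) (by simp), add_sub_cancel, Real.rpow_one]
    _ ≤ N ^ δ * t ^ (1 - δ) := by
        have hexp : 0 ≤ 1 - δ := sub_nonneg.mpr hδ₁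
        exact mul_le_mul (Real.rpow_le_rpow (norm_nonneg _) (norm_charSum_le_level hχ t) hδ₀)
          (Real.rpow_le_rpow (norm_nonneg _) (norm_charSum_le χ ht.le) hexp) (by positivity)
          (by positivity)

lemma differentiableAt_mellin_charSum (hχ : χ ≠ 1) {s : ℂ} (hs : s.re < 0) :
    DifferentiableAt ℂ (mellin (charSum χ)) s := by
  refine mellin_differentiableAt_of_isBigO_rpow (a := 0) (b := s.re - 1) ?_ ?_ hs ?_ (by linarith)
  · refine (locallyIntegrable_const (N : ℝ)).mono (measurable_charSum χ).aestronglyMeasurable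
      (.of_forall fun t ↦ ?_) |>.locallyIntegrableOn _
    simpa using norm_charSum_le_level hχ t
  · exact .of_bound N <| .of_forall fun t ↦ by simpa using norm_charSum_le_level hχ t
  · refine (isBigO_zero _ _).congr' ?_ .rfl
    filter_upwards [mem_nhdsWithin_of_mem_nhds (Iio_mem_nhds zero_lt_one)] with t ht
    exact (charSum_eq_zero_of_lt_one χ ht).symm

omit [NeZero N] in
lemma mellin_charSum_neg (χ : DirichletCharacter ℂ N) (s : ℂ) :
    mellin (charSum χ) (-s) = ∫ t in Set.Ioi (1 : ℝ), charSum χ t * t ^ (-(s + 1)) := by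
  rw [← integral_Ici_eq_integral_Ioi]
  calc mellin (charSum χ) (-s)
      = ∫ t in Set.Ioi (0 : ℝ), charSum χ t * t ^ (-(s + 1)) := by
        simp only [mellin, smul_eq_mul, mul_comm, neg_add']
    _ = _ := setIntegral_eq_of_subset_of_forall_sdiff_eq_zero measurableSet_Ioi
        (Set.Ici_subset_Ioi.mpr one_pos) fun t ht ↦ by
          rw [charSum_eq_zero_of_lt_one χ (Set.notMem_Ici.mp ht.2), zero_mul]

lemma LFunction_eq_mul_mellin_of_one_lt_re (hχ : χ ≠ 1) {s : ℂ} (hs : 1 < s.re) :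
    χ.LFunction s = s * mellin (charSum χ) (-s) := by
  rw [χ.LFunction_eq_LSeries hs, mellin_charSum_neg]
  refine LSeries_eq_mul_integral _ le_rfl (by linarith) (χ.LSeriesSummable_of_one_lt_re hs) ?_
  refine .of_bound N <| .of_forall fun n ↦ ?_
  simpa [charSum] using norm_charSum_le_level hχ n

lemma LFunction_eq_mul_mellin (hχ : χ ≠ 1) {s : ℂ} (hs : 0 < s.re) :
    χ.LFunction s = s * mellin (charSum χ) (-s) := by
  have hopen : IsOpen {s : ℂ | 0 < s.re} := isOpen_lt continuous_const Complex.continuous_re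
  have hpre : IsPreconnected {s : ℂ | 0 < s.re} := (convex_halfSpace_re_gt 0).isPreconnected
  have hmellin : DifferentiableOn ℂ (fun s ↦ s * mellin (charSum χ) (-s)) {s : ℂ | 0 < s.re} :=
    fun z hz ↦ (differentiableAt_id.mul <| (differentiableAt_mellin_charSum hχ
      (s := -z) (by simpa using hz)).comp z differentiableAt_id.neg).differentiableWithinAt
  refine (χ.differentiable_LFunction hχ).differentiableOn.analyticOnNhd hopen
    |>.eqOn_of_preconnected_of_eventuallyEq (hmellin.analyticOnNhd hopen) hpre
      (z₀ := 2) (by simp) ?_ hs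
  filter_upwards [(isOpen_lt continuous_const Complex.continuous_re).mem_nhds
    (show (1 : ℝ) < (2 : ℂ).re by simp)] with z hz
  exact LFunction_eq_mul_mellin_of_one_lt_re hχ hz

theorem norm_LFunction_le (hχ : χ ≠ 1) {δ : ℝ} (hδ₀ : 0 ≤ δ) (hδ₁ : δ ≤ 1) {s : ℂ}
    (hs₀ : 0 < s.re) (hs : 1 < s.re + δ) :
    ‖χ.LFunction s‖ ≤ ‖s‖ * (N ^ δ / (s.re + δ - 1)) := by
  have hexp : -s.re - δ < -1 := by linarith
  rw [LFunction_eq_mul_mellin hχ hs₀, norm_mul, mellin_charSum_neg]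
  gcongr
  calc ‖∫ t in Set.Ioi (1 : ℝ), charSum χ t * t ^ (-(s + 1))‖
      ≤ ∫ t in Set.Ioi (1 : ℝ), N ^ δ * t ^ (-s.re - δ) := by
        refine norm_integral_le_of_norm_le ((integrableOn_Ioi_rpow_of_lt hexp one_pos).const_mul _)
          ((ae_restrict_iff' measurableSet_Ioi).mpr <| .of_forall fun t ht ↦ ?_)
        have ht₀ : 0 < t := zero_lt_one.trans ht
        calc ‖charSum χ t * t ^ (-(s + 1))‖ = ‖charSum χ t‖ * t ^ (-(s.re + 1)) := by
              rw [norm_mul, Complex.norm_cpow_eq_rpow_re_of_pos ht₀]; simp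
          _ ≤ N ^ δ * t ^ (1 - δ) * t ^ (-(s.re + 1)) := by
              gcongr; exact norm_charSum_le_rpow hχ hδ₀ hδ₁ ht₀
          _ = N ^ δ * t ^ (-s.re - δ) := by
              rw [mul_assoc, ← Real.rpow_add ht₀]; ring_nf
    _ = N ^ δ / (s.re + δ - 1) := by
        rw [integral_const_mul, integral_Ioi_rpow_of_lt hexp one_pos, Real.one_rpow, neg_div,
          ← div_neg, mul_one_div]
        ring_nf

end PartialSummation

section Estermann

open Complex Filter Topology
open scoped ComplexOrder

/-- `G` is the entire continuation of `(s - 1) ∑ aₙ n⁻ˢ`, where the Dirichlet series has nonnegative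
coefficients, leading coefficient `1`, and converges absolutely for `Re s > 1`. Its value `G 1` is
the residue of the Dirichlet series at `1`. -/
structure IsPoleRemoval (a : ℕ → ℂ) (G : ℂ → ℂ) : Prop where
  nonneg : 0 ≤ a
  map_one : a 1 = 1
  abscissaOfAbsConv_le : LSeries.abscissaOfAbsConv a ≤ 1
  differentiable : Differentiable ℂ G
  eq_mul_LSeries : ∀ s : ℂ, 1 < s.re → G s = (s - 1) * LSeries a s

/-- The real part of the coefficient of `(2 - s)ⁿ` in the Taylor expansion at `2` of
`(G s - G 1) / (s - 1)`. -/
noncomputable def slopeCoeff (G : ℂ → ℂ) (n : ℕ) : ℝ :=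
  ((n.factorial : ℂ)⁻¹ * ((-1) ^ n * iteratedDeriv n (dslope G 1) 2)).re

lemma dslope_one_eq (G : ℂ → ℂ) {s : ℂ} (hs : s ≠ 1) :
    dslope G 1 s = (G s - G 1) * (s - 1)⁻¹ := by
  rw [dslope_of_ne _ hs, slope_def_field, div_eq_mul_inv]

lemma iteratedDeriv_const_mul_inv_sub_one_two (c : ℂ) (n : ℕ) :
    iteratedDeriv n (fun s : ℂ ↦ c * (s - 1)⁻¹) 2 = c * ((-1) ^ n * n.factorial) := by
  rw [iteratedDeriv_const_mul_field, iteratedDeriv_comp_sub_const n (fun s : ℂ ↦ s⁻¹) 1]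
  simp only [iteratedDeriv_eq_iterate]
  rw [iter_deriv_inv]
  norm_num

section EntireFunction

variable {G : ℂ → ℂ} (hG : Differentiable ℂ G)
include hG

lemma differentiable_dslope_one : Differentiable ℂ (dslope G 1) :=
  differentiableOn_univ.mp <| (differentiableOn_dslope univ_mem).mpr hG.differentiableOn

lemma hasSum_slopeCoeff (x : ℝ) :
    HasSum (fun n ↦ slopeCoeff G n * (2 - x) ^ n) (dslope G 1 x).re := by
  have htaylor := hasSum_taylorSeries_of_entire (differentiable_dslope_one hG) 2 x
  refine (hasSum_re htaylor).congr_fun fun n ↦ ?_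
  rw [slopeCoeff, ← re_mul_ofReal, show (x : ℂ) - 2 = -1 * ((2 - x : ℝ) : ℂ) by push_cast; ring,
    mul_pow]
  congr 1
  simp only [smul_eq_mul]
  push_cast
  ring

variable {M : ℝ} (hM : ∀ s ∈ Metric.closedBall (2 : ℂ) (3 / 2), ‖G s‖ ≤ M)
include hM

omit hG in
lemma norm_dslope_one_le {s : ℂ} (hs : s ∈ Metric.sphere (2 : ℂ) (3 / 2)) :
    ‖dslope G 1 s‖ ≤ 4 * M := by
  have hdist : 1 / 2 ≤ ‖s - 1‖ := by
    have := norm_sub_norm_le (s - 2) (-1)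
    rw [mem_sphere_iff_norm.mp hs, norm_neg, norm_one, sub_neg_eq_add,
      show s - 2 + 1 = s - 1 by ring] at this
    linarith
  have hnum : ‖G s - G 1‖ ≤ 2 * M := by
    linarith [norm_sub_le (G s) (G 1), hM s (Metric.sphere_subset_closedBall hs),
      hM 1 (by rw [mem_closedBall_iff_norm]; norm_num)]
  rw [dslope_one_eq _ (sub_ne_zero.mp (norm_pos_iff.mp (by linarith))), norm_mul, norm_inv,
    ← div_eq_mul_inv, div_le_iff₀ (by linarith)]
  nlinarith [norm_nonneg (G s - G 1)]

lemma abs_slopeCoeff_le (n : ℕ) : |slopeCoeff G n| ≤ 4 * M * (2 / 3) ^ n := by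
  have hcauchy := Complex.norm_iteratedDeriv_le_of_forall_mem_sphere_norm_le n
    (by norm_num : (0 : ℝ) < 3 / 2) (differentiable_dslope_one hG).diffContOnCl
    fun _ ↦ norm_dslope_one_le hM
  calc |slopeCoeff G n| ≤ (n.factorial : ℝ)⁻¹ * ‖iteratedDeriv n (dslope G 1) 2‖ :=
        (abs_re_le_norm _).trans (by simp)
    _ ≤ (n.factorial : ℝ)⁻¹ * (n.factorial * (4 * M) / (3 / 2) ^ n) := by gcongr
    _ = 4 * M * (2 / 3) ^ n := by
        rw [show (2 / 3 : ℝ) = (3 / 2)⁻¹ by norm_num, inv_pow]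
        field_simp [n.factorial_ne_zero]

end EntireFunction

namespace IsPoleRemoval

variable {a : ℕ → ℂ} {G : ℂ → ℂ} (h : IsPoleRemoval a G)
include h

lemma abscissaOfAbsConv_lt {x : ℝ} (hx : 1 < x) : LSeries.abscissaOfAbsConv a < x :=
  h.abscissaOfAbsConv_le.trans_lt (mod_cast hx)

lemma one_le_LSeries_two : 1 ≤ LSeries a 2 := by
  have hsum : LSeriesSummable a 2 := LSeriesSummable_of_abscissaOfAbsConv_lt_re <| by
    simpa using h.abscissaOfAbsConv_lt one_lt_two
  simpa [LSeries, LSeries.term_def, h.map_one] using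
    hsum.le_tsum 1 fun n _ ↦ by simpa using LSeries.term_nonneg (h.nonneg n) 2

lemma re_apply_one_nonneg : 0 ≤ (G 1).re := by
  have hlim : Tendsto (fun y : ℝ ↦ (G y).re) (𝓝[>] 1) (𝓝 (G 1).re) :=
    ((continuous_re.comp (h.differentiable.continuous.comp continuous_ofReal)).tendsto'
      1 _ (by simp)).mono_left nhdsWithin_le_nhds
  refine ge_of_tendsto hlim ?_
  filter_upwards [self_mem_nhdsWithin] with y (hy : 1 < y)
  rw [h.eq_mul_LSeries y (by simpa using hy)]
  have hpos := LSeries.positive h.nonneg (h.map_one ▸ one_pos) (h.abscissaOfAbsConv_lt hy)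
  have hy' : (0 : ℂ) ≤ y - 1 := by exact_mod_cast (sub_pos.mpr hy).le
  exact (le_def.mp (mul_nonneg hy' hpos.le)).1

lemma slopeCoeff_eq (n : ℕ) :
    slopeCoeff G n =
      ((n.factorial : ℂ)⁻¹ * ((-1) ^ n * iteratedDeriv n (LSeries a) 2)).re - (G 1).re := by
  have hlocal : dslope G 1 =ᶠ[𝓝 2] LSeries a - fun s ↦ G 1 * (s - 1)⁻¹ := by
    filter_upwards [(isOpen_lt continuous_const continuous_re).mem_nhds
      (show (1 : ℝ) < (2 : ℂ).re by simp)] with s hs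
    have hs₁ : s ≠ 1 := fun h₁ ↦ by simp [h₁] at hs
    rw [dslope_one_eq _ hs₁, h.eq_mul_LSeries s hs, Pi.sub_apply]
    field_simp [sub_ne_zero.mpr hs₁]
  have hsmooth : ContDiffAt ℂ n (LSeries a) 2 := (LSeries_analyticOnNhd a 2 <| by
    simpa using h.abscissaOfAbsConv_lt one_lt_two).contDiffAt
  have hpole : ContDiffAt ℂ n (fun s : ℂ ↦ G 1 * (s - 1)⁻¹) 2 :=
    contDiffAt_const.mul (ContDiffAt.inv (by fun_prop) (by norm_num))
  have hsign : (-1 : ℂ) ^ n * (-1) ^ n = 1 := by rw [← mul_pow]; simp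
  have hfact : (n.factorial : ℂ) ≠ 0 := mod_cast n.factorial_ne_zero
  rw [slopeCoeff, hlocal.iteratedDeriv_eq, iteratedDeriv_sub hsmooth hpole,
    iteratedDeriv_const_mul_inv_sub_one_two, ← sub_re]
  congr 1
  field_simp
  linear_combination (-(n.factorial : ℂ) * G 1) * hsign

lemma neg_re_le_slopeCoeff (n : ℕ) : -(G 1).re ≤ slopeCoeff G n := by
  have hcoeff := LSeries.iteratedDeriv_alternating h.nonneg (h.abscissaOfAbsConv_lt one_lt_two) n
  have := (le_def.mp (mul_nonneg (a := (n.factorial : ℂ)⁻¹) (by positivity) hcoeff)).1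
  rw [h.slopeCoeff_eq]
  push_cast at this
  rw [zero_re] at this
  linarith

lemma one_sub_re_le_slopeCoeff_zero : 1 - (G 1).re ≤ slopeCoeff G 0 := by
  rw [h.slopeCoeff_eq]
  simpa using (le_def.mp h.one_le_LSeries_two).1

lemma one_le_sum_slopeCoeff_add {y : ℝ} (hy : 0 ≤ y) {m : ℕ} (hm : m ≠ 0) :
    1 ≤ ∑ n ∈ Finset.range m, slopeCoeff G n * y ^ n + (G 1).re * ∑ n ∈ Finset.range m, y ^ n := by
  obtain ⟨k, rfl⟩ := Nat.exists_eq_succ_of_ne_zero hm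
  have hterm (n : ℕ) : 0 ≤ (slopeCoeff G n + (G 1).re) * y ^ n :=
    mul_nonneg (by linarith [h.neg_re_le_slopeCoeff n]) (by positivity)
  rw [Finset.mul_sum, ← Finset.sum_add_distrib, Finset.sum_range_succ']
  have := Finset.sum_nonneg fun n (_ : n ∈ Finset.range k) ↦ hterm (n + 1)
  simp only [add_mul] at this
  linarith [h.one_sub_re_le_slopeCoeff_zero]

end IsPoleRemoval

lemma neg_le_tsum_nat_add {t : ℕ → ℝ} {B y : ℝ} (ht : ∀ n, |t n| ≤ B * (2 / 3) ^ n)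
    (hy₀ : 0 ≤ y) (hy : y ≤ 9 / 8) (m : ℕ) :
    -(4 * B * (3 / 4) ^ m) ≤ ∑' n, t (n + m) * y ^ (n + m) := by
  have hgeom : HasSum (fun n : ℕ ↦ B * (3 / 4 : ℝ) ^ m * (3 / 4) ^ n) (4 * B * (3 / 4) ^ m) := by
    convert! (hasSum_geometric_of_lt_one (r := (3 / 4 : ℝ)) (by norm_num) (by norm_num)).mul_left
      (B * (3 / 4 : ℝ) ^ m) using 1
    norm_num
    ring
  refine neg_le_of_abs_le (Real.norm_eq_abs _ ▸ tsum_of_norm_bounded hgeom fun n ↦ ?_)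
  rw [Real.norm_eq_abs]
  calc |t (n + m) * y ^ (n + m)| = |t (n + m)| * y ^ (n + m) := by
        rw [abs_mul, abs_of_nonneg (by positivity : 0 ≤ y ^ (n + m))]
    _ ≤ B * (2 / 3) ^ (n + m) * (9 / 8) ^ (n + m) := by
        gcongr
        · exact (abs_nonneg _).trans (ht _)
        · exact ht _
    _ = B * (3 / 4) ^ m * (3 / 4) ^ n := by
        rw [mul_assoc, ← mul_pow, pow_add]; norm_num; ring

lemma exists_nat_pow_three_quarters_le {M : ℝ} (hM : 1 ≤ M) :
    ∃ m : ℕ, m ≠ 0 ∧ m ≤ 4 * Real.log (32 * M) + 1 ∧ 16 * M * (3 / 4) ^ m ≤ 1 / 2 := by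
  have hlog : 0 < Real.log (32 * M) := Real.log_pos (by linarith)
  set m := ⌈4 * Real.log (32 * M)⌉₊
  have hm : 4 * Real.log (32 * M) ≤ m := Nat.le_ceil _
  refine ⟨m, (Nat.ceil_pos.mpr (by positivity)).ne', (Nat.ceil_lt_add_one (by positivity)).le, ?_⟩
  have hpow : (3 / 4 : ℝ) ^ m ≤ (32 * M)⁻¹ :=
    calc (3 / 4 : ℝ) ^ m ≤ Real.exp (-1 / 4) ^ m := by
          gcongr; linarith [Real.add_one_le_exp (-1 / 4 : ℝ)]
      _ = Real.exp (-(m / 4)) := by rw [← Real.exp_nat_mul]; congr 1; ring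
      _ ≤ Real.exp (-Real.log (32 * M)) := by gcongr; linarith
      _ = (32 * M)⁻¹ := by rw [Real.exp_neg, Real.exp_log (by linarith)]
  calc 16 * M * (3 / 4) ^ m ≤ 16 * M * (32 * M)⁻¹ := by gcongr
    _ = 1 / 2 := by field_simp; norm_num

/-- At `y = 2 - x` the first `m ≈ log M` Taylor terms of `(G s - G 1) / (s - 1)` are bounded below
by positivity of the Dirichlet coefficients, the remaining ones by Cauchy's estimate. -/
theorem IsPoleRemoval.mul_exp_le_re_apply_one {a : ℕ → ℂ} {G : ℂ → ℂ} (h : IsPoleRemoval a G)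
    {M : ℝ} (hM : 1 ≤ M) (hGM : ∀ s ∈ Metric.closedBall (2 : ℂ) (3 / 2), ‖G s‖ ≤ M)
    {x : ℝ} (hx : 7 / 8 ≤ x) (hx₁ : x < 1) (hGx : 0 ≤ (G x).re) :
    (1 - x) / 2 * Real.exp (-((1 - x) * (4 * Real.log (32 * M) + 1))) ≤ (G 1).re := by
  obtain ⟨m, hm₀, hm, hmM⟩ := exists_nat_pow_three_quarters_le hM
  have hpos : 0 < 1 - x := sub_pos.mpr hx₁
  have hhead := h.one_le_sum_slopeCoeff_add (by linarith : 0 ≤ 2 - x) hm₀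
  have htail := neg_le_tsum_nat_add (abs_slopeCoeff_le h.differentiable hGM)
    (by linarith : 0 ≤ 2 - x) (by linarith) m
  have hseries := hasSum_slopeCoeff h.differentiable x
  have hsplit := hseries.summable.sum_add_tsum_nat_add m
  have hslope : (dslope G 1 x).re = ((G 1).re - (G x).re) / (1 - x) := by
    rw [dslope_one_eq _ (mod_cast hx₁.ne), ← ofReal_one, ← ofReal_sub, ← ofReal_inv, re_mul_ofReal,
      sub_re, ← div_eq_mul_inv, ← neg_div_neg_eq, neg_sub, neg_sub]
  rw [geom_sum_eq (by linarith), show 2 - x - 1 = 1 - x by ring] at hhead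
  rw [hseries.tsum_eq, hslope] at hsplit
  have hmain : (1 - x) / 2 ≤ (G 1).re * (2 - x) ^ m := by
    have : 1 / 2 ≤ ((G 1).re - (G x).re) / (1 - x) + (G 1).re * (((2 - x) ^ m - 1) / (1 - x)) := by
      linarith
    rw [← mul_div_assoc, ← add_div, le_div_iff₀ hpos] at this
    linarith
  have hpow : (2 - x) ^ m ≤ Real.exp ((1 - x) * (4 * Real.log (32 * M) + 1)) :=
    calc (2 - x) ^ m ≤ Real.exp (1 - x) ^ m :=
          pow_le_pow_left₀ (by linarith) (by linarith [Real.add_one_le_exp (1 - x)]) m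
      _ = Real.exp ((1 - x) * m) := by rw [← Real.exp_nat_mul, mul_comm]
      _ ≤ _ := by gcongr
  rw [Real.exp_neg, ← div_eq_mul_inv, div_le_iff₀ (Real.exp_pos _)]
  exact hmain.trans (mul_le_mul_of_nonneg_left hpow h.re_apply_one_nonneg)

lemma IsPoleRemoval.mul_rpow_le_re_apply_one {a : ℕ → ℂ} {G : ℂ → ℂ} (h : IsPoleRemoval a G)
    {M : ℝ} (hM : 1 ≤ M) (hGM : ∀ s ∈ Metric.closedBall (2 : ℂ) (3 / 2), ‖G s‖ ≤ M)
    {x : ℝ} (hx : 7 / 8 ≤ x) (hx₁ : x < 1) (hGx : 0 ≤ (G x).re) :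
    (1 - x) / 4 * (32 * M) ^ (-(4 * (1 - x))) ≤ (G 1).re := by
  refine le_trans ?_ (h.mul_exp_le_re_apply_one hM hGM hx hx₁ hGx)
  have hexp : 1 / 2 ≤ Real.exp (-(1 - x)) := by linarith [Real.add_one_le_exp (-(1 - x))]
  calc (1 - x) / 4 * (32 * M) ^ (-(4 * (1 - x)))
      = (1 - x) / 2 * (1 / 2 * (32 * M) ^ (-(4 * (1 - x)))) := by ring
    _ ≤ (1 - x) / 2 * (Real.exp (-(1 - x)) * (32 * M) ^ (-(4 * (1 - x)))) := by gcongr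
    _ = (1 - x) / 2 * Real.exp (-((1 - x) * (4 * Real.log (32 * M) + 1))) := by
        rw [Real.rpow_def_of_pos (by linarith), ← Real.exp_add]
        ring_nf

end Estermann

section NonnegativeCoefficients

open ArithmeticFunction Filter Topology
open scoped ComplexOrder

lemma dirichletMul_natCast {N q : ℕ} (χ : DirichletCharacter ℂ N)
    (ψ : DirichletCharacter ℂ q) (n : ℕ) : χ.mul ψ n = χ n * ψ n := by
  by_cases hn : IsUnit (n : ZMod (N.lcm q))
  · rw [DirichletCharacter.mul, MulChar.mul_apply, ← hn.unit_spec,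
      DirichletCharacter.changeLevel_eq_cast_of_dvd _ (N.dvd_lcm_left q),
      DirichletCharacter.changeLevel_eq_cast_of_dvd _ (N.dvd_lcm_right q), hn.unit_spec,
      ZMod.cast_natCast (N.dvd_lcm_left q), ZMod.cast_natCast (N.dvd_lcm_right q)]
  · rw [MulChar.map_nonunit _ hn]
    contrapose! hn
    have hχn := not_imp_comm.mp (χ.map_nonunit (a := n)) (left_ne_zero_of_mul hn.symm)
    have hψn := not_imp_comm.mp (ψ.map_nonunit (a := n)) (right_ne_zero_of_mul hn.symm)
    rw [ZMod.isUnit_iff_coprime] at hχn hψn ⊢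
    exact (hχn.mul_right hψn).of_dvd_right (Nat.lcm_dvd_mul N q)

instance neZero_lcm {N q : ℕ} [NeZero N] [NeZero q] : NeZero (N.lcm q) :=
  ⟨Nat.lcm_ne_zero (NeZero.ne N) (NeZero.ne q)⟩

lemma dirichletMul_sq_eq_one {N q : ℕ} {χ : DirichletCharacter ℂ N} {ψ : DirichletCharacter ℂ q}
    (hχ : χ ^ 2 = 1) (hψ : ψ ^ 2 = 1) : χ.mul ψ ^ 2 = 1 := by
  rw [DirichletCharacter.mul, mul_pow, ← map_pow, ← map_pow, hχ, hψ, map_one, map_one, one_mul]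

lemma arithmeticFunction_mul_apply_prime_pow {R : Type*} [Semiring R] (f g : ArithmeticFunction R)
    {p : ℕ} (hp : p.Prime) (k : ℕ) :
    (f * g) (p ^ k) = ∑ i ∈ Finset.range (k + 1), f (p ^ i) * g (p ^ (k - i)) := by
  rw [ArithmeticFunction.mul_apply, Nat.sum_divisorsAntidiagonal (fun a b ↦ f a * g b),
    Nat.sum_divisors_prime_pow hp]
  refine Finset.sum_congr rfl fun i hi ↦ ?_
  rw [Nat.pow_div (Finset.mem_range_succ_iff.mp hi) hp.pos]

variable {N q : ℕ}

/-- The coefficients of the Dirichlet series of `ζ(s) L(s, χ) L(s, ψ) L(s, χψ)`. -/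
noncomputable def biquadratic (χ : DirichletCharacter ℂ N) (ψ : DirichletCharacter ℂ q) :
    ArithmeticFunction ℂ :=
  χ.zetaMul * (toArithmeticFunction (ψ ·) * toArithmeticFunction (χ.mul ψ ·))

lemma isMultiplicative_biquadratic (χ : DirichletCharacter ℂ N) (ψ : DirichletCharacter ℂ q) :
    (biquadratic χ ψ).IsMultiplicative :=
  χ.isMultiplicative_zetaMul.mul <|
    (DirichletCharacter.isMultiplicative_toArithmeticFunction ψ).mul
      (DirichletCharacter.isMultiplicative_toArithmeticFunction _)

lemma biquadratic_comm (χ : DirichletCharacter ℂ N) (ψ : DirichletCharacter ℂ q) :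
    biquadratic χ ψ = biquadratic ψ χ := by
  have hθ : toArithmeticFunction (χ.mul ψ ·) = toArithmeticFunction (ψ.mul χ ·) :=
    toArithmeticFunction_congr fun {n} _ ↦ by
      rw [dirichletMul_natCast, dirichletMul_natCast, mul_comm]
  rw [biquadratic, biquadratic, hθ, DirichletCharacter.zetaMul, DirichletCharacter.zetaMul]
  ac_rfl

lemma toArithmeticFunction_mul_toArithmeticFunction_mul_apply (χ : DirichletCharacter ℂ N)
    (ψ : DirichletCharacter ℂ q) (n : ℕ) :
    (toArithmeticFunction (ψ ·) * toArithmeticFunction (χ.mul ψ ·)) n = ψ n * χ.zetaMul n := by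
  rw [DirichletCharacter.zetaMul, ArithmeticFunction.mul_apply, ArithmeticFunction.mul_apply,
    Finset.mul_sum]
  refine Finset.sum_congr rfl fun ⟨d, e⟩ hde ↦ ?_
  obtain ⟨rfl, hne⟩ := Nat.mem_divisorsAntidiagonal.mp hde
  have hd : d ≠ 0 := left_ne_zero_of_mul hne
  have he : e ≠ 0 := right_ne_zero_of_mul hne
  simp only [toArithmeticFunction, coe_mk, hd, he, if_false, dirichletMul_natCast, natCoe_apply,
    zeta_apply, Nat.cast_one, one_mul, Nat.cast_mul, map_mul]
  ring

lemma biquadratic_prime_pow (χ : DirichletCharacter ℂ N) (ψ : DirichletCharacter ℂ q) {p : ℕ}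
    (hp : p.Prime) (k : ℕ) :
    biquadratic χ ψ (p ^ k) = ∑ i ∈ Finset.range (k + 1),
      χ.zetaMul (p ^ i) * (ψ p ^ (k - i) * χ.zetaMul (p ^ (k - i))) := by
  rw [biquadratic, arithmeticFunction_mul_apply_prime_pow _ _ hp]
  simp only [toArithmeticFunction_mul_toArithmeticFunction_mul_apply, Nat.cast_pow, map_pow]

lemma zetaMul_prime_pow (χ : DirichletCharacter ℂ N) {p : ℕ} (hp : p.Prime) (k : ℕ) :
    χ.zetaMul (p ^ k) = ∑ i ∈ Finset.range (k + 1), χ p ^ i := by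
  rw [DirichletCharacter.zetaMul, coe_zeta_mul_apply, Nat.sum_divisors_prime_pow hp]
  simp [toArithmeticFunction, hp.ne_zero]

lemma zetaMul_prime_pow_eq_zero_of_odd {χ : DirichletCharacter ℂ N} {p : ℕ} (hp : p.Prime)
    (hχp : χ p = -1) {k : ℕ} (hk : Odd k) : χ.zetaMul (p ^ k) = 0 := by
  rw [zetaMul_prime_pow χ hp, hχp, neg_one_geom_sum, if_pos hk.add_one]

lemma biquadratic_prime_pow_nonneg {χ : DirichletCharacter ℂ N} {ψ : DirichletCharacter ℂ q}
    (hχ : χ ^ 2 = 1) (hψ : ψ ^ 2 = 1) {p : ℕ} (hp : p.Prime) (k : ℕ) :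
    0 ≤ biquadratic χ ψ (p ^ k) := by
  wlog hχψ : 0 ≤ ψ p ∨ χ p = -1 generalizing N q χ ψ
  · rw [biquadratic_comm]
    refine this hψ hχ (.inl ?_)
    rcases MulChar.isQuadratic_iff_sq_eq_one.mpr hχ p with h | h | h
    · exact h.ge
    · exact h ▸ zero_le_one
    · exact absurd (.inr h) hχψ
  have hmul (j : ℕ) : 0 ≤ ψ p ^ j * χ.zetaMul (p ^ j) := by
    have hj := DirichletCharacter.zetaMul_nonneg hχ (p ^ j)
    rcases MulChar.isQuadratic_iff_sq_eq_one.mpr hψ p with h | h | h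
    · exact mul_nonneg (pow_nonneg h.ge j) hj
    · simpa [h] using hj
    · rcases Nat.even_or_odd j with hj' | hj'
      · simpa [h, hj'.neg_one_pow] using hj
      · have hχp : χ p = -1 := hχψ.resolve_left (by simp [h, Complex.le_def])
        rw [zetaMul_prime_pow_eq_zero_of_odd hp hχp hj', mul_zero]
  rw [biquadratic_prime_pow _ _ hp]
  exact Finset.sum_nonneg fun i _ ↦
    mul_nonneg (DirichletCharacter.zetaMul_nonneg hχ _) (hmul _)

lemma biquadratic_nonneg {χ : DirichletCharacter ℂ N} {ψ : DirichletCharacter ℂ q}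
    (hχ : χ ^ 2 = 1) (hψ : ψ ^ 2 = 1) (n : ℕ) : 0 ≤ biquadratic χ ψ n := by
  rcases eq_or_ne n 0 with rfl | hn
  · rw [ArithmeticFunction.map_zero]
  · rw [(isMultiplicative_biquadratic χ ψ).multiplicative_factorization _ hn]
    exact Finset.prod_nonneg fun p hp ↦
      biquadratic_prime_pow_nonneg hχ hψ (Nat.prime_of_mem_primeFactors hp) _

/-- The entire function `(s - 1) ζ(s)`. -/
noncomputable def zetaPoleRemoved : ℂ → ℂ := DirichletCharacter.LFunctionTrivChar₁ 1

lemma differentiable_zetaPoleRemoved : Differentiable ℂ zetaPoleRemoved :=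
  DirichletCharacter.differentiable_LFunctionTrivChar₁ 1

lemma zetaPoleRemoved_one : zetaPoleRemoved 1 = 1 := by
  simp [zetaPoleRemoved]

lemma zetaPoleRemoved_of_ne_one {s : ℂ} (hs : s ≠ 1) :
    zetaPoleRemoved s = (s - 1) * riemannZeta s := by
  rw [zetaPoleRemoved, DirichletCharacter.LFunctionTrivChar₁, Function.update_of_ne hs,
    DirichletCharacter.LFunctionTrivChar, DirichletCharacter.LFunction_modOne_eq]

section LSeries

variable [NeZero N]

lemma LSeriesHasSum_toArithmeticFunction (χ : DirichletCharacter ℂ N) {s : ℂ} (hs : 1 < s.re) :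
    LSeriesHasSum (toArithmeticFunction (χ ·)) s (χ.LFunction s) := by
  rw [χ.LFunction_eq_LSeries hs]
  exact (LSeriesHasSum_congr s _ fun {n} hn ↦ χ.apply_eq_toArithmeticFunction_apply hn).mp
    (χ.LSeriesSummable_of_one_lt_re hs).LSeriesHasSum

lemma LSeriesHasSum_zetaMul (χ : DirichletCharacter ℂ N) {s : ℂ} (hs : 1 < s.re) :
    LSeriesHasSum χ.zetaMul s (riemannZeta s * χ.LFunction s) :=
  LSeriesHasSum_mul (by simpa using LSeriesHasSum_zeta hs)
    (LSeriesHasSum_toArithmeticFunction χ hs)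

lemma LSeriesHasSum_biquadratic [NeZero q] (χ : DirichletCharacter ℂ N)
    (ψ : DirichletCharacter ℂ q) {s : ℂ} (hs : 1 < s.re) :
    LSeriesHasSum (biquadratic χ ψ) s
      (riemannZeta s * χ.LFunction s * (ψ.LFunction s * (χ.mul ψ).LFunction s)) :=
  LSeriesHasSum_mul (LSeriesHasSum_zetaMul χ hs) <|
    LSeriesHasSum_mul (LSeriesHasSum_toArithmeticFunction ψ hs)
      (LSeriesHasSum_toArithmeticFunction _ hs)

end LSeries

lemma isPoleRemoval_zetaPoleRemoved_mul {a : ArithmeticFunction ℂ} (ha : a.IsMultiplicative)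
    (ha₀ : ∀ n, 0 ≤ a n) {L : ℂ → ℂ} (hL : Differentiable ℂ L)
    (hsum : ∀ s : ℂ, 1 < s.re → LSeriesHasSum a s (riemannZeta s * L s)) :
    IsPoleRemoval a fun s ↦ zetaPoleRemoved s * L s where
  nonneg := ha₀
  map_one := ha.map_one
  abscissaOfAbsConv_le := LSeries.abscissaOfAbsConv_le_of_forall_lt_LSeriesSummable fun y hy ↦
    (hsum y (by simpa using hy)).LSeriesSummable
  differentiable := differentiable_zetaPoleRemoved.mul hL
  eq_mul_LSeries s hs := by
    rw [(hsum s hs).LSeries_eq, zetaPoleRemoved_of_ne_one (by rintro rfl; simp at hs), mul_assoc]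

variable [NeZero N]

lemma isPoleRemoval_zetaMul {χ : DirichletCharacter ℂ N} (hχ : χ ^ 2 = 1) (hχ₁ : χ ≠ 1) :
    IsPoleRemoval χ.zetaMul fun s ↦ zetaPoleRemoved s * χ.LFunction s :=
  isPoleRemoval_zetaPoleRemoved_mul χ.isMultiplicative_zetaMul
    (DirichletCharacter.zetaMul_nonneg hχ) (χ.differentiable_LFunction hχ₁)
    fun _ ↦ LSeriesHasSum_zetaMul χ

lemma isPoleRemoval_biquadratic [NeZero q] {χ : DirichletCharacter ℂ N}
    {ψ : DirichletCharacter ℂ q} (hχ : χ ^ 2 = 1) (hψ : ψ ^ 2 = 1) (hχ₁ : χ ≠ 1) (hψ₁ : ψ ≠ 1)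
    (hχψ : χ.mul ψ ≠ 1) :
    IsPoleRemoval (biquadratic χ ψ) fun s ↦
      zetaPoleRemoved s * (χ.LFunction s * (ψ.LFunction s * (χ.mul ψ).LFunction s)) :=
  isPoleRemoval_zetaPoleRemoved_mul (isMultiplicative_biquadratic χ ψ) (biquadratic_nonneg hχ hψ)
    ((χ.differentiable_LFunction hχ₁).mul <|
      (ψ.differentiable_LFunction hψ₁).mul ((χ.mul ψ).differentiable_LFunction hχψ))
    fun s hs ↦ by simpa only [mul_assoc] using LSeriesHasSum_biquadratic χ ψ hs

end NonnegativeCoefficients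

section Siegel

open Complex Filter Topology

lemma half_le_re_of_mem_closedBall {s : ℂ} (hs : s ∈ Metric.closedBall (2 : ℂ) (3 / 2)) :
    1 / 2 ≤ s.re := by
  have := (abs_le.mp ((abs_re_le_norm _).trans (mem_closedBall_iff_norm.mp hs))).1
  rw [sub_re, re_ofNat] at this
  linarith

lemma natCast_lcm_le (N q : ℕ) [NeZero N] [NeZero q] : ((N.lcm q : ℕ) : ℝ) ≤ N * q :=
  mod_cast Nat.le_of_dvd (mul_pos (NeZero.pos N) (NeZero.pos q)) (Nat.lcm_dvd_mul N q)

lemma exists_forall_norm_zetaPoleRemoved_le :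
    ∃ B : ℝ, 1 ≤ B ∧ ∀ s ∈ Metric.closedBall (2 : ℂ) (3 / 2), ‖zetaPoleRemoved s‖ ≤ B := by
  obtain ⟨B, hB⟩ := (isCompact_closedBall (2 : ℂ) (3 / 2)).exists_bound_of_continuousOn
    differentiable_zetaPoleRemoved.continuous.continuousOn
  exact ⟨max B 1, le_max_right _ _, fun s hs ↦ (hB s hs).trans (le_max_left _ _)⟩

lemma exists_forall_re_zetaPoleRemoved_nonneg :
    ∃ η : ℝ, 0 < η ∧ ∀ x : ℝ, 1 - η ≤ x → x < 1 → 0 ≤ (zetaPoleRemoved x).re := by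
  have hcont : Continuous fun x : ℝ ↦ (zetaPoleRemoved x).re :=
    continuous_re.comp (differentiable_zetaPoleRemoved.continuous.comp continuous_ofReal)
  obtain ⟨r, hr, h⟩ := Metric.eventually_nhds_iff.mp <|
    (hcont.tendsto 1).eventually_const_lt (u := 0) (by simp [zetaPoleRemoved_one])
  refine ⟨r / 2, half_pos hr, fun x hx hx₁ ↦ (h ?_).le⟩
  rw [Real.dist_eq, abs_lt]
  constructor <;> linarith

section QuadraticCharacter

variable {N q : ℕ} [NeZero N] [NeZero q] {χ : DirichletCharacter ℂ N} {ψ : DirichletCharacter ℂ q}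

lemma norm_LFunction_le_of_mem_closedBall (hχ₁ : χ ≠ 1) {s : ℂ}
    (hs : s ∈ Metric.closedBall (2 : ℂ) (3 / 2)) : ‖χ.LFunction s‖ ≤ 7 * N := by
  have hre := half_le_re_of_mem_closedBall hs
  calc ‖χ.LFunction s‖ ≤ ‖s‖ * ((N : ℝ) ^ (1 : ℝ) / (s.re + 1 - 1)) :=
        norm_LFunction_le hχ₁ zero_le_one le_rfl (by linarith) (by linarith)
    _ ≤ 7 / 2 * (N / (1 / 2)) := by
        rw [Real.rpow_one, add_sub_cancel_right]
        gcongr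
        exact (norm_le_of_mem_closedBall hs).trans_eq (by norm_num)
    _ = 7 * N := by ring

lemma norm_LFunction_one_le (hχ₁ : χ ≠ 1) {δ : ℝ} (hδ₀ : 0 < δ) (hδ₁ : δ ≤ 1) :
    ‖χ.LFunction 1‖ ≤ N ^ δ / δ := by
  simpa using norm_LFunction_le hχ₁ hδ₀.le hδ₁ (s := 1) (by simp) (by simpa using hδ₀)

lemma ofReal_re_LFunction (hχ : χ ^ 2 = 1) (hχ₁ : χ ≠ 1) {x : ℝ} (hx : 0 < x) :
    ((χ.LFunction x).re : ℂ) = χ.LFunction x := by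
  have hreal (t : ℝ) : ((charSum χ t).re : ℂ) = charSum χ t := by
    rw [charSum, re_sum, ofReal_sum]
    refine Finset.sum_congr rfl fun n _ ↦ ?_
    rcases MulChar.isQuadratic_iff_sq_eq_one.mpr hχ n with h | h | h <;> simp [h]
  have hmellin : mellin (charSum χ) (-x) =
      ((∫ t in Set.Ioi (1 : ℝ), (charSum χ t).re * t ^ (-(x + 1)) : ℝ) : ℂ) := by
    rw [mellin_charSum_neg, ← integral_complex_ofReal]
    refine MeasureTheory.setIntegral_congr_fun measurableSet_Ioi fun t ht ↦ ?_
    rw [ofReal_mul, hreal, ofReal_cpow (zero_lt_one.trans (Set.mem_Ioi.mp ht)).le]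
    push_cast
    rfl
  rw [LFunction_eq_mul_mellin hχ₁ (by simpa using hx), hmellin, ← ofReal_mul, ofReal_re]

lemma re_LFunction_one_pos (hχ : χ ^ 2 = 1) (hχ₁ : χ ≠ 1) : 0 < (χ.LFunction 1).re := by
  have hnonneg := (isPoleRemoval_zetaMul hχ hχ₁).re_apply_one_nonneg
  rw [zetaPoleRemoved_one, one_mul] at hnonneg
  refine hnonneg.lt_of_ne' fun h ↦ χ.LFunction_apply_one_ne_zero hχ₁ ?_
  simpa [h] using (ofReal_re_LFunction hχ hχ₁ one_pos).symm

lemma exists_re_LFunction_eq_zero (hχ : χ ^ 2 = 1) (hχ₁ : χ ≠ 1) {x : ℝ} (hx : 0 < x)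
    (hx₁ : x < 1) (hneg : (χ.LFunction x).re < 0) :
    ∃ β ∈ Set.Ioo x 1, χ.LFunction (β : ℝ) = 0 := by
  have hcont : Continuous fun y : ℝ ↦ (χ.LFunction y).re :=
    continuous_re.comp ((χ.differentiable_LFunction hχ₁).continuous.comp continuous_ofReal)
  obtain ⟨β, hβ, hβ₀⟩ := intermediate_value_Ioo hx₁.le hcont.continuousOn
    ⟨hneg, by simpa using re_LFunction_one_pos hχ hχ₁⟩
  refine ⟨β, hβ, ?_⟩
  rw [← ofReal_re_LFunction hχ hχ₁ (hx.trans hβ.1), ofReal_eq_zero]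
  exact hβ₀

end QuadraticCharacter

lemma exists_lower_bound_of_re_LFunction_nonneg :
    ∃ η : ℝ, 0 < η ∧ ∃ B : ℝ, 1 ≤ B ∧ ∀ (N : ℕ) [NeZero N] (χ : DirichletCharacter ℂ N),
      χ ^ 2 = 1 → χ ≠ 1 → ∀ x : ℝ, 1 - η ≤ x → x < 1 → 0 ≤ (χ.LFunction x).re →
      (1 - x) / 4 * (B * N) ^ (-(4 * (1 - x))) ≤ (χ.LFunction 1).re := by
  obtain ⟨η, hη, hζpos⟩ := exists_forall_re_zetaPoleRemoved_nonneg
  obtain ⟨B, hB, hζ⟩ := exists_forall_norm_zetaPoleRemoved_le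
  refine ⟨min η (1 / 8), by positivity, 32 * (B * 7), by linarith,
    fun N _ χ hχ hχ₁ x hx hx₁ hL ↦ ?_⟩
  have hxη := min_le_left η (1 / 8)
  have hx8 := min_le_right η (1 / 8)
  have hN : (1 : ℝ) ≤ N := mod_cast NeZero.one_le
  have hGx : 0 ≤ (zetaPoleRemoved x * χ.LFunction x).re := by
    rw [← ofReal_re_LFunction hχ hχ₁ (by linarith), re_mul_ofReal]
    exact mul_nonneg (hζpos x (by linarith) hx₁) hL
  simpa [zetaPoleRemoved_one, mul_assoc] using
    (isPoleRemoval_zetaMul hχ hχ₁).mul_rpow_le_re_apply_one (M := B * (7 * N)) (by nlinarith)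
      (fun s hs ↦ by
        rw [norm_mul]
        gcongr
        exacts [hζ s hs, norm_LFunction_le_of_mem_closedBall hχ₁ hs])
      (by linarith) hx₁ hGx

lemma exists_lower_bound_of_LFunction_eq_zero :
    ∃ B : ℝ, 1 ≤ B ∧ ∀ (N q : ℕ) [NeZero N] [NeZero q] (χ : DirichletCharacter ℂ N)
      (ψ : DirichletCharacter ℂ q), χ ^ 2 = 1 → ψ ^ 2 = 1 → χ ≠ 1 → ψ ≠ 1 → χ.mul ψ ≠ 1 →
      ∀ x : ℝ, 7 / 8 ≤ x → x < 1 → ψ.LFunction x = 0 →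
      (1 - x) / 4 * (B * (N * q) ^ 2) ^ (-(4 * (1 - x))) ≤
        (χ.LFunction 1).re * ((ψ.LFunction 1).re * ((χ.mul ψ).LFunction 1).re) := by
  obtain ⟨B, hB, hζ⟩ := exists_forall_norm_zetaPoleRemoved_le
  refine ⟨32 * (B * 7 ^ 3), by linarith, fun N q _ _ χ ψ hχ hψ hχ₁ hψ₁ hχψ x hx hx₁ hL ↦ ?_⟩
  have hN : (1 : ℝ) ≤ N := mod_cast NeZero.one_le
  have hq : (1 : ℝ) ≤ q := mod_cast NeZero.one_le
  have hbound := (isPoleRemoval_biquadratic hχ hψ hχ₁ hψ₁ hχψ).mul_rpow_le_re_apply_one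
    (M := B * (7 * N * (7 * q * (7 * (N * q)))))
    (one_le_mul_of_one_le_of_one_le hB (by nlinarith [one_le_mul_of_one_le_of_one_le hN hq]))
    (fun s hs ↦ by
      rw [norm_mul, norm_mul, norm_mul]
      gcongr
      · exact hζ s hs
      · exact norm_LFunction_le_of_mem_closedBall hχ₁ hs
      · exact norm_LFunction_le_of_mem_closedBall hψ₁ hs
      · refine (norm_LFunction_le_of_mem_closedBall hχψ hs).trans ?_
        gcongr
        exact natCast_lcm_le N q)
    hx hx₁ (by simp [hL])
  rw [zetaPoleRemoved_one, one_mul, ← ofReal_one, ← ofReal_re_LFunction hχ hχ₁ one_pos,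
    ← ofReal_re_LFunction hψ hψ₁ one_pos,
    ← ofReal_re_LFunction (dirichletMul_sq_eq_one hχ hψ) hχψ one_pos, ← ofReal_mul, ← ofReal_mul,
    ofReal_re, ofReal_one] at hbound
  convert! hbound using 3
  ring

lemma mul_div_mul_rpow_neg_le {A δ L P X ε : ℝ} (hδ : 0 < δ) (hP : 0 < P) (hX : 0 < X)
    (h : A * X ^ (-(ε / 2)) ≤ L * (P * (X ^ (ε / 2) / δ))) : A * δ / P * X ^ (-ε) ≤ L := by
  have hpow : 0 < X ^ (ε / 2) := by positivity
  have hsplit : X ^ (-(ε / 2)) = X ^ (-ε) * X ^ (ε / 2) := by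
    rw [← Real.rpow_add hX]; ring_nf
  refine le_of_mul_le_mul_right ?_ (mul_pos hpow (div_pos hP hδ))
  calc A * δ / P * X ^ (-ε) * (X ^ (ε / 2) * (P / δ)) = A * X ^ (-(ε / 2)) := by
        rw [hsplit]; field_simp
    _ ≤ L * (X ^ (ε / 2) * (P / δ)) := h.trans_eq (by ring)

lemma exists_forall_le_re_LFunction_one_of_eq_zero {ε : ℝ} {q : ℕ} [NeZero q]
    {ψ : DirichletCharacter ℂ q} (hψ : ψ ^ 2 = 1) (hψ₁ : ψ ≠ 1) {β : ℝ} (hβ : 7 / 8 ≤ β)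
    (hβε : 16 * (1 - β) ≤ ε) (hβ₁ : β < 1) (hψβ : ψ.LFunction β = 0) :
    ∃ C : ℝ, 0 < C ∧ ∀ (N : ℕ) [NeZero N] (χ : DirichletCharacter ℂ N), χ ^ 2 = 1 → χ ≠ 1 →
      χ.mul ψ ≠ 1 → C * N ^ (-ε) ≤ (χ.LFunction 1).re := by
  obtain ⟨B, hB, h⟩ := exists_lower_bound_of_LFunction_eq_zero
  have := sub_pos.mpr hβ₁
  set δ := min (ε / 2) 1
  have hδ : 0 < δ := lt_min (by linarith) one_pos
  have hψpos := re_LFunction_one_pos hψ hψ₁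
  set A := (1 - β) / 4 * B ^ (-(4 * (1 - β))) with hA
  have hq : (1 : ℝ) ≤ q := mod_cast NeZero.one_le
  refine ⟨A * δ / (ψ.LFunction 1).re * q ^ (-ε), by positivity, fun N _ χ hχ hχ₁ hχψ ↦ ?_⟩
  have hN : (1 : ℝ) ≤ N := mod_cast NeZero.one_le
  have hNq := one_le_mul_of_one_le_of_one_le hN hq
  have hlower : A * (N * q : ℝ) ^ (-(ε / 2)) ≤
      (χ.LFunction 1).re * ((ψ.LFunction 1).re * ((χ.mul ψ).LFunction 1).re) := by
    refine le_trans ?_ (h N q χ ψ hχ hψ hχ₁ hψ₁ hχψ β hβ hβ₁ hψβ)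
    rw [Real.mul_rpow (x := B) (by positivity) (by positivity), ← mul_assoc, ← hA,
      ← Real.rpow_natCast_mul (by positivity)]
    gcongr
    push_cast
    linarith
  have hupper : ((χ.mul ψ).LFunction 1).re ≤ (N * q : ℝ) ^ (ε / 2) / δ :=
    calc ((χ.mul ψ).LFunction 1).re ≤ (N.lcm q : ℝ) ^ δ / δ :=
          (re_le_norm _).trans (norm_LFunction_one_le hχψ hδ (min_le_right _ _))
      _ ≤ (N * q : ℝ) ^ δ / δ := by gcongr; exact natCast_lcm_le N q
      _ ≤ (N * q : ℝ) ^ (ε / 2) / δ := by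
          gcongr
          exact min_le_left _ _
  have hχpos := re_LFunction_one_pos hχ hχ₁
  rw [mul_assoc, ← Real.mul_rpow (by positivity) (by positivity), mul_comm (q : ℝ)]
  exact mul_div_mul_rpow_neg_le hδ hψpos (by positivity) (hlower.trans (by gcongr))

/-- Siegel's dichotomy: either no quadratic `L`-function is negative at `1 - t` for a small `t`, or
one of them has a zero `β` between that point and `1`, and then
`ζ(s) L(s, χ) L(s, χ₀) L(s, χχ₀)` vanishes at `β` for every `χ`. -/
theorem exists_forall_le_re_LFunction_one {ε : ℝ} (hε : 0 < ε) :
    ∃ C : ℝ, 0 < C ∧ ∃ (q : ℕ) (χ₀ : DirichletCharacter ℂ q), q ≠ 0 ∧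
      ∀ (N : ℕ) [NeZero N] (χ : DirichletCharacter ℂ N), χ ^ 2 = 1 → χ ≠ 1 → χ.mul χ₀ ≠ 1 →
      C * N ^ (-ε) ≤ (χ.LFunction 1).re := by
  obtain ⟨η, hη, B, hB, h⟩ := exists_lower_bound_of_re_LFunction_nonneg
  set t := min (min η (ε / 16)) (1 / 8)
  have ht : 0 < t := by positivity
  have htη : t ≤ η := (min_le_left _ _).trans (min_le_left _ _)
  have htε : t ≤ ε / 16 := (min_le_left _ _).trans (min_le_right _ _)
  have ht8 : t ≤ 1 / 8 := min_le_right _ _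
  by_cases hcase : ∀ (N : ℕ) [NeZero N] (χ : DirichletCharacter ℂ N), χ ^ 2 = 1 → χ ≠ 1 →
      0 ≤ (χ.LFunction (1 - t : ℝ)).re
  · refine ⟨t / 4 * B ^ (-(4 * t)), by positivity, 1, 1, one_ne_zero, fun N _ χ hχ hχ₁ _ ↦ ?_⟩
    have hN : (1 : ℝ) ≤ N := mod_cast NeZero.one_le
    have hbound := h N χ hχ hχ₁ (1 - t) (by linarith) (by linarith) (hcase N χ hχ hχ₁)
    rw [sub_sub_cancel, Real.mul_rpow (by linarith) (by linarith), ← mul_assoc] at hbound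
    refine le_trans ?_ hbound
    gcongr
    linarith
  · push Not at hcase
    obtain ⟨q, _, χ₀, hχ₀, hχ₀₁, hneg⟩ := hcase
    obtain ⟨β, hβ, hβ₀⟩ :=
      exists_re_LFunction_eq_zero hχ₀ hχ₀₁ (by linarith) (by linarith) hneg
    obtain ⟨C, hC, hbound⟩ := exists_forall_le_re_LFunction_one_of_eq_zero (ε := ε) hχ₀ hχ₀₁
      (by linarith [hβ.1]) (by linarith [hβ.1]) hβ.2 hβ₀
    exact ⟨C, hC, q, χ₀, NeZero.ne q, hbound⟩

end Siegel

section JacobiCharacter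

open scoped NumberTheorySymbols

lemma exists_jacobiSym_mul_eq_neg_one {q : ℕ} {m : ℤ} (hq : q.Prime) (hq₂ : q ≠ 2) (hm : m ≠ 0)
    (hqm : ¬ q ∣ m.natAbs) : ∃ n : ℕ, Odd n ∧ J(q * m | n) = -1 := by
  have := Fact.mk hq
  have hqo : Odd q := hq.odd_of_ne_two hq₂
  obtain ⟨a, ha⟩ := FiniteField.exists_nonsquare (F := ZMod q) (by rwa [ZMod.ringChar_zmod_n])
  have hcop : q.Coprime (4 * m.natAbs) :=
    Nat.Coprime.mul_right (hqo.coprime_two_right.pow_right 2) (hq.coprime_iff_not_dvd.mpr hqm)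
  obtain ⟨n, hnq, hn⟩ := Nat.chineseRemainder hcop a.val 1
  have hn₄ : n % 4 = 1 := hn.of_mul_right m.natAbs
  have hno : Odd n := Nat.odd_iff.mpr (by omega)
  have hm₁ : J(m | n) = 1 := by
    rw [jacobiSym.mod_right m hno, hn, Nat.mod_eq_of_lt (by omega), jacobiSym.one_right]
  have hq₁ : J(q | n) = -1 := by
    rw [jacobiSym.quadratic_reciprocity_one_mod_four' hqo hn₄,
      ZMod.nonsquare_iff_jacobiSym_eq_neg_one]
    rwa [Int.cast_natCast, (ZMod.natCast_eq_natCast_iff _ _ _).mpr hnq, ZMod.natCast_zmod_val]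
  exact ⟨n, hno, by rw [jacobiSym.mul_left, hm₁, hq₁, mul_one]⟩

lemma exists_jacobiSym_eq_neg_one_of_squarefree {d : ℤ} (hd : Squarefree d) (hd₁ : d ≠ 1) :
    ∃ n : ℕ, Odd n ∧ J(d | n) = -1 := by
  by_cases hq : ∃ q : ℕ, q.Prime ∧ q ≠ 2 ∧ q ∣ d.natAbs
  · obtain ⟨q, hq, hq₂, hqd⟩ := hq
    obtain ⟨m, rfl⟩ := Int.natCast_dvd.mpr hqd
    refine exists_jacobiSym_mul_eq_neg_one hq hq₂ (right_ne_zero_of_mul hd.ne_zero) fun hqm ↦ ?_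
    exact (Nat.prime_iff_prime_int.mp hq).not_isUnit
      (hd q (mul_dvd_mul_left _ (Int.natCast_dvd.mpr hqm)))
  · push Not at hq
    have hpow := Nat.eq_prime_pow_of_unique_prime_dvd (n := d.natAbs) (p := 2)
      (Int.natAbs_ne_zero.mpr hd.ne_zero) fun {q} hqp ↦ not_imp_not.mp (hq q hqp)
    have hdvd : d.natAbs ∣ 2 := ((Int.squarefree_natAbs.mpr hd).dvd_pow_iff_dvd
      (Nat.succ_ne_zero _)).mp (hpow.dvd.trans (pow_dvd_pow 2 (Nat.le_succ _)))
    have hcases : d = 1 ∨ d = -1 ∨ d = 2 ∨ d = -2 := by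
      have := (Nat.dvd_prime Nat.prime_two).mp hdvd
      omega
    rcases hcases with rfl | rfl | rfl | rfl
    · exact absurd rfl hd₁
    · exact ⟨3, by decide, by norm_num⟩
    · exact ⟨5, by decide, by norm_num⟩
    · exact ⟨5, by decide, by norm_num⟩

lemma exists_coprime_jacobiSym_eq {a : ℤ} {m b : ℕ} (hm : Odd m) (ham : J(a | m) ≠ 0)
    (ha : a ≠ 0) (hb : b ≠ 0) : ∃ n : ℕ, Odd n ∧ n.Coprime b ∧ J(a | n) = J(a | m) := by
  have : NeZero (4 * a.natAbs * b) := ⟨by simp [ha, hb]⟩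
  have hcop : m.Coprime (4 * a.natAbs) := by
    refine Nat.Coprime.mul_right (hm.coprime_two_right.pow_right 2) ?_
    contrapose! ham
    exact jacobiSym.eq_zero_iff.mpr ⟨hm.pos.ne', fun h ↦ ham (Nat.Coprime.symm h)⟩
  obtain ⟨u, hu⟩ := ZMod.unitsMap_surjective (Dvd.intro b rfl : 4 * a.natAbs ∣ 4 * a.natAbs * b)
    (ZMod.unitOfCoprime m hcop)
  have hmod : u.val.val % (4 * a.natAbs) = m % (4 * a.natAbs) := by
    refine (ZMod.natCast_eq_natCast_iff' _ _ _).mp ?_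
    simpa [ZMod.unitsMap_val, ZMod.natCast_val] using congrArg Units.val hu
  have hu_cop := ZMod.val_coe_unit_coprime u
  have huo : Odd u.val.val :=
    Nat.coprime_two_right.mp (hu_cop.of_dvd_right ⟨2 * (a.natAbs * b), by ring⟩)
  refine ⟨u.val.val, huo, hu_cop.of_dvd_right (Dvd.intro_left _ rfl), ?_⟩
  rw [jacobiSym.mod_right a huo, hmod, ← jacobiSym.mod_right a hm]

lemma exists_coprime_jacobiSym_eq_neg_one {D : ℤ} (hD : ¬ IsSquare D) {b : ℕ} (hb : b ≠ 0) :
    ∃ n : ℕ, Odd n ∧ n.Coprime b ∧ J(D | n) = -1 := by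
  obtain ⟨a, c, hac, ha⟩ := Nat.sq_mul_squarefree D.natAbs
  obtain ⟨d, hd, hDd⟩ : ∃ d : ℤ, Squarefree d ∧ D = c ^ 2 * d := by
    have ha' : Squarefree (a : ℤ) := Int.squarefree_natCast.mpr ha
    rcases D.natAbs_eq with h | h
    · exact ⟨a, ha', by rw [h, ← hac]; push_cast; rfl⟩
    · exact ⟨-a, by rwa [← Int.squarefree_natAbs, Int.natAbs_neg, Int.natAbs_natCast],
        by rw [h, ← hac]; push_cast; ring⟩
  have hc : c ≠ 0 := by
    rintro rfl
    exact hD ⟨0, by simp [hDd]⟩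
  obtain ⟨m, hm, hdm⟩ := exists_jacobiSym_eq_neg_one_of_squarefree hd <| by
    rintro rfl
    exact hD ⟨c, by rw [hDd]; ring⟩
  obtain ⟨n, hn, hnbc, hdn⟩ := exists_coprime_jacobiSym_eq hm (by simp [hdm]) hd.ne_zero
    (mul_ne_zero hb hc)
  refine ⟨n, hn, hnbc.coprime_mul_right_right, ?_⟩
  have hcn : (c : ℤ).gcd n = 1 := hnbc.coprime_mul_left_right.symm
  rw [hDd, jacobiSym.mul_left, jacobiSym.sq_one' hcn, one_mul, hdn, hdm]

/-- `J(D | n)` at odd `n` and `0` at even `n`: the Jacobi symbol is periodic in its lower argument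
only on odd integers. -/
def oddJacobiSym (D : ℤ) (n : ℕ) : ℤ := if Odd n then J(D | n) else 0

lemma oddJacobiSym_mod (D : ℤ) (n : ℕ) :
    oddJacobiSym D (n % (4 * D.natAbs)) = oddJacobiSym D n := by
  have hodd : Odd (n % (4 * D.natAbs)) ↔ Odd n := by
    rw [Nat.odd_iff, Nat.odd_iff, Nat.mod_mod_of_dvd _ ⟨2 * D.natAbs, by ring⟩]
  simp only [oddJacobiSym, hodd]
  split_ifs with hn
  · exact (jacobiSym.mod_right D hn).symm
  · rfl

lemma oddJacobiSym_mul (D : ℤ) (m n : ℕ) :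
    oddJacobiSym D (m * n) = oddJacobiSym D m * oddJacobiSym D n := by
  by_cases hm : Odd m <;> by_cases hn : Odd n <;> simp only [oddJacobiSym, Nat.odd_mul, hm, hn]
  · simp [jacobiSym.mul_right' D hm.pos.ne' hn.pos.ne']
  all_goals simp

lemma oddJacobiSym_ne_zero_iff {D : ℤ} {n : ℕ} :
    oddJacobiSym D n ≠ 0 ↔ n.Coprime (4 * D.natAbs) := by
  have hn4 : n.Coprime 4 ↔ Odd n :=
    (Nat.coprime_pow_right_iff two_pos n 2).trans Nat.coprime_two_right
  rw [Nat.coprime_mul_iff_right, hn4, oddJacobiSym, ne_eq, ite_eq_right_iff, Classical.not_imp,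
    jacobiSym.eq_zero_iff]
  refine and_congr_right fun hn ↦ ?_
  rw [not_and, not_not, Nat.coprime_comm]
  exact ⟨fun h ↦ h hn.pos.ne', fun h _ ↦ h⟩

lemma isUnit_of_val_coprime {n : ℕ} {x : ZMod n} (hx : x.val.Coprime n) : IsUnit x := by
  rcases n with - | n
  · exact Int.isUnit_iff_natAbs_eq.mpr (Nat.coprime_zero_right _ |>.mp hx)
  · rw [← ZMod.natCast_zmod_val x]
    exact (ZMod.isUnit_iff_coprime _ _).mpr hx

/-- The quadratic Dirichlet character `n ↦ J(D | n)`, killed at even `n`. -/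
noncomputable def jacobiChar (D : ℤ) : DirichletCharacter ℂ (4 * D.natAbs) where
  toFun x := oddJacobiSym D x.val
  map_one' := by
    simp [ZMod.val_one'' (by omega : 4 * D.natAbs ≠ 1), oddJacobiSym]
  map_mul' x y := by
    rw [ZMod.val_mul, oddJacobiSym_mod, oddJacobiSym_mul, Int.cast_mul]
  map_nonunit' x hx := by
    rw [Int.cast_eq_zero]
    contrapose! hx
    exact isUnit_of_val_coprime (oddJacobiSym_ne_zero_iff.mp hx)

lemma jacobiChar_natCast (D : ℤ) (n : ℕ) : jacobiChar D n = oddJacobiSym D n := by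
  rw [← oddJacobiSym_mod, ← ZMod.val_natCast]
  rfl

lemma jacobiChar_natCast_of_odd (D : ℤ) {n : ℕ} (hn : Odd n) : jacobiChar D n = J(D | n) := by
  rw [jacobiChar_natCast, oddJacobiSym, if_pos hn]

lemma jacobiChar_sq (D : ℤ) : jacobiChar D ^ 2 = 1 := by
  refine MulChar.isQuadratic_iff_sq_eq_one.mp fun x ↦ ?_
  change (oddJacobiSym D x.val : ℂ) = 0 ∨ (oddJacobiSym D x.val : ℂ) = 1 ∨
    (oddJacobiSym D x.val : ℂ) = -1
  rw [oddJacobiSym]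
  split_ifs
  · rcases jacobiSym.trichotomy D x.val with h | h | h <;> simp [h]
  · simp

lemma jacobiChar_ne_one {D : ℤ} (hD : ¬ IsSquare D) : jacobiChar D ≠ 1 := by
  obtain ⟨n, hn, -, hDn⟩ := exists_coprime_jacobiSym_eq_neg_one hD one_ne_zero
  intro h
  have hval := jacobiChar_natCast_of_odd D hn
  have hunit : IsUnit (n : ZMod (4 * D.natAbs)) := by
    by_contra hunit
    simp [MulChar.map_nonunit _ hunit, hDn] at hval
  rw [h, MulChar.one_apply hunit, hDn] at hval
  norm_num at hval

lemma isSquare_mul_of_jacobiChar_mul_eq_one {D E : ℤ} (hD : D ≠ 0) (hE : E ≠ 0) {q : ℕ}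
    (hq : q ≠ 0) {χ : DirichletCharacter ℂ q} (hDχ : (jacobiChar D).mul χ = 1)
    (hEχ : (jacobiChar E).mul χ = 1) : IsSquare (D * E) := by
  by_contra hDE
  obtain ⟨n, hn, hcop, hn₁⟩ := exists_coprime_jacobiSym_eq_neg_one hDE
    (b := D.natAbs * E.natAbs * q) (by simp [hD, hE, hq])
  have hval {F : ℤ} (hF : n.Coprime F.natAbs) (hFχ : (jacobiChar F).mul χ = 1) :
      (J(F | n) : ℂ) * χ n = 1 := by
    have hunit : IsUnit (n : ZMod ((4 * F.natAbs).lcm q)) :=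
      (ZMod.isUnit_iff_coprime _ _).mpr <| ((hn.coprime_two_right.pow_right 2).mul_right
        hF |>.mul_right hcop.coprime_mul_left_right).of_dvd_right (Nat.lcm_dvd_mul _ _)
    rw [← jacobiChar_natCast_of_odd F hn, ← dirichletMul_natCast, hFχ, MulChar.one_apply hunit]
  have hDn := hval hcop.coprime_mul_right_right.coprime_mul_right_right hDχ
  have hEn := hval hcop.coprime_mul_right_right.coprime_mul_left_right hEχ
  have heq : (J(D | n) : ℂ) = J(E | n) :=
    mul_right_cancel₀ (right_ne_zero_of_mul_eq_one hDn) (hDn.trans hEn.symm)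
  rw [jacobiSym.mul_left, Int.cast_inj.mp heq] at hn₁
  exact absurd hn₁ ((neg_one_lt_zero.trans_le (mul_self_nonneg _)).ne')

end JacobiCharacter

section QuadraticRing

open QuadraticAlgebra Submodule
open scoped NumberTheorySymbols

section Discriminant

lemma exists_algEquiv_quadraticAlgebra {R A : Type*} [CommRing R] [Ring A] [Algebra R A]
    (v : Basis (Fin 2) R A) (hv : v 0 = 1) :
    ∃ a b : R, Nonempty (A ≃ₐ[R] QuadraticAlgebra R a b) := by
  have hsum (x : A) : x = v.repr x 0 • 1 + v.repr x 1 • v 1 := by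
    conv_lhs => rw [← v.sum_repr x, Fin.sum_univ_two, hv]
  refine ⟨_, _, ⟨(AlgEquiv.ofBijective (lift ⟨v 1, hsum (v 1 * v 1)⟩) ?_).symm⟩⟩
  convert ((linearEquivTuple _ _).trans v.equivFun.symm).bijective using 1
  ext z
  simp [Fin.sum_univ_two, hv]

lemma trace_eq_quadraticAlgebra_trace {R : Type*} [CommRing R] {a b : R}
    (z : QuadraticAlgebra R a b) : Algebra.trace R (QuadraticAlgebra R a b) z = z.trace := by
  rw [Algebra.trace_eq_matrix_trace (QuadraticAlgebra.basis a b), Matrix.trace_fin_two,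
    Algebra.leftMulMatrix_eq_repr_mul, Algebra.leftMulMatrix_eq_repr_mul, trace_def]
  simp only [QuadraticAlgebra.basis, Basis.coe_ofEquivFun, linearEquivTuple_symm_apply,
    Basis.ofEquivFun_repr_apply, linearEquivTuple_apply, re_mul, im_mul, Matrix.cons_val_zero,
    Matrix.cons_val_one]
  simp
  ring

lemma discr_quadraticAlgebra_basis {R : Type*} [CommRing R] (a b : R) :
    Algebra.discr R (QuadraticAlgebra.basis a b) = b ^ 2 + 4 * a := by
  rw [Algebra.discr_def, Matrix.det_fin_two]
  simp [Algebra.traceMatrix_apply, trace_eq_quadraticAlgebra_trace, QuadraticAlgebra.basis,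
    trace_def]
  ring

lemma not_isSquare_discr_of_isDomain {R : Type*} [CommRing R] {a b : R}
    [IsDomain (QuadraticAlgebra R a b)] (h2 : (2 : R) ≠ 0) : ¬ IsSquare (b ^ 2 + 4 * a) := by
  rintro ⟨s, hs⟩
  have hprod : (⟨-b - s, 2⟩ * ⟨-b + s, 2⟩ : QuadraticAlgebra R a b) = 0 := by
    ext
    · simp
      linear_combination hs
    · simp
      ring
  rcases mul_eq_zero.mp hprod with h | h <;> exact h2 (congrArg im h)

lemma eq_one_or_eq_neg_one_of_isUnit {a b : ℤ} (hab : b ^ 2 + 4 * a < -4)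
    {u : QuadraticAlgebra ℤ a b} (hu : IsUnit u) : u = 1 ∨ u = -1 := by
  rw [isUnit_iff_norm_isUnit, Int.isUnit_iff, norm_def] at hu
  have him : u.im = 0 := by
    by_contra him
    have hsq : 1 ≤ u.im ^ 2 := Int.add_one_le_iff.mpr (sq_pos_of_ne_zero him)
    have hdisc : 4 < -(b ^ 2 + 4 * a) * u.im ^ 2 := by nlinarith
    have : 4 * (u.re * u.re + b * u.re * u.im - a * u.im * u.im) =
        (2 * u.re + b * u.im) ^ 2 + -(b ^ 2 + 4 * a) * u.im ^ 2 := by ring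
    have := sq_nonneg (2 * u.re + b * u.im)
    lia
  have hre : u.re = 1 ∨ u.re = -1 := by
    rw [← sq_eq_one_iff]
    rcases hu with hu | hu <;> simp only [him, mul_zero, add_zero, sub_zero] at hu
    · rw [sq, hu]
    · nlinarith [mul_self_nonneg u.re]
  exact hre.imp (fun h ↦ QuadraticAlgebra.ext h him)
    fun h ↦ QuadraticAlgebra.ext h (him.trans neg_zero.symm)

lemma nonempty_algEquiv_quadraticAlgebra {F L : Type*} [Field F] [Field L] [Algebra F L]
    (hL : finrank F L = 2) {d : F} (hd : ¬ IsSquare d) {x : L} (hx : algebraMap F L d = x * x) :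
    Nonempty (L ≃ₐ[F] QuadraticAlgebra F d 0) := by
  have : Fact (∀ r : F, r ^ 2 ≠ d + 0 * r) :=
    ⟨fun r hr ↦ hd ⟨r, by linear_combination -hr⟩⟩
  let f : QuadraticAlgebra F d 0 →ₐ[F] L :=
    lift ⟨x, by rw [← hx, zero_smul, add_zero, Algebra.algebraMap_eq_smul_one]⟩
  have : FiniteDimensional F L := .of_finrank_pos (hL ▸ two_pos)
  have hf : Function.Injective f := f.toRingHom.injective
  exact ⟨(AlgEquiv.ofBijective f ⟨hf, (LinearMap.injective_iff_surjective_of_finrank_eq_finrank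
    (f := f.toLinearMap) (by rw [hL, QuadraticAlgebra.finrank_eq_two])).mp hf⟩).symm⟩

end Discriminant

section NumberField

variable {K : Type*} [Field K] [NumberField K]

instance isTorsionFree_quotient_span_one : IsTorsionFree ℤ (𝓞 K ⧸ ℤ ∙ (1 : 𝓞 K)) := by
  refine .of_smul_eq_zero fun k x hx ↦ or_iff_not_imp_left.mpr fun hk ↦ ?_
  obtain ⟨z, rfl⟩ := mkQ_surjective _ x
  rw [← map_smul, mkQ_apply, Quotient.mk_eq_zero, mem_span_singleton] at hx
  obtain ⟨m, hm⟩ := hx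
  have hz : algebraMap ℚ K (m / k) = z := by
    rw [map_div₀, map_intCast, map_intCast, div_eq_iff (by exact_mod_cast hk)]
    simpa [mul_comm] using congrArg (algebraMap (𝓞 K) K) hm
  have hint : IsIntegral ℤ (m / k : ℚ) := by
    rw [← isIntegral_algebraMap_iff (algebraMap ℚ K).injective, hz]
    exact z.isIntegral_coe
  obtain ⟨l, hl⟩ := IsIntegrallyClosed.isIntegral_iff.mp hint
  rw [mkQ_apply, Quotient.mk_eq_zero, mem_span_singleton]
  refine ⟨l, RingOfIntegers.ext ?_⟩
  rw [← hz, ← hl]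
  simp

lemma exists_basis_zero_eq_one (hK : finrank ℚ K = 2) :
    ∃ v : Basis (Fin 2) ℤ (𝓞 K), v 0 = 1 := by
  let v₀ : Basis (Fin 1) ℤ (ℤ ∙ (1 : 𝓞 K)) := (Basis.singleton (Fin 1) ℤ).map
    (LinearEquiv.toSpanNonzeroSingleton ℤ (𝓞 K) 1 one_ne_zero)
  have hquot : finrank ℤ (𝓞 K ⧸ ℤ ∙ (1 : 𝓞 K)) = 1 := by
    have hsum := finrank_quotient_add_finrank (ℤ ∙ (1 : 𝓞 K))
    rw [RingOfIntegers.rank, hK, finrank_eq_card_basis v₀, Fintype.card_fin] at hsum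
    lia
  refine ⟨(v₀.sumQuot (finBasisOfFinrankEq ℤ _ hquot)).reindex finSumFinEquiv, ?_⟩
  rw [Basis.reindex_apply]
  change v₀.sumQuot _ (Sum.inl 0) = 1
  simp [v₀]

lemma exists_ringOfIntegers_algEquiv_quadraticAlgebra (hK : finrank ℚ K = 2) :
    ∃ a b : ℤ, Nonempty (𝓞 K ≃ₐ[ℤ] QuadraticAlgebra ℤ a b) :=
  let ⟨v, hv⟩ := exists_basis_zero_eq_one hK
  exists_algEquiv_quadraticAlgebra v hv

lemma discr_eq_of_algEquiv_quadraticAlgebra {a b : ℤ} (e : 𝓞 K ≃ₐ[ℤ] QuadraticAlgebra ℤ a b) :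
    discr K = b ^ 2 + 4 * a := by
  rw [← discr_quadraticAlgebra_basis, ← discr_eq_discr K ((QuadraticAlgebra.basis a b).map
    e.symm.toLinearEquiv), Algebra.discr_eq_discr_of_algEquiv _ e]
  congr 1
  ext1 i
  simp

lemma not_isSquare_discr (hK : finrank ℚ K = 2) : ¬ IsSquare (discr K) := by
  obtain ⟨a, b, ⟨e⟩⟩ := exists_ringOfIntegers_algEquiv_quadraticAlgebra hK
  have := e.symm.injective.isDomain e.symm.toRingHom
  rw [discr_eq_of_algEquiv_quadraticAlgebra e]
  exact not_isSquare_discr_of_isDomain two_ne_zero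

lemma isSquare_discr_cast (hK : finrank ℚ K = 2) : IsSquare (discr K : K) := by
  obtain ⟨a, b, ⟨e⟩⟩ := exists_ringOfIntegers_algEquiv_quadraticAlgebra hK
  have hω : (⟨-b, 2⟩ * ⟨-b, 2⟩ : QuadraticAlgebra ℤ a b) = (discr K : ℤ) := by
    rw [discr_eq_of_algEquiv_quadraticAlgebra e]
    ext
    · simp only [re_mul, re_intCast, Int.cast_id]
      ring
    · simp only [im_mul, im_intCast]
      ring
  refine ⟨(e.symm ⟨-b, 2⟩ : 𝓞 K), ?_⟩
  rw [← map_mul, ← map_mul, hω]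
  simp

lemma torsionOrder_le_two (hK : finrank ℚ K = 2) (hd : discr K < -4) :
    Units.torsionOrder K ≤ 2 := by
  obtain ⟨a, b, ⟨e⟩⟩ := exists_ringOfIntegers_algEquiv_quadraticAlgebra hK
  rw [discr_eq_of_algEquiv_quadraticAlgebra e] at hd
  have hunit (u : (𝓞 K)ˣ) : u ∈ ({1, -1} : Set (𝓞 K)ˣ) := by
    have hu := eq_one_or_eq_neg_one_of_isUnit hd (u.isUnit.map e)
    rwa [← map_one e, ← map_neg, e.injective.eq_iff, e.injective.eq_iff, ← Units.val_one,
      ← Units.val_neg, Units.val_inj, Units.val_inj] at hu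
  calc Units.torsionOrder K = (Units.torsion K : Set (𝓞 K)ˣ).ncard := rfl
    _ ≤ ({1, -1} : Set (𝓞 K)ˣ).ncard := Set.ncard_le_ncard fun u _ ↦ hunit u
    _ ≤ 2 := (Set.ncard_insert_le _ _).trans (by simp)

lemma discr_eq_of_isSquare_mul {L : Type*} [Field L] [NumberField L] (hK : finrank ℚ K = 2)
    (hL : finrank ℚ L = 2) (hKL : IsSquare (discr K * discr L)) : discr K = discr L := by
  have hd : ¬ IsSquare (discr L : ℚ) := by
    simpa only [Rat.isSquare_intCast_iff] using not_isSquare_discr hL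
  obtain ⟨x, hx⟩ := isSquare_discr_cast hK
  obtain ⟨y, hy⟩ := isSquare_discr_cast hL
  obtain ⟨s, hs⟩ := hKL
  have hsx : (discr L : K) = s / x * (s / x) := by
    rw [div_mul_div_comm, ← hx, eq_div_iff (by simp [discr_ne_zero]), mul_comm]
    exact_mod_cast hs
  obtain ⟨e⟩ := nonempty_algEquiv_quadraticAlgebra hK hd (by simpa using hsx)
  obtain ⟨f⟩ := nonempty_algEquiv_quadraticAlgebra hL hd (by simpa using hy)
  exact discr_eq_discr_of_algEquiv K (e.trans f.symm)

omit [NumberField K] in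
lemma isTotallyComplex_of_isEmpty (h : IsEmpty (K →+* ℝ)) : IsTotallyComplex K :=
  ⟨fun _ ↦ InfinitePlace.not_isReal_iff_isComplex.mp fun hv ↦
    h.false (InfinitePlace.embedding_of_isReal hv)⟩

lemma regulator_eq_one_of_rank_eq_zero (hK : Units.rank K = 0) : Units.regulator K = 1 := by
  classical
  have : IsEmpty (Fin (Units.rank K)) := by
    rw [hK]
    infer_instance
  have := (Units.equivFinRank K).symm.isEmpty
  rw [Units.regulator_eq_det', Matrix.det_isEmpty, abs_one]

variable [IsTotallyComplex K]

lemma nrComplexPlaces_eq_one (hK : finrank ℚ K = 2) : InfinitePlace.nrComplexPlaces K = 1 := by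
  have := IsTotallyComplex.finrank (K := K)
  lia

lemma discr_neg (hK : finrank ℚ K = 2) : discr K < 0 := by
  rw [← Int.sign_eq_neg_one_iff_neg, sign_discr, nrComplexPlaces_eq_one hK, pow_one]

lemma classNumber_eq (hK : finrank ℚ K = 2) :
    (classNumber K : ℝ) =
      dedekindZeta_residue K * Units.torsionOrder K * √|(discr K : ℝ)| / (2 * Real.pi) := by
  have hr : InfinitePlace.nrRealPlaces K = 0 := IsTotallyComplex.nrRealPlaces_eq_zero K
  have hrank : Units.rank K = 0 := by
    rw [Units.rank, InfinitePlace.card_eq_nrRealPlaces_add_nrComplexPlaces, hr,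
      nrComplexPlaces_eq_one hK]
  have hw : (Units.torsionOrder K : ℝ) ≠ 0 := Nat.cast_ne_zero.mpr (Units.torsionOrder_pos K).ne'
  have hd : √|(discr K : ℝ)| ≠ 0 := by simp [discr_ne_zero]
  rw [dedekindZeta_residue_def, hr, nrComplexPlaces_eq_one hK,
    regulator_eq_one_of_rank_eq_zero hrank]
  field_simp

end NumberField

section Roots

lemma card_roots_eq_one_add_jacobiSym (a b : ℤ) {p : ℕ} [Fact p.Prime] (hp : p ≠ 2) :
    (Nat.card {x : ZMod p // x * x = a • 1 + b • x} : ℤ) = 1 + J(b ^ 2 + 4 * a | p) := by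
  have h2 : (2 : ZMod p) ≠ 0 := Ring.two_ne_zero (by rwa [ZMod.ringChar_zmod_n])
  rw [← jacobiSym.legendreSym.to_jacobiSym, add_comm, ← legendreSym.card_sqrts p hp,
    Set.toFinset_card, ← Nat.card_eq_fintype_card, Nat.cast_inj]
  let e : ZMod p ≃ ZMod p := (Equiv.mulLeft₀ 2 h2).trans (Equiv.subRight (b : ZMod p))
  refine Nat.card_congr (e.subtypeEquiv fun x ↦ ?_)
  have hcomplete : (2 * x - b) ^ 2 - (b ^ 2 + 4 * a) = 2 * 2 * (x * x - (a + b * x)) := by ring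
  have hiff : (2 * x - b) ^ 2 = b ^ 2 + 4 * a ↔ x * x = a + b * x := by
    rw [← sub_eq_zero, hcomplete, mul_eq_zero_iff_left (mul_ne_zero h2 h2), sub_eq_zero]
  simpa [e] using hiff.symm

lemma card_ideal_absNorm_eq_prime (R : Type*) [CommRing R] [IsDedekindDomain R] [Free ℤ R]
    {p : ℕ} (hp : p.Prime) :
    Nat.card {I : Ideal R // Ideal.absNorm I = p} = Nat.card (R →+* ZMod p) := by
  symm
  refine Nat.card_congr (Equiv.ofBijective (fun f ↦ ⟨RingHom.ker f, ?_⟩) ⟨?_, ?_⟩)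
  · rw [Ideal.absNorm_apply, Submodule.cardQuot_apply]
    exact (Nat.card_congr (RingHom.quotientKerEquivOfSurjective
      (ZMod.ringHom_surjective f)).toEquiv).trans (Nat.card_zmod p)
  · exact fun f g hfg ↦ ZMod.ringHom_eq_of_ker_eq f g (congrArg Subtype.val hfg)
  · rintro ⟨P, hP⟩
    rw [Ideal.absNorm_apply, Submodule.cardQuot_apply] at hP
    have : Finite (R ⧸ P) := Nat.finite_of_card_ne_zero (hP.trans_ne hp.ne_zero)
    have := Fintype.ofFinite (R ⧸ P)
    let e := (ZMod.ringEquivOfPrime (R ⧸ P) hp (Nat.card_eq_fintype_card.symm.trans hP)).symm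
    refine ⟨(e : R ⧸ P →+* ZMod p).comp (Ideal.Quotient.mk P), Subtype.ext ?_⟩
    exact (RingHom.ker_equiv_comp _ e).trans Ideal.mk_ker

lemma card_ringHom_eq_card_roots {R : Type*} [Ring R] {a b : ℤ}
    (e : R ≃ₐ[ℤ] QuadraticAlgebra ℤ a b) (A : Type*) [Ring A] :
    Nat.card (R →+* A) = Nat.card {x : A // x * x = a • 1 + b • x} :=
  Nat.card_congr ((RingHom.equivIntAlgHom R A).trans ((e.arrowCongr .refl).trans lift.symm))

end Roots

end QuadraticRing

section HeckeRelation

variable {R : Type*} [CommRing R]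

/-- The operator `V_m` of the theory of modular forms on the coefficients of a Dirichlet series:
it multiplies `∑ f(n) n⁻ˢ` by `m⁻ˢ`. -/
def vOperator (m : ℕ) (f : ℕ → R) (n : ℕ) : R := if m ∣ n then f (n / m) else 0

lemma vOperator_mul_left {m : ℕ} (hm : m ≠ 0) (f : ℕ → R) (n : ℕ) :
    vOperator m f (m * n) = f n := by
  rw [vOperator, if_pos (dvd_mul_right m n), Nat.mul_div_cancel_left n (Nat.pos_of_ne_zero hm)]

lemma vOperator_of_not_dvd {m n : ℕ} (h : ¬ m ∣ n) (f : ℕ → R) : vOperator m f n = 0 := if_neg h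

lemma vOperator_mul_of_coprime {k m : ℕ} (hkm : k.Coprime m) (f : ℕ → R) (n : ℕ) :
    vOperator m f (k * n) = vOperator m (fun j ↦ f (k * j)) n := by
  by_cases h : m ∣ n
  · rw [vOperator, vOperator, if_pos h, if_pos (h.mul_left k), Nat.mul_div_assoc k h]
  · rw [vOperator_of_not_dvd h, vOperator_of_not_dvd (mt hkm.symm.dvd_of_dvd_mul_left h)]

lemma vOperator_vOperator (k m : ℕ) (f : ℕ → R) (n : ℕ) :
    vOperator k (vOperator m f) n = vOperator (k * m) f n := by
  by_cases hk : k ∣ n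
  · simp only [vOperator, hk, if_true, Nat.dvd_div_iff_mul_dvd, Nat.div_div_eq_div_mul]
  · rw [vOperator_of_not_dvd hk, vOperator_of_not_dvd (mt dvd_of_mul_right_dvd hk)]

lemma LSeriesHasSum_vOperator {m : ℕ} (hm : m ≠ 0) {f : ℕ → ℂ} {s a : ℂ}
    (hf : LSeriesHasSum f s a) : LSeriesHasSum (vOperator m f) s ((m : ℂ) ^ (-s) * a) := by
  have hinj : Function.Injective (m * ·) := mul_right_injective₀ hm
  have hterm : LSeries.term (vOperator m f) s ∘ (m * ·) =
      fun n ↦ (m : ℂ) ^ (-s) * LSeries.term f s n := by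
    ext n
    rcases eq_or_ne n 0 with rfl | hn
    · simp
    · simp only [Function.comp_apply]
      rw [LSeries.term_of_ne_zero (mul_ne_zero hm hn), LSeries.term_of_ne_zero hn,
        vOperator_mul_left hm, Nat.cast_mul, Complex.natCast_mul_natCast_cpow, Complex.cpow_neg,
        div_mul_eq_div_div_swap, div_eq_inv_mul]
  refine (hinj.hasSum_iff fun n hn ↦ ?_).mp (hterm ▸ hf.mul_left _)
  rw [LSeries.term_def, vOperator_of_not_dvd fun ⟨k, hk⟩ ↦ hn ⟨k, hk.symm⟩, zero_div, ite_self]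

/-- The recursion characterising an Euler factor `((1 - p⁻ˢ) (1 - c p⁻ˢ))⁻¹` at `p` of the
Dirichlet series with coefficients `f`. -/
def HeckeRelation (f : ℕ → R) (p : ℕ) (c : R) : Prop :=
  ∀ n ≠ 0, f (p * n) = (1 + c) * f n - c * vOperator p f n

lemma heckeRelation_vOperator {f : ℕ → R} {p m : ℕ} {c : R} (hpm : p.Coprime m)
    (hf : HeckeRelation f p c) : HeckeRelation (vOperator m f) p c := by
  intro n hn
  rw [vOperator_mul_of_coprime hpm, vOperator_vOperator, mul_comm p, ← vOperator_vOperator]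
  by_cases h : m ∣ n
  · have hm : n / m ≠ 0 := (Nat.div_pos (Nat.le_of_dvd (Nat.pos_of_ne_zero hn) h)
      (Nat.pos_of_dvd_of_pos h (Nat.pos_of_ne_zero hn))).ne'
    simp only [vOperator, h, if_true, hf _ hm]
  · simp only [vOperator_of_not_dvd h, mul_zero, sub_zero]

lemma heckeRelation_sub_smul {f g : ℕ → R} {p : ℕ} {c : R} (hf : HeckeRelation f p c)
    (hg : HeckeRelation g p c) (r : R) : HeckeRelation (f - r • g) p c := by
  intro n hn
  have hV : vOperator p (f - r • g) n = vOperator p f n - r * vOperator p g n := by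
    by_cases h : p ∣ n <;> simp [vOperator, h]
  simp only [hV, Pi.sub_apply, Pi.smul_apply, smul_eq_mul, hf n hn, hg n hn]
  ring

lemma heckeRelation_zero_sub_smul {f : ℕ → R} {p : ℕ} (hp : p ≠ 0) {c : R}
    (hf : HeckeRelation f p c) : HeckeRelation (f - c • vOperator p f) p 0 := by
  intro n hn
  simp only [Pi.sub_apply, Pi.smul_apply, smul_eq_mul, hf n hn, vOperator_mul_left hp]
  ring

lemma eq_of_heckeRelation {f g : ℕ → R} {c : ℕ → R} (hf : ∀ p, p.Prime → HeckeRelation f p (c p))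
    (hg : ∀ p, p.Prime → HeckeRelation g p (c p)) (hfg : f 1 = g 1) {n : ℕ} (hn : n ≠ 0) :
    f n = g n := by
  induction n using Nat.strong_induction_on with
  | h n ih =>
    rcases eq_or_ne n 1 with rfl | hn₁
    · exact hfg
    obtain ⟨p, hp, m, rfl⟩ := Nat.exists_prime_and_dvd hn₁
    have hm : m ≠ 0 := right_ne_zero_of_mul hn
    have hlt : m < p * m := lt_mul_left (Nat.pos_of_ne_zero hm) hp.one_lt
    have hV : vOperator p f m = vOperator p g m := by
      by_cases h : p ∣ m
      · have hdiv : m / p ≠ 0 :=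
          (Nat.div_pos (Nat.le_of_dvd (Nat.pos_of_ne_zero hm) h) hp.pos).ne'
        simp only [vOperator, h, if_true, ih _ ((Nat.div_le_self m p).trans_lt hlt) hdiv]
      · rw [vOperator_of_not_dvd h, vOperator_of_not_dvd h]
    rw [hf p hp m hm, hg p hp m hm, ih m hlt hm, hV]

lemma heckeRelation_zetaMul {N : ℕ} (χ : DirichletCharacter ℂ N) {p : ℕ} (hp : p.Prime) :
    HeckeRelation χ.zetaMul p (χ p) := by
  intro n hn
  obtain ⟨k, m, hm, rfl⟩ := Nat.exists_eq_pow_mul_and_not_dvd hn p hp.one_lt.ne'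
  have hmul (j : ℕ) : χ.zetaMul (p ^ j * m) =
      (∑ i ∈ Finset.range (j + 1), χ p ^ i) * χ.zetaMul m := by
    rw [χ.isMultiplicative_zetaMul.map_mul_of_coprime
      (((hp.coprime_iff_not_dvd).mpr hm).pow_left j), zetaMul_prime_pow χ hp]
  rw [← mul_assoc, ← pow_succ', hmul, hmul]
  cases k with
  | zero =>
    rw [pow_zero, one_mul, vOperator_of_not_dvd hm, Finset.sum_range_succ]
    simp
  | succ k =>
    rw [pow_succ', mul_assoc, vOperator_mul_left hp.ne_zero, hmul,
      Finset.sum_range_succ _ (k + 2), Finset.sum_range_succ _ (k + 1)]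
    ring

end HeckeRelation

section IdealCount

open Ideal
open scoped NumberTheorySymbols

variable (K : Type*) [Field K] [NumberField K]

/-- The number of integral ideals of norm `n`, i.e. the `n`-th coefficient of `dedekindZeta K`. -/
noncomputable def idealCount (n : ℕ) : ℕ := Nat.card {I : Ideal (𝓞 K) // absNorm I = n}

lemma idealCount_eq_ncard (n : ℕ) : idealCount K n = {I : Ideal (𝓞 K) | absNorm I = n}.ncard := rfl

lemma idealCount_one : idealCount K 1 = 1 := by
  simp [idealCount_eq_ncard, absNorm_eq_one_iff]

variable {K}

lemma idealCount_prime_of_odd (hK : finrank ℚ K = 2) {p : ℕ} (hp : p.Prime) (hp₂ : p ≠ 2) :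
    (idealCount K p : ℤ) = 1 + J(discr K | p) := by
  have := Fact.mk hp
  obtain ⟨a, b, ⟨e⟩⟩ := exists_ringOfIntegers_algEquiv_quadraticAlgebra hK
  rw [idealCount, card_ideal_absNorm_eq_prime _ hp, card_ringHom_eq_card_roots e,
    card_roots_eq_one_add_jacobiSym a b hp₂, discr_eq_of_algEquiv_quadraticAlgebra e]

lemma idealCount_prime_le (hK : finrank ℚ K = 2) {p : ℕ} (hp : p.Prime) :
    idealCount K p ≤ p := by
  have := Fact.mk hp
  obtain ⟨a, b, ⟨e⟩⟩ := exists_ringOfIntegers_algEquiv_quadraticAlgebra hK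
  rw [idealCount, card_ideal_absNorm_eq_prime _ hp, card_ringHom_eq_card_roots e]
  exact (Finite.card_subtype_le _).trans_eq (Nat.card_zmod p)

lemma ideal_eq_of_dvd_of_absNorm_eq {I J : Ideal (𝓞 K)} (hIJ : I ∣ J)
    (hN : absNorm I = absNorm J) (hJ : absNorm J ≠ 0) : I = J := by
  obtain ⟨A, rfl⟩ := hIJ
  rw [map_mul] at hN hJ
  rw [absNorm_eq_one_iff.mp ((mul_eq_left₀ (left_ne_zero_of_mul hJ)).mp hN.symm), mul_top]

lemma ncard_absNorm_eq_mul_and_dvd {P : Ideal (𝓞 K)} (hP : absNorm P ≠ 0) (n : ℕ) :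
    {I : Ideal (𝓞 K) | absNorm I = absNorm P * n ∧ P ∣ I}.ncard = idealCount K n := by
  have hP₀ : P ≠ 0 := by
    rintro rfl
    simp at hP
  rw [idealCount_eq_ncard,
    ← Set.ncard_image_of_injective {I | absNorm I = n} (mul_right_injective₀ hP₀)]
  congr 1
  ext I
  constructor
  · rintro ⟨hI, J, rfl⟩
    exact ⟨J, mul_left_cancel₀ hP (map_mul absNorm P J ▸ hI), rfl⟩
  · rintro ⟨J, hJ, rfl⟩
    exact ⟨by rw [map_mul, hJ], dvd_mul_right P J⟩

section Quadratic

variable (hK : finrank ℚ K = 2) {p : ℕ} (hp : p.Prime)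

include hK hp

lemma ncard_absNorm_eq_prime_mul_and_span_dvd (n : ℕ) :
    ({I : Ideal (𝓞 K) | absNorm I = p * n ∧ span {(p : 𝓞 K)} ∣ I}.ncard : ℂ) =
      vOperator p (fun m ↦ (idealCount K m : ℂ)) n := by
  have hN : absNorm (span {(p : 𝓞 K)}) = p * p := by
    rw [absNorm_span_natCast, RingOfIntegers.rank, hK, sq]
  by_cases hn : p ∣ n
  · obtain ⟨m, rfl⟩ := hn
    rw [vOperator_mul_left hp.ne_zero, ← mul_assoc, ← hN,
      ncard_absNorm_eq_mul_and_dvd (hN ▸ mul_ne_zero hp.ne_zero hp.ne_zero)]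
  · rw [vOperator_of_not_dvd hn, Nat.cast_eq_zero]
    convert Set.ncard_empty (Ideal (𝓞 K))
    refine Set.eq_empty_of_forall_notMem fun I ⟨hI, hpI⟩ ↦ hn ?_
    exact Nat.dvd_of_mul_dvd_mul_left hp.pos (hN ▸ hI ▸ map_dvd absNorm hpI)

omit hK in
lemma exists_prime_dvd_of_prime_dvd_absNorm {I : Ideal (𝓞 K)} (hI : p ∣ absNorm I) :
    ∃ P : Ideal (𝓞 K), Prime P ∧ P ∣ I ∧ P ∣ span {(p : 𝓞 K)} := by
  obtain ⟨P, hP, hPp, hPI⟩ := exists_isMaximal_dvd_of_dvd_absNorm' hp I hI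
  have hpP : (p : 𝓞 K) ∈ P := by
    have : (p : ℤ) ∈ P.under ℤ := hPp ▸ mem_span_singleton_self _
    simpa [mem_comap] using this
  have hP₀ : P ≠ ⊥ := by
    rintro rfl
    simp [hp.ne_zero] at hpP
  exact ⟨P, prime_of_isPrime hP₀ hP.isPrime, hPI, dvd_span_singleton.mpr hpP⟩

lemma span_dvd_of_forall_absNorm_ne (h : ∀ P : Ideal (𝓞 K), absNorm P ≠ p) {I : Ideal (𝓞 K)}
    (hI : p ∣ absNorm I) : span {(p : 𝓞 K)} ∣ I := by
  have hN : absNorm (span {(p : 𝓞 K)}) = p ^ 2 := by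
    rw [absNorm_span_natCast, RingOfIntegers.rank, hK]
  obtain ⟨P, hP, hPI, hPp⟩ := exists_prime_dvd_of_prime_dvd_absNorm hp hI
  have hPN : absNorm P ≠ 1 := fun hP₁ ↦
    hP.not_isUnit (isUnit_iff.mpr (absNorm_eq_one_iff.mp hP₁))
  obtain ⟨k, hk, hPk⟩ := (Nat.dvd_prime_pow hp).mp (hN ▸ map_dvd absNorm hPp)
  interval_cases k
  · exact absurd hPk hPN
  · exact absurd (pow_one p ▸ hPk) (h P)
  · exact ideal_eq_of_dvd_of_absNorm_eq hPp (hPk.trans hN.symm)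
      (hN ▸ pow_ne_zero 2 hp.ne_zero) ▸ hPI

lemma exists_mul_eq_span {P : Ideal (𝓞 K)} (hP : absNorm P = p) :
    ∃ Q : Ideal (𝓞 K), absNorm Q = p ∧ P * Q = span {(p : 𝓞 K)} := by
  obtain ⟨Q, hQ⟩ : P ∣ span {(p : 𝓞 K)} := dvd_span_singleton.mpr (hP ▸ absNorm_mem P)
  refine ⟨Q, mul_left_cancel₀ hp.ne_zero ?_, hQ.symm⟩
  rw [← sq, ← hK, ← RingOfIntegers.rank, ← absNorm_span_natCast, hQ, map_mul, hP]

omit hK in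
lemma eq_of_dvd_of_absNorm_eq_prime {P I : Ideal (𝓞 K)} (hP : Prime P) (hI : absNorm I = p)
    (hPI : P ∣ I) : P = I :=
  associated_iff_eq.mp <| hP.irreducible.associated_of_dvd
    (irreducible_of_irreducible_absNorm (hI ▸ hp)) hPI

omit hK in
lemma dvd_or_dvd_of_mul_eq_span {P Q : Ideal (𝓞 K)} (hP : absNorm P = p) (hQ : absNorm Q = p)
    (hPQ : P * Q = span {(p : 𝓞 K)}) {I : Ideal (𝓞 K)} (hI : p ∣ absNorm I) : P ∣ I ∨ Q ∣ I := by
  obtain ⟨R, hR, hRI, hRp⟩ := exists_prime_dvd_of_prime_dvd_absNorm hp hI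
  refine (hR.dvd_or_dvd (hPQ ▸ hRp)).imp (fun h ↦ ?_) fun h ↦ ?_
  · exact eq_of_dvd_of_absNorm_eq_prime hp hR hP h ▸ hRI
  · exact eq_of_dvd_of_absNorm_eq_prime hp hR hQ h ▸ hRI

omit hK in
lemma setOf_absNorm_eq_pair {P Q : Ideal (𝓞 K)} (hP : absNorm P = p) (hQ : absNorm Q = p)
    (hPQ : P * Q = span {(p : 𝓞 K)}) : {I : Ideal (𝓞 K) | absNorm I = p} = {P, Q} := by
  ext I
  constructor
  · intro (hI : absNorm I = p)
    have hI₀ : absNorm I ≠ 0 := hI ▸ hp.ne_zero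
    exact (dvd_or_dvd_of_mul_eq_span hp hP hQ hPQ hI.symm.dvd).imp
      (fun h ↦ (ideal_eq_of_dvd_of_absNorm_eq h (hP.trans hI.symm) hI₀).symm)
      fun h ↦ (ideal_eq_of_dvd_of_absNorm_eq h (hQ.trans hI.symm) hI₀).symm
  · rintro (rfl | rfl)
    exacts [hP, hQ]

omit hK in
lemma mul_dvd_iff_of_absNorm_eq_prime {P Q : Ideal (𝓞 K)} (hP : absNorm P = p)
    (hQ : absNorm Q = p) (hne : P ≠ Q) {I : Ideal (𝓞 K)} : P * Q ∣ I ↔ P ∣ I ∧ Q ∣ I := by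
  refine ⟨fun h ↦ ⟨dvd_of_mul_right_dvd h, dvd_of_mul_left_dvd h⟩, ?_⟩
  rintro ⟨⟨J, rfl⟩, hQJ⟩
  have hQ' : Prime Q := (irreducible_of_irreducible_absNorm (hQ ▸ hp)).prime
  refine mul_dvd_mul_left P ((hQ'.dvd_or_dvd hQJ).resolve_left fun h ↦ hne ?_)
  exact (eq_of_dvd_of_absNorm_eq_prime hp hQ' hP h).symm

lemma heckeRelation_idealCount_of_forall_absNorm_ne (h : ∀ P : Ideal (𝓞 K), absNorm P ≠ p) :
    HeckeRelation (fun n ↦ (idealCount K n : ℂ)) p (idealCount K p - 1) := by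
  intro n _
  beta_reduce
  have hp₀ : idealCount K p = 0 := by simp [idealCount_eq_ncard, h]
  have hset : {I : Ideal (𝓞 K) | absNorm I = p * n} =
      {I | absNorm I = p * n ∧ span {(p : 𝓞 K)} ∣ I} :=
    Set.ext fun I ↦ (and_iff_left_of_imp fun hI ↦
      span_dvd_of_forall_absNorm_ne hK hp h (hI ▸ dvd_mul_right p n)).symm
  rw [hp₀, ← ncard_absNorm_eq_prime_mul_and_span_dvd hK hp, ← hset,
    idealCount_eq_ncard K (p * n)]
  simp

lemma heckeRelation_idealCount_of_absNorm_eq {P : Ideal (𝓞 K)} (hP : absNorm P = p) :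
    HeckeRelation (fun n ↦ (idealCount K n : ℂ)) p (idealCount K p - 1) := by
  intro n _
  beta_reduce
  obtain ⟨Q, hQ, hPQ⟩ := exists_mul_eq_span hK hp hP
  let multiples (I : Ideal (𝓞 K)) : Set (Ideal (𝓞 K)) := {J | absNorm J = p * n ∧ I ∣ J}
  have hcard {I : Ideal (𝓞 K)} (hI : absNorm I = p) : (multiples I).ncard = idealCount K n := by
    rw [← ncard_absNorm_eq_mul_and_dvd (hI ▸ hp.ne_zero) n, hI]
  have hunion : {I : Ideal (𝓞 K) | absNorm I = p * n} = multiples P ∪ multiples Q := by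
    ext I
    simpa only [multiples, Set.mem_union, Set.mem_ofPred_eq, ← and_or_left] using
      (and_iff_left_of_imp fun hI ↦
        dvd_or_dvd_of_mul_eq_span hp hP hQ hPQ (hI ▸ dvd_mul_right p n)).symm
  rw [idealCount_eq_ncard K (p * n), hunion, idealCount_eq_ncard K p,
    setOf_absNorm_eq_pair hp hP hQ hPQ]
  by_cases hne : P = Q
  · rw [← hne, Set.union_self, hcard hP]
    simp
  · have hinter : multiples P ∩ multiples Q = multiples (span {(p : 𝓞 K)}) := by
      ext I
      rw [← hPQ]
      exact and_and_left.symm.trans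
        (and_congr_right fun _ ↦ (mul_dvd_iff_of_absNorm_eq_prime hp hP hQ hne).symm)
    have hfin (I : Ideal (𝓞 K)) : (multiples I).Finite :=
      (finite_setOfPred_absNorm_eq (p * n)).subset fun _ hJ ↦ hJ.1
    have hsum := Set.ncard_union_add_ncard_inter _ _ (hfin P) (hfin Q)
    rw [hcard hP, hcard hQ, hinter] at hsum
    have hsum' := congrArg (Nat.cast : ℕ → ℂ) hsum
    rw [← ncard_absNorm_eq_prime_mul_and_span_dvd hK hp, Set.ncard_pair hne]
    push_cast at hsum' ⊢
    linear_combination hsum'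

lemma heckeRelation_idealCount :
    HeckeRelation (fun n ↦ (idealCount K n : ℂ)) p (idealCount K p - 1) := by
  by_cases h : ∀ P : Ideal (𝓞 K), absNorm P ≠ p
  · exact heckeRelation_idealCount_of_forall_absNorm_ne hK hp h
  · push Not at h
    exact heckeRelation_idealCount_of_absNorm_eq hK hp h.choose_spec

end Quadratic

end IdealCount

section DedekindZeta

open Filter Topology

variable {K : Type*} [Field K] [NumberField K]

lemma LSeriesHasSum_idealCount {s : ℂ} (hs : 1 < s.re) :
    LSeriesHasSum (fun n ↦ (idealCount K n : ℂ)) s (dedekindZeta K s) := by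
  have hne : ∀ᶠ x : ℝ in 𝓝[>] 1, (x - 1) * dedekindZeta K x ≠ 0 :=
    (tendsto_sub_one_mul_dedekindZeta_nhdsGT K).eventually_ne
      (Complex.ofReal_ne_zero.mpr (dedekindZeta_residue_ne_zero K))
  obtain ⟨x, hx, hxs⟩ := (hne.and (Ioo_mem_nhdsGT hs)).exists
  -- A nonsummable series has the junk value `0`.
  have hsum : LSeriesSummable (fun n ↦ (idealCount K n : ℂ)) x := by
    by_contra h
    exact hx (mul_eq_zero_of_right _ (tsum_eq_zero_of_not_summable h))
  exact (hsum.of_re_le_re (by simpa using hxs.2.le)).LSeriesHasSum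

lemma heckeRelation_idealCount_of_odd (hK : finrank ℚ K = 2) {p : ℕ} (hp : p.Prime) (hp₂ : p ≠ 2) :
    HeckeRelation (fun n ↦ (idealCount K n : ℂ)) p (jacobiChar (discr K) p) := by
  convert heckeRelation_idealCount hK hp
  have := congrArg (Int.cast : ℤ → ℂ) (idealCount_prime_of_odd hK hp hp₂)
  push_cast at this
  rw [this, jacobiChar_natCast_of_odd _ (hp.odd_of_ne_two hp₂), add_sub_cancel_left]

lemma jacobiChar_two (D : ℤ) : jacobiChar D 2 = 0 := by
  refine MulChar.map_nonunit _ ?_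
  have h : ¬ IsUnit ((2 : ℕ) : ZMod (4 * D.natAbs)) := by
    rw [ZMod.isUnit_iff_coprime, Nat.coprime_mul_iff_right]
    norm_num
  exact h

/-- The coefficients of `ζ_K(s)` with one of the two Euler factors at `2` removed. -/
noncomputable def oddIdealCount (K : Type*) [Field K] [NumberField K] : ℕ → ℂ :=
  (fun n ↦ (idealCount K n : ℂ)) -
    (idealCount K 2 - 1 : ℂ) • vOperator 2 fun n ↦ (idealCount K n : ℂ)

lemma LSeriesHasSum_oddIdealCount {s : ℂ} (hs : 1 < s.re) :
    LSeriesHasSum (oddIdealCount K) s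
      ((1 - (idealCount K 2 - 1) * 2 ^ (-s)) * dedekindZeta K s) := by
  have h := LSeriesHasSum_idealCount (K := K) hs
  convert h.sub ((LSeriesHasSum_vOperator two_ne_zero h).smul (idealCount K 2 - 1 : ℂ)) using 1
  · rfl
  · push_cast
    ring

lemma oddIdealCount_eq_zetaMul (hK : finrank ℚ K = 2) {n : ℕ} (hn : n ≠ 0) :
    oddIdealCount K n = (jacobiChar (discr K)).zetaMul n := by
  refine eq_of_heckeRelation (c := fun p ↦ jacobiChar (discr K) p) (fun p hp ↦ ?_)
    (fun p hp ↦ heckeRelation_zetaMul _ hp) ?_ hn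
  · rcases eq_or_ne p 2 with rfl | hp₂
    · simpa only [oddIdealCount, Nat.cast_ofNat, jacobiChar_two] using
        heckeRelation_zero_sub_smul two_ne_zero (heckeRelation_idealCount hK Nat.prime_two)
    · have h := heckeRelation_idealCount_of_odd hK hp hp₂
      exact heckeRelation_sub_smul h
        (heckeRelation_vOperator ((Nat.coprime_primes hp Nat.prime_two).mpr hp₂) h) _
  · simp [oddIdealCount, idealCount_one, vOperator,
      (jacobiChar (discr K)).isMultiplicative_zetaMul.map_one]

instance neZero_four_mul_natAbs_discr : NeZero (4 * (discr K).natAbs) :=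
  ⟨by simp [discr_ne_zero]⟩

lemma mul_dedekindZeta_eq (hK : finrank ℚ K = 2) {s : ℂ} (hs : 1 < s.re) :
    (1 - (idealCount K 2 - 1) * 2 ^ (-s)) * dedekindZeta K s =
      riemannZeta s * (jacobiChar (discr K)).LFunction s := by
  rw [← (LSeriesHasSum_oddIdealCount hs).LSeries_eq, ← (LSeriesHasSum_zetaMul _ hs).LSeries_eq]
  exact LSeries_congr (fun hn ↦ oddIdealCount_eq_zetaMul hK hn) s

lemma re_LFunction_jacobiChar_one (hK : finrank ℚ K = 2) :
    ((jacobiChar (discr K)).LFunction 1).re =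
      (1 - (idealCount K 2 - 1) / 2) * dedekindZeta_residue K := by
  have hofReal : Tendsto (fun s : ℝ ↦ (s : ℂ)) (𝓝[>] 1) (𝓝[≠] 1) := by
    refine tendsto_nhdsWithin_iff.mpr ⟨?_, ?_⟩
    · exact (Complex.continuous_ofReal.tendsto' 1 1 Complex.ofReal_one).mono_left
        nhdsWithin_le_nhds
    · filter_upwards [self_mem_nhdsWithin] with s hs
      exact Complex.ofReal_ne_one.mpr (ne_of_gt hs)
  have hL := (((jacobiChar (discr K)).differentiable_LFunction
    (jacobiChar_ne_one (not_isSquare_discr hK))).continuous.tendsto 1).comp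
      (hofReal.mono_right nhdsWithin_le_nhds)
  have heuler : Tendsto (fun s : ℝ ↦ 1 - (idealCount K 2 - 1 : ℂ) * 2 ^ (-(s : ℂ))) (𝓝[>] 1)
      (𝓝 (1 - (idealCount K 2 - 1) * 2 ^ (-1 : ℂ))) := by
    have hcont : Continuous fun z : ℂ ↦ 1 - (idealCount K 2 - 1 : ℂ) * 2 ^ (-z) := by
      fun_prop (disch := simp)
    exact (hcont.tendsto 1).comp (hofReal.mono_right nhdsWithin_le_nhds)
  have hlim := tendsto_nhds_unique_of_eventuallyEq
    (heuler.mul (tendsto_sub_one_mul_dedekindZeta_nhdsGT K))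
    ((riemannZeta_residue_one.comp hofReal).mul hL) <| by
      filter_upwards [self_mem_nhdsWithin] with s (hs : 1 < s)
      have := mul_dedekindZeta_eq hK (s := s) (by simpa using hs)
      simp only [Function.comp_apply]
      linear_combination (s - 1 : ℂ) * this
  rw [one_mul, Complex.cpow_neg_one] at hlim
  rw [← hlim, ← Complex.ofReal_re ((1 - (idealCount K 2 - 1) / 2) * dedekindZeta_residue K)]
  push_cast
  rfl

end DedekindZeta

section ClassNumber

open Filter

lemma exists_forall_jacobiChar_mul_ne_one {q : ℕ} (hq : q ≠ 0) (χ : DirichletCharacter ℂ q) :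
    ∃ d₀ : ℤ, ∀ (K : Type*) [Field K] [NumberField K], finrank ℚ K = 2 → discr K ≠ d₀ →
      (jacobiChar (discr K)).mul χ ≠ 1 := by
  by_contra! h
  obtain ⟨K, _, _, hK, -, hKχ⟩ := h 0
  obtain ⟨L, _, _, hL, hne, hLχ⟩ := h (discr K)
  exact hne <| discr_eq_of_isSquare_mul hL hK <|
    isSquare_mul_of_jacobiChar_mul_eq_one (discr_ne_zero L) (discr_ne_zero K) hq hLχ hKχ

lemma exists_le_re_LFunction_jacobiChar_one {ε : ℝ} (hε : 0 < ε) :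
    ∃ C : ℝ, 0 < C ∧ ∃ d₀ : ℤ, ∀ (K : Type*) [Field K] [NumberField K], finrank ℚ K = 2 →
      discr K ≠ d₀ → C * |(discr K : ℝ)| ^ (-ε) ≤ ((jacobiChar (discr K)).LFunction 1).re := by
  obtain ⟨C, hC, q, χ, hq, hlower⟩ := exists_forall_le_re_LFunction_one hε
  obtain ⟨d₀, hd₀⟩ := exists_forall_jacobiChar_mul_ne_one hq χ
  refine ⟨C * 4 ^ (-ε), by positivity, d₀, fun K _ _ hK hd ↦ ?_⟩
  have h := hlower _ _ (jacobiChar_sq _) (jacobiChar_ne_one (not_isSquare_discr hK)) (hd₀ K hK hd)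
  rwa [Nat.cast_mul, Nat.cast_natAbs, Int.cast_abs, Nat.cast_ofNat,
    Real.mul_rpow (by norm_num) (abs_nonneg _), ← mul_assoc] at h

lemma re_LFunction_jacobiChar_one_le {K : Type*} [Field K] [NumberField K] (hK : finrank ℚ K = 2)
    {δ : ℝ} (hδ₀ : 0 < δ) (hδ₁ : δ ≤ 1) :
    ((jacobiChar (discr K)).LFunction 1).re ≤ 4 ^ δ / δ * |(discr K : ℝ)| ^ δ := by
  have h := (Complex.re_le_norm _).trans
    (norm_LFunction_one_le (jacobiChar_ne_one (not_isSquare_discr hK)) hδ₀ hδ₁)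
  rwa [Nat.cast_mul, Nat.cast_natAbs, Int.cast_abs, Nat.cast_ofNat,
    Real.mul_rpow (by norm_num) (abs_nonneg _), mul_div_right_comm] at h

section

variable {K : Type*} [Field K] [NumberField K] [IsTotallyComplex K] (hK : finrank ℚ K = 2)
  (hd : 4 < |(discr K : ℝ)|)

include hK

lemma re_LFunction_mul_sqrt_le_classNumber :
    ((jacobiChar (discr K)).LFunction 1).re * √|(discr K : ℝ)| ≤ 16 * classNumber K := by
  have hw : (1 : ℝ) ≤ Units.torsionOrder K := by exact_mod_cast Units.torsionOrder_pos K
  have hR := dedekindZeta_residue_pos K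
  rw [re_LFunction_jacobiChar_one hK, classNumber_eq hK]
  calc (1 - (idealCount K 2 - 1) / 2) * dedekindZeta_residue K * √|(discr K : ℝ)|
      ≤ 2 * dedekindZeta_residue K * √|(discr K : ℝ)| := by
        gcongr
        linarith [(idealCount K 2).cast_nonneg (α := ℝ)]
    _ = 16 * (dedekindZeta_residue K * 1 * √|(discr K : ℝ)| / (2 * 4)) := by ring
    _ ≤ 16 * (dedekindZeta_residue K * Units.torsionOrder K * √|(discr K : ℝ)| /
          (2 * Real.pi)) := by
        gcongr
        exact Real.pi_lt_four.le

include hd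

lemma classNumber_le_re_LFunction_mul_sqrt :
    (classNumber K : ℝ) ≤ ((jacobiChar (discr K)).LFunction 1).re * √|(discr K : ℝ)| := by
  have hdneg := discr_neg hK
  have : discr K < -4 := by
    rw [abs_of_neg (by exact_mod_cast hdneg)] at hd
    have : 4 < - discr K := by exact_mod_cast hd
    lia
  have hw : (Units.torsionOrder K : ℝ) ≤ 2 := by exact_mod_cast torsionOrder_le_two hK this
  have h2 : (idealCount K 2 : ℝ) ≤ 2 := by exact_mod_cast idealCount_prime_le hK Nat.prime_two
  rw [re_LFunction_jacobiChar_one hK, classNumber_eq hK]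
  have hR := dedekindZeta_residue_pos K
  calc dedekindZeta_residue K * Units.torsionOrder K * √|(discr K : ℝ)| / (2 * Real.pi)
      ≤ dedekindZeta_residue K * 2 * √|(discr K : ℝ)| / (2 * 2) := by
        gcongr
        exact Real.two_le_pi
    _ = 1 / 2 * dedekindZeta_residue K * √|(discr K : ℝ)| := by ring
    _ ≤ (1 - (idealCount K 2 - 1) / 2) * dedekindZeta_residue K * √|(discr K : ℝ)| := by
        gcongr
        linarith

end

lemma eventually_rpow_le_classNumber {ε : ℝ} (hε : 0 < ε) :
    ∀ᶠ B : ℝ in atTop, ∀ (K : Type*) [Field K] [NumberField K] [IsTotallyComplex K],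
      finrank ℚ K = 2 → B ≤ |(discr K : ℝ)| →
        |(discr K : ℝ)| ^ (1 / 2 - ε) ≤ (classNumber K : ℝ) := by
  obtain ⟨C, hC, d₀, hL⟩ := exists_le_re_LFunction_jacobiChar_one (half_pos hε)
  have hpow := (tendsto_rpow_atTop (half_pos hε)).eventually_ge_atTop (16 / C)
  filter_upwards [eventually_forall_ge_atTop.2 hpow, eventually_gt_atTop |(d₀ : ℝ)|]
    with B hpow hd₀ K _ _ _ hK hB
  have hL := hL K hK (by rintro h; rw [h] at hB; linarith)
  have hh := re_LFunction_mul_sqrt_le_classNumber hK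
  have hpow := hpow _ hB
  set x := |(discr K : ℝ)|
  have hx : 0 < x := abs_pos.2 (by exact_mod_cast discr_ne_zero K)
  rw [div_le_iff₀' hC] at hpow
  refine le_of_mul_le_mul_left ?_ (by norm_num : (0 : ℝ) < 16)
  calc 16 * x ^ (1 / 2 - ε)
      ≤ C * x ^ (ε / 2) * x ^ (1 / 2 - ε) := by gcongr
    _ = C * x ^ (-(ε / 2)) * √x := by
        rw [Real.sqrt_eq_rpow, mul_assoc, mul_assoc, ← Real.rpow_add hx, ← Real.rpow_add hx]
        ring_nf
    _ ≤ ((jacobiChar (discr K)).LFunction 1).re * √x := by gcongr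
    _ ≤ 16 * classNumber K := hh

lemma eventually_classNumber_le_rpow {ε : ℝ} (hε : 0 < ε) :
    ∀ᶠ B : ℝ in atTop, ∀ (K : Type*) [Field K] [NumberField K] [IsTotallyComplex K],
      finrank ℚ K = 2 → B ≤ |(discr K : ℝ)| →
        (classNumber K : ℝ) ≤ |(discr K : ℝ)| ^ (1 / 2 + ε) := by
  obtain ⟨δ, hδ₀, hδ⟩ := exists_between (lt_min hε one_pos)
  obtain ⟨hδε, hδ₁⟩ := lt_min_iff.1 hδ
  have hpow := (tendsto_rpow_atTop (sub_pos.2 hδε)).eventually_ge_atTop (4 ^ δ / δ)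
  filter_upwards [eventually_forall_ge_atTop.2 hpow, eventually_gt_atTop 4]
    with B hpow h4 K _ _ _ hK hB
  have hL := re_LFunction_jacobiChar_one_le hK hδ₀ hδ₁.le
  have hh := classNumber_le_re_LFunction_mul_sqrt hK (h4.trans_le hB)
  have hpow := hpow _ hB
  set x := |(discr K : ℝ)|
  have hx : 0 < x := by linarith
  calc (classNumber K : ℝ)
      ≤ ((jacobiChar (discr K)).LFunction 1).re * √x := hh
    _ ≤ 4 ^ δ / δ * x ^ δ * √x := by gcongr
    _ ≤ x ^ (ε - δ) * x ^ δ * √x := by gcongr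
    _ = x ^ (1 / 2 + ε) := by
        rw [Real.sqrt_eq_rpow, ← Real.rpow_add hx, ← Real.rpow_add hx]
        ring_nf

end ClassNumber

lemma abs_log_div_log_sqrt_sub_one_le {x h ε : ℝ} (hx : 1 < x)
    (hlower : x ^ (1 / 2 - ε) ≤ h) (hupper : h ≤ x ^ (1 / 2 + ε)) :
    |Real.log h / Real.log √x - 1| ≤ 2 * ε := by
  have hx₀ : 0 < x := one_pos.trans hx
  have hlog : 0 < Real.log x := Real.log_pos hx
  have hh : 0 < h := (Real.rpow_pos_of_pos hx₀ _).trans_le hlower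
  have hlower := (Real.le_log_iff_exp_le hh).2 (Real.rpow_def_of_pos hx₀ _ ▸ hlower)
  have hupper := (Real.log_le_iff_le_exp hh).2 (Real.rpow_def_of_pos hx₀ _ ▸ hupper)
  rw [Real.log_sqrt hx₀.le, div_sub_one (by positivity), abs_div, abs_of_pos (half_pos hlog),
    div_le_iff₀ (half_pos hlog), abs_le]
  constructor <;> linarith

/-- **Brauer–Siegel for imaginary quadratic fields.**
For every `ε > 0` there is a constant `C > 0` such that every imaginary quadratic number field
`K` whose discriminant `d_K` satisfies `|d_K| ≥ C` has
`|log(h_K) / log(√|d_K|) − 1| < ε`. -/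
theorem brauer_siegel_imaginary_quadratic :
    ∀ ε : ℝ, 0 < ε → ∃ C : ℝ, 0 < C ∧
      ∀ (K : Type) [Field K] [NumberField K],
        finrank ℚ K = 2 → IsEmpty (K →+* ℝ) →
        C ≤ |(discr K : ℝ)| →
        |Real.log (classNumber K) / Real.log (Real.sqrt |(discr K : ℝ)|) - 1| < ε := by
  intro ε hε
  have hε3 : 0 < ε / 3 := by positivity
  obtain ⟨C, ⟨hlower, hupper⟩, hC⟩ :=
    ((eventually_rpow_le_classNumber hε3).and (eventually_classNumber_le_rpow hε3)).and
      (Filter.eventually_gt_atTop 1) |>.exists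
  refine ⟨C, one_pos.trans hC, fun K _ _ hK hreal hd ↦ ?_⟩
  have := isTotallyComplex_of_isEmpty hreal
  calc |Real.log (classNumber K) / Real.log √|(discr K : ℝ)| - 1|
      ≤ 2 * (ε / 3) := abs_log_div_log_sqrt_sub_one_le (hC.trans_le hd) (hlower K hK hd)
        (hupper K hK hd)
    _ < ε := by linarith
end

section
/- There exists a constant C > 0 such that for every imaginary quadratic number field K, the class number satisfies h_K ≤ C · √|d_K| · log|d_K|. (The paper states this with the constant 1/π; here a universal constant is asserted.) -/
open NumberField Module

/-!
A prime ideal of a number field `K` of degree `n` has a prime power as norm, and at most `n` primes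
lie over a given rational prime. So the primes of `K` can be split into `n` classes such that
distinct primes of the same class have coprime norms. The norm of a product of primes of a single
class determines the product, hence an ideal is determined by the `n`-tuple of norms of its parts in
the classes, whose product is the norm of the ideal. Consequently there are at most as many nonzero
ideals of norm at most `N` as `n`-tuples of positive integers of product at most `N`, that is, at
most `N (1 + log N) ^ (n - 1)`. By Minkowski, every ideal class contains an ideal of norm at most
`M = (4 / π) ^ r₂ * (n! / n ^ n) * √|d|`, so the class number is at most `M (1 + log M) ^ (n - 1)`.
-/

section Tuples

/-- The `k`-tuples of positive integers whose product is at most `N`. They are cut out of the box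
`[1, N] ^ k` in order to form a `Finset`. -/
def tuplesOfProdLE (k N : ℕ) : Finset (Fin k → ℕ) :=
  {f ∈ Fintype.piFinset fun _ ↦ Finset.Icc 1 N | ∏ i, f i ≤ N}

lemma mem_tuplesOfProdLE {k N : ℕ} {f : Fin k → ℕ} :
    f ∈ tuplesOfProdLE k N ↔ ∏ i, f i ≠ 0 ∧ ∏ i, f i ≤ N := by
  simp only [tuplesOfProdLE, Finset.mem_filter, Fintype.mem_piFinset, Finset.mem_Icc,
    Finset.prod_ne_zero_iff, Finset.mem_univ, true_imp_iff]
  refine and_congr_left fun hN ↦ ⟨fun h i ↦ Nat.one_le_iff_ne_zero.1 (h i).1,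
    fun h i ↦ ⟨Nat.one_le_iff_ne_zero.2 (h i), ?_⟩⟩
  have hpos : 0 < ∏ j, f j := Finset.prod_pos fun j _ ↦ Nat.pos_of_ne_zero (h j)
  exact (Nat.le_of_dvd hpos (Finset.dvd_prod_of_mem f (Finset.mem_univ i))).trans hN

lemma card_tuplesOfProdLE_succ_le (k N : ℕ) :
    (tuplesOfProdLE (k + 1) N).card ≤
      ∑ g ∈ Fintype.piFinset fun _ : Fin k ↦ Finset.Icc 1 N, N / ∏ i, g i := by
  have subset : tuplesOfProdLE (k + 1) N ⊆
      (Fintype.piFinset fun _ : Fin k ↦ Finset.Icc 1 N).biUnion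
        fun g ↦ (Finset.Icc 1 (N / ∏ i, g i)).image (Fin.cons · g) := by
    intro f hf
    obtain ⟨h0, hN⟩ := mem_tuplesOfProdLE.1 hf
    rw [Fin.prod_univ_succ] at h0 hN
    have head_mem : f 0 ∈ Finset.Icc 1 (N / ∏ i : Fin k, f i.succ) :=
      Finset.mem_Icc.2 ⟨Nat.one_le_iff_ne_zero.2 (left_ne_zero_of_mul h0),
        (Nat.le_div_iff_mul_le (Nat.pos_of_ne_zero (right_ne_zero_of_mul h0))).2 hN⟩
    have tail_mem : Fin.tail f ∈ Fintype.piFinset fun _ : Fin k ↦ Finset.Icc 1 N :=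
      Fintype.mem_piFinset.2 fun i ↦ Fintype.mem_piFinset.1 (Finset.mem_filter.1 hf).1 i.succ
    exact Finset.mem_biUnion.2
      ⟨_, tail_mem, Finset.mem_image.2 ⟨f 0, head_mem, Fin.cons_self_tail f⟩⟩
  refine (Finset.card_le_card subset).trans (Finset.card_biUnion_le.trans ?_)
  exact Finset.sum_le_sum fun g _ ↦ Finset.card_image_le.trans_eq (by simp)

lemma card_tuplesOfProdLE_succ_le_mul_pow_log (k N : ℕ) :
    ((tuplesOfProdLE (k + 1) N).card : ℝ) ≤ N * (1 + Real.log N) ^ k := by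
  calc ((tuplesOfProdLE (k + 1) N).card : ℝ)
      ≤ ∑ g ∈ Fintype.piFinset fun _ : Fin k ↦ Finset.Icc 1 N, ((N / ∏ i, g i : ℕ) : ℝ) :=
        mod_cast card_tuplesOfProdLE_succ_le k N
    _ ≤ ∑ g ∈ Fintype.piFinset fun _ : Fin k ↦ Finset.Icc 1 N, N * ∏ i, (g i : ℝ)⁻¹ :=
        Finset.sum_le_sum fun g _ ↦ Nat.cast_div_le.trans_eq <| by
          rw [Nat.cast_prod, div_eq_mul_inv, Finset.prod_inv_distrib]
    _ = N * (harmonic N : ℝ) ^ k := by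
        rw [← Finset.mul_sum, ← Finset.sum_pow' _ fun a : ℕ ↦ (a : ℝ)⁻¹, harmonic_eq_sum_Icc]
        push_cast
        rfl
    _ ≤ N * (1 + Real.log N) ^ k := by
        have : (0 : ℝ) ≤ harmonic N := by
          rw [harmonic_eq_sum_Icc]
          positivity
        gcongr
        exact harmonic_le_one_add_log N

end Tuples

section Multiset

lemma sum_filter_eq_self {α κ : Type*} [Fintype κ] [DecidableEq κ] (f : α → κ) (M : Multiset α) :
    ∑ i, M.filter (f · = i) = M := by
  classical
  ext a
  simp [Multiset.count_sum', Multiset.count_filter]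

lemma eq_of_prod_map_eq_of_pairwise_coprime {α : Type*} {f : α → ℕ} {s : Set α}
    (one_lt : ∀ a ∈ s, 1 < f a) (coprime : s.Pairwise (Nat.Coprime.onFun f)) {M N : Multiset α}
    (hM : ∀ a ∈ M, a ∈ s) (hN : ∀ a ∈ N, a ∈ s) (h : (M.map f).prod = (N.map f).prod) :
    M = N := by
  induction M using Multiset.induction_on generalizing N with
  | empty =>
    refine (Multiset.eq_zero_of_forall_notMem fun a ha ↦ (one_lt a (hN a ha)).ne' ?_).symm
    rw [← Nat.dvd_one, ← Multiset.prod_zero, ← Multiset.map_zero f, h]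
    exact Multiset.dvd_prod (Multiset.mem_map_of_mem f ha)
  | cons a M ih =>
    have ha : a ∈ s := hM a (Multiset.mem_cons_self a M)
    rw [Multiset.map_cons, Multiset.prod_cons] at h
    have mem : a ∈ N := by
      by_contra ha_notMem
      have coprime_prod : (f a).Coprime (N.map f).prod := by
        simp only [Nat.coprime_multiset_prod_right_iff, Multiset.forall_mem_map_iff]
        exact fun b hb ↦ coprime ha (hN b hb) fun hab ↦ ha_notMem (hab ▸ hb)
      exact (one_lt a ha).ne' (coprime_prod.eq_one_of_dvd (h ▸ dvd_mul_right _ _))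
    obtain ⟨N, rfl⟩ := Multiset.exists_cons_of_mem mem
    rw [Multiset.map_cons, Multiset.prod_cons] at h
    rw [ih (fun b hb ↦ hM b (Multiset.mem_cons_of_mem hb))
      (fun b hb ↦ hN b (Multiset.mem_cons_of_mem hb))
      (Nat.eq_of_mul_eq_mul_left (one_lt a ha).pos h)]

end Multiset

section Primes

variable {R : Type*} [CommRing R] [IsDomain R] (S : Type*) [CommRing S] [Algebra R S]
  [Module.Finite R S] [Module.Flat R S]

lemma ncard_primesOver_le_finrank (p : Ideal R) [p.IsPrime] :
    (p.primesOver S).ncard ≤ finrank R S := by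
  have := (Algebra.QuasiFinite.finite_primesOver (S := S) p).fintype
  calc (p.primesOver S).ncard = ∑ _q : p.primesOver S, 1 := by
        rw [← Nat.card_coe_set_eq, Nat.card_eq_fintype_card, Fintype.card_eq_sum_ones]
    _ ≤ ∑ q : p.primesOver S, q.1.ramificationIdx R * q.1.inertiaDeg R :=
        Finset.sum_le_sum fun q _ ↦ have : q.1.IsPrime := q.2.1
          Nat.mul_pos (q.1.ramificationIdx_pos R) (q.1.inertiaDeg_pos R)
    _ = finrank R S := p.sum_ramification_inertia_eq_finrank S

variable (R) in
lemma exists_fin_finrank_injOn_primesOver [Nontrivial S] :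
    ∃ ι : Ideal S → Fin (finrank R S), ∀ P Q : Ideal S, P.IsPrime → Q.IsPrime →
      P.under R = Q.under R → ι P = ι Q → P = Q := by
  have : NeZero (finrank R S) := ⟨finrank_pos.ne'⟩
  have exists_injOn (p : Ideal R) :
      ∃ e : Ideal S → Fin (finrank R S), p.IsPrime → (p.primesOver S).InjOn e := by
    by_cases hp : p.IsPrime
    · obtain ⟨e, -, he⟩ := Algebra.QuasiFinite.finite_primesOver (S := S) p
        |>.exists_injOn_of_encard_le (t := (Set.univ : Set (Fin (finrank R S)))) <| by
          rw [Set.encard_univ, ENat.card_eq_coe_fintype_card, Fintype.card_fin,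
            ← (Algebra.QuasiFinite.finite_primesOver (S := S) p).cast_ncard_eq]
          exact_mod_cast ncard_primesOver_le_finrank S p
      exact ⟨e, fun _ ↦ he⟩
    · exact ⟨0, fun h ↦ (hp h).elim⟩
  choose e he using exists_injOn
  refine ⟨fun P ↦ e (P.under R) P, fun P Q hP hQ hPQ h ↦
    he (P.under R) inferInstance ⟨hP, ⟨rfl⟩⟩ ⟨hQ, ⟨hPQ⟩⟩ ?_⟩
  simpa only [hPQ] using h

end Primes

section Norms

variable {S : Type*} [CommRing S] [IsDedekindDomain S] [Module.Free ℤ S]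

open UniqueFactorizationMonoid (normalizedFactors)

/-- The tuple whose `i`-th entry is the norm of the part of `I` composed of the prime ideals to
which `ι` assigns the index `i`. -/
noncomputable def normTuple {κ : Type*} [DecidableEq κ] (ι : Ideal S → κ) (I : Ideal S) (i : κ) :
    ℕ :=
  Ideal.absNorm ((normalizedFactors I).filter (ι · = i)).prod

lemma prod_normTuple {κ : Type*} [Fintype κ] [DecidableEq κ] (ι : Ideal S → κ) {I : Ideal S}
    (hI : I ≠ ⊥) : ∏ i, normTuple ι I i = Ideal.absNorm I := by
  simp only [normTuple]
  rw [← map_prod, ← Multiset.prod_sum, sum_filter_eq_self, Ideal.prod_normalizedFactors_eq_self hI]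

variable [Module.Finite ℤ S]

lemma coprime_absNorm_of_under_ne {P Q : Ideal S} [P.IsMaximal] [Q.IsMaximal]
    (h : P.under ℤ ≠ Q.under ℤ) : (Ideal.absNorm P).Coprime (Ideal.absNorm Q) := by
  have under_eq_span {I : Ideal S} [I.IsMaximal] {p : ℕ} (hp : p.Prime) (hpI : (p : S) ∈ I) :
      I.under ℤ = Ideal.span {(p : ℤ)} := by
    have hmax : (Ideal.span {(p : ℤ)}).IsMaximal :=
      PrincipalIdealRing.isMaximal_of_irreducible (Nat.prime_iff_prime_int.1 hp).irreducible
    refine (hmax.eq_of_le Ideal.IsPrime.ne_top' ?_).symm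
    rw [Ideal.span_singleton_le_iff_mem, Ideal.mem_comap]
    simpa using hpI
  obtain ⟨p, a, -, hpP, hp, hP⟩ := Ideal.exists_prime_and_absNorm_eq_pow P
  obtain ⟨q, b, -, hqQ, hq, hQ⟩ := Ideal.exists_prime_and_absNorm_eq_pow Q
  have hpq : p ≠ q := by
    rintro rfl
    exact h ((under_eq_span hp hpP).trans (under_eq_span hp hqQ).symm)
  rw [hP, hQ]
  exact Nat.coprime_pow_primes a b hp hq hpq

lemma normTuple_injOn {κ : Type*} [Finite κ] [DecidableEq κ] {ι : Ideal S → κ}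
    (hι : ∀ P Q : Ideal S, P.IsPrime → Q.IsPrime → P.under ℤ = Q.under ℤ → ι P = ι Q → P = Q) :
    Set.InjOn (normTuple ι) {I | I ≠ ⊥} := by
  have := Fintype.ofFinite κ
  intro I hI J hJ hIJ
  suffices ∀ i, (normalizedFactors I).filter (ι · = i) = (normalizedFactors J).filter (ι · = i) by
    rw [← Ideal.prod_normalizedFactors_eq_self hI, ← Ideal.prod_normalizedFactors_eq_self hJ,
      ← sum_filter_eq_self ι (normalizedFactors I), ← sum_filter_eq_self ι (normalizedFactors J)]
    simp only [this]
  intro i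
  let s : Set (Ideal S) := {P | Prime P ∧ ι P = i}
  have mem_s {I P : Ideal S} (hP : P ∈ (normalizedFactors I).filter (ι · = i)) : P ∈ s :=
    ⟨UniqueFactorizationMonoid.prime_of_normalized_factor P (Multiset.mem_of_mem_filter hP),
      (Multiset.mem_filter.1 hP).2⟩
  have isMaximal {P : Ideal S} (hP : P ∈ s) : P.IsMaximal :=
    (Ideal.isPrime_of_prime hP.1).isMaximal hP.1.ne_zero
  refine eq_of_prod_map_eq_of_pairwise_coprime (f := Ideal.absNorm) (s := s)
    (fun P hP ↦ ?_) (fun P hP Q hQ hPQ ↦ ?_) (fun P ↦ mem_s) (fun P ↦ mem_s) ?_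
  · exact Nat.one_lt_iff_ne_zero_and_ne_one.2 ⟨Ideal.absNorm_eq_zero_iff.not.2 hP.1.ne_zero,
      Ideal.absNorm_eq_one_iff.not.2 (isMaximal hP).ne_top⟩
  · have := isMaximal hP
    have := isMaximal hQ
    exact coprime_absNorm_of_under_ne fun hunder ↦ hPQ <|
      hι P Q inferInstance inferInstance hunder (hP.2.trans hQ.2.symm)
  · simpa only [normTuple, map_multiset_prod] using congrFun hIJ i

lemma ncard_absNorm_le (N : ℕ) :
    {I : Ideal S | I ≠ ⊥ ∧ Ideal.absNorm I ≤ N}.ncard ≤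
      N * (1 + Real.log N) ^ (finrank ℤ S - 1) := by
  obtain ⟨ι, hι⟩ := exists_fin_finrank_injOn_primesOver ℤ S
  obtain ⟨k, hk⟩ := Nat.exists_eq_succ_of_ne_zero (finrank_pos (R := ℤ) (M := S)).ne'
  have mapsTo : ∀ I ∈ {I : Ideal S | I ≠ ⊥ ∧ Ideal.absNorm I ≤ N},
      normTuple ι I ∈ (tuplesOfProdLE (finrank ℤ S) N : Set (Fin (finrank ℤ S) → ℕ)) := by
    rintro I ⟨hI, hIN⟩
    rw [SetLike.mem_coe, mem_tuplesOfProdLE, prod_normTuple ι hI]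
    exact ⟨Ideal.absNorm_eq_zero_iff.not.2 hI, hIN⟩
  have ncard_le := Set.ncard_le_ncard_of_injOn _ mapsTo ((normTuple_injOn hι).mono fun I hI ↦ hI.1)
  rw [Set.ncard_coe_finset, hk] at ncard_le
  rw [hk, Nat.succ_sub_one]
  exact (Nat.cast_le.2 ncard_le).trans (card_tuplesOfProdLE_succ_le_mul_pow_log k N)

end Norms

section ClassNumber

variable (K : Type*) [Field K] [NumberField K]

/-- Minkowski's bound `(4 / π) ^ r₂ * (n! / n ^ n) * √|d|` for the norm of an integral ideal in an
ideal class; `NumberField.minkowskiBound` is the covolume bound on convex bodies instead. -/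
noncomputable def minkowskiNormBound : ℝ :=
  (4 / Real.pi) ^ InfinitePlace.nrComplexPlaces K *
    ((finrank ℚ K).factorial / (finrank ℚ K : ℝ) ^ finrank ℚ K * √|(discr K : ℝ)|)

lemma exists_mk0_eq_and_absNorm_le_minkowskiNormBound (c : ClassGroup (𝓞 K)) :
    ∃ I : nonZeroDivisors (Ideal (𝓞 K)), ClassGroup.mk0 I = c ∧
      (Ideal.absNorm (I : Ideal (𝓞 K)) : ℝ) ≤ minkowskiNormBound K := by
  simpa only [minkowskiNormBound, Int.cast_abs] using exists_ideal_in_class_of_norm_le c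

lemma one_le_minkowskiNormBound : 1 ≤ minkowskiNormBound K := by
  obtain ⟨I, -, hI⟩ := exists_mk0_eq_and_absNorm_le_minkowskiNormBound K 1
  exact (Nat.one_le_cast.2 (Ideal.absNorm_pos_of_nonZeroDivisors I)).trans hI

lemma classNumber_le_ncard_absNorm_le :
    classNumber K ≤
      {I : Ideal (𝓞 K) | I ≠ ⊥ ∧ Ideal.absNorm I ≤ ⌊minkowskiNormBound K⌋₊}.ncard := by
  choose I mk0_I absNorm_I_le using exists_mk0_eq_and_absNorm_le_minkowskiNormBound K
  rw [classNumber, ← Nat.card_eq_fintype_card, ← Set.ncard_univ]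
  refine Set.ncard_le_ncard_of_injOn (fun c ↦ (I c : Ideal (𝓞 K)))
    (fun c _ ↦ ⟨nonZeroDivisors.coe_ne_zero (I c), Nat.le_floor (absNorm_I_le c)⟩)
    (fun c _ c' _ h ↦ ?_)
    ((Ideal.finite_setOfPred_absNorm_le _).subset fun J hJ ↦ hJ.2)
  rw [← mk0_I c, ← mk0_I c', Subtype.ext h]

theorem classNumber_le_minkowskiNormBound_mul_pow_log :
    (classNumber K : ℝ) ≤
      minkowskiNormBound K * (1 + Real.log (minkowskiNormBound K)) ^ (finrank ℚ K - 1) := by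
  have one_le := one_le_minkowskiNormBound K
  have floor_pos : (0 : ℝ) < ⌊minkowskiNormBound K⌋₊ := Nat.cast_pos.2 (Nat.floor_pos.2 one_le)
  have floor_le := Nat.floor_le (zero_le_one.trans one_le)
  have ncard_le := ncard_absNorm_le (S := 𝓞 K) ⌊minkowskiNormBound K⌋₊
  rw [RingOfIntegers.rank] at ncard_le
  refine (Nat.cast_le.2 (classNumber_le_ncard_absNorm_le K)).trans (ncard_le.trans ?_)
  have := Real.log_natCast_nonneg ⌊minkowskiNormBound K⌋₊
  gcongr

variable {K}

lemma minkowskiNormBound_le_of_finrank_eq_two (hK : finrank ℚ K = 2) :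
    minkowskiNormBound K ≤ 2 / Real.pi * √|(discr K : ℝ)| := by
  have nrComplexPlaces_le : InfinitePlace.nrComplexPlaces K ≤ 1 := by
    have := InfinitePlace.card_add_two_mul_card_eq_rank K
    omega
  have one_le : 1 ≤ 4 / Real.pi := (one_le_div Real.pi_pos).2 Real.pi_le_four
  calc minkowskiNormBound K
      = (4 / Real.pi) ^ InfinitePlace.nrComplexPlaces K * (1 / 2 * √|(discr K : ℝ)|) := by
        rw [minkowskiNormBound, hK]
        norm_num
    _ ≤ (4 / Real.pi) ^ 1 * (1 / 2 * √|(discr K : ℝ)|) := by gcongr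
    _ = 2 / Real.pi * √|(discr K : ℝ)| := by ring

theorem classNumber_le_of_imaginary_quadratic_general (hK : finrank ℚ K = 2) :
    (classNumber K : ℝ) ≤ √|(discr K : ℝ)| * Real.log |(discr K : ℝ)| := by
  have three_le : (3 : ℝ) ≤ |(discr K : ℝ)| := by
    have : 3 ≤ |discr K| := abs_discr_gt_two (by omega)
    exact_mod_cast this
  set D : ℝ := |(discr K : ℝ)|
  have one_le_log : 1 ≤ Real.log D :=
    (Real.le_log_iff_exp_le (by linarith)).2 (Real.exp_one_lt_three.le.trans three_le)
  have bound_le : minkowskiNormBound K ≤ 2 / 3 * √D :=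
    (minkowskiNormBound_le_of_finrank_eq_two hK).trans (by gcongr; exact Real.pi_gt_three.le)
  have one_le := one_le_minkowskiNormBound K
  have log_le : Real.log (minkowskiNormBound K) ≤ Real.log D / 2 := by
    rw [← Real.log_sqrt (by positivity)]
    exact Real.log_le_log (by linarith) (by linarith [Real.sqrt_nonneg D])
  have := Real.log_nonneg one_le
  calc (classNumber K : ℝ)
      ≤ minkowskiNormBound K * (1 + Real.log (minkowskiNormBound K)) := by
        simpa only [hK, Nat.add_one_sub_one, pow_one] using
          classNumber_le_minkowskiNormBound_mul_pow_log K
    _ ≤ 2 / 3 * √D * (1 + Real.log D / 2) := by gcongr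
    _ ≤ 2 / 3 * √D * (Real.log D + Real.log D / 2) := by gcongr
    _ = √D * Real.log D := by ring

end ClassNumber

/-- There exists a universal constant `C > 0` such that for every imaginary
quadratic number field `K`, the class number satisfies
`h_K ≤ C · √|d_K| · log|d_K|`. -/
theorem classNumber_le_of_imaginary_quadratic :
    ∃ C : ℝ, 0 < C ∧
      ∀ (K : Type) [Field K] [NumberField K],
        finrank ℚ K = 2 → IsEmpty (K →+* ℝ) →
        (classNumber K : ℝ) ≤ C * Real.sqrt |(discr K : ℝ)| * Real.log |(discr K : ℝ)| := by
  exact ⟨1, one_pos, fun K _ _ hK _ ↦ by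
    simpa only [one_mul] using classNumber_le_of_imaginary_quadratic_general hK⟩
end

section
/- Let K be an imaginary quadratic number field with ring of integers 𝓞_K and class number h_K. Let c ≥ 1 be an integer and let O = ℤ + c𝓞_K = {a + c·x : a ∈ ℤ, x ∈ 𝓞_K}, a subring of 𝓞_K (the order of conductor c in K). Let h_O be the cardinality of the class group of O (invertible fractional O-ideals modulo principal ones), and let u = [𝓞_K^× : O^×] be the index of the unit group of O in that of 𝓞_K. For a prime number p, let χ(p) = 1 if p𝓞_K is a product of two distinct prime ideals, χ(p) = −1 if p𝓞_K is a prime ideal, and χ(p) = 0 if p𝓞_K is the square of a prime ideal. Then h_O · u · ∏_{p prime, p ∣ c} p = h_K · c · ∏_{p prime, p ∣ c} (p − χ(p)); in particular h_O is finite. -/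
open NumberField Module

/-- The order `O = ℤ + c·𝓞_K` of conductor `c` in a number field `K`,
as a subring of the ring of integers `𝓞_K`. -/
def condOrder (K : Type*) [Field K] [NumberField K] (c : ℕ) : Subring (𝓞 K) where
  carrier := {z | ∃ (a : ℤ) (x : 𝓞 K), z = (a : 𝓞 K) + (c : 𝓞 K) * x}
  zero_mem' := ⟨0, 0, by simp⟩
  one_mem' := ⟨1, 0, by simp⟩
  add_mem' := by
    rintro z w ⟨a, x, rfl⟩ ⟨b, y, rfl⟩
    exact ⟨a + b, x + y, by push_cast; ring⟩
  neg_mem' := by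
    rintro z ⟨a, x, rfl⟩
    exact ⟨-a, -x, by push_cast; ring⟩
  mul_mem' := by
    rintro z w ⟨a, x, rfl⟩ ⟨b, y, rfl⟩
    exact ⟨a * b, (a : 𝓞 K) * y + (b : 𝓞 K) * x + (c : 𝓞 K) * (x * y), by push_cast; ring⟩

/-!
Let `𝔣` be an ideal of `R` contained in a subring `A`. Invertible `A`-submodules of `R` contain
`𝔣`, and reduction modulo `𝔣` identifies them with the invertible `A`-submodules of `R ⧸ 𝔣`. The
exact sequence `1 → Aˣ → Rˣ → (Submodule A R)ˣ → Pic A → Pic R`, used once for `R` and once for the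
finite ring `R ⧸ 𝔣`, whose subrings have trivial Picard group, then computes the kernel of
`Pic A → Pic R`. This map is onto: an invertible `R`-module `I` is generated modulo `𝔣 I` by a
single element `u`, and `u A + 𝔣 I` is an invertible `A`-module extending to `I`. It remains to
count units in `ℤ / c` and in `𝓞 K / c`; the latter reduces to `𝓞 K / p` for `p ∣ c`, since
`#(R ⧸ I)ˣ / #(R ⧸ I)` depends only on the radical of `I`.
-/

/-! ### Picard groups and the conductor -/

section RelPic

open CommRing Submodule

theorem card_relPic_mul_index (A R : Type*) [CommRing A] [CommRing R] [Algebra A R]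
    [FaithfulSMul A R] :
    Nat.card (relPic A R) * (Units.map (algebraMap A R).toMonoidHom).range.index =
      Nat.card (Submodule A R)ˣ := by
  rw [← Nat.card_congr (unitsQuotEquivRelPic A R).toEquiv, ← ker_unitsMap_spanSingleton,
    Subgroup.index_ker, mul_comm]
  exact Subgroup.card_mul_index _

theorem card_units_submodule_mul_card_units (A R : Type*) [CommRing A] [CommRing R] [Algebra A R]
    [FaithfulSMul A R] [Subsingleton (Pic A)] :
    Nat.card (Submodule A R)ˣ * Nat.card Aˣ = Nat.card Rˣ := by
  have hinj : Function.Injective (Units.map (algebraMap A R).toMonoidHom) :=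
    Units.map_injective (FaithfulSMul.algebraMap_injective A R)
  rw [← card_relPic_mul_index, Nat.card_unique, one_mul, mul_comm,
    Nat.card_congr (MonoidHom.ofInjective hinj).toEquiv, Subgroup.card_mul_index]

end RelPic

section Bot

variable (A R : Type*) [CommRing A] [CommRing R] [Algebra A R]

/-- Submodules over the image of `A` in `R` are the same as `A`-submodules. This replaces `A` by a
ring acting faithfully on `R`. -/
def submoduleBotEquiv : Submodule (⊥ : Subalgebra A R) R ≃* Submodule A R where
  toFun := Submodule.restrictScalars A
  invFun N :=
    { N with
      smul_mem' := by
        rintro ⟨_, hb⟩ x hx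
        obtain ⟨a, rfl⟩ := Algebra.mem_bot.mp hb
        simpa [Subalgebra.smul_def, Algebra.smul_def] using N.smul_mem a hx }
  left_inv _ := rfl
  right_inv _ := rfl
  map_mul' _ _ := Submodule.restrictScalars_mul

end Bot

section Conductor

variable {A R : Type*} [CommRing A] [CommRing R] [Algebra A R] {𝔣 : Ideal R}

theorem restrictScalars_ideal_mul_le (N : Submodule A R) :
    𝔣.restrictScalars A * N ≤ 𝔣.restrictScalars A :=
  Submodule.mul_le.mpr fun _ hx _ _ => 𝔣.mul_mem_right _ hx

theorem restrictScalars_ideal_le_of_mul_eq_one (h𝔣 : 𝔣.restrictScalars A ≤ 1)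
    {I J : Submodule A R} (hIJ : I * J = 1) : 𝔣.restrictScalars A ≤ I :=
  calc 𝔣.restrictScalars A = 𝔣.restrictScalars A * J * I := by
        rw [mul_assoc, mul_comm J, hIJ, mul_one]
    _ ≤ 1 * I := mul_le_mul_left ((restrictScalars_ideal_mul_le J).trans h𝔣) I
    _ = I := one_mul I

theorem ker_mkₐ_eq_restrictScalars :
    LinearMap.ker (Ideal.Quotient.mkₐ A 𝔣).toLinearMap = 𝔣.restrictScalars A := by
  ext x
  simp [Ideal.Quotient.eq_zero_iff_mem]

theorem le_mul_of_one_le_mul_sup {φ I J : Submodule A R} (hI : φ * I ≤ I) (hφ : φ * φ ≤ I * J)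
    (h : 1 ≤ I * J ⊔ φ) : φ ≤ I * J :=
  calc φ ≤ φ * (I * J ⊔ φ) := le_mul_of_one_le_right' h
    _ = φ * I * J ⊔ φ * φ := by rw [Submodule.mul_sup, mul_assoc]
    _ ≤ I * J := sup_le (mul_le_mul_left hI J) hφ

theorem unitsMap_mapHom_mkₐ_injective (h𝔣 : 𝔣.restrictScalars A ≤ 1) :
    Function.Injective
      (Units.map (Submodule.mapHom (Ideal.Quotient.mkₐ A 𝔣)).toMonoidHom) := by
  have comap_map (I : (Submodule A R)ˣ) :
      ((I : Submodule A R).map (Ideal.Quotient.mkₐ A 𝔣).toLinearMap).comap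
        (Ideal.Quotient.mkₐ A 𝔣).toLinearMap = I := by
    rw [Submodule.comap_map_eq, ker_mkₐ_eq_restrictScalars, sup_eq_left]
    exact restrictScalars_ideal_le_of_mul_eq_one h𝔣 I.mul_inv
  intro I J hIJ
  ext1
  rw [← comap_map I, ← comap_map J]
  exact congrArg (Submodule.comap _) (Units.ext_iff.mp hIJ)

theorem comap_mkₐ_mul_comap_mkₐ (h𝔣 : 𝔣.restrictScalars A ≤ 1) {M N : Submodule A (R ⧸ 𝔣)}
    (hMN : M * N = 1) :
    M.comap (Ideal.Quotient.mkₐ A 𝔣).toLinearMap * N.comap (Ideal.Quotient.mkₐ A 𝔣).toLinearMap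
      = 1 := by
  set q := (Ideal.Quotient.mkₐ A 𝔣).toLinearMap with hq
  have hqs : Function.Surjective q := Ideal.Quotient.mkₐ_surjective A 𝔣
  have le_comap (L : Submodule A (R ⧸ 𝔣)) : 𝔣.restrictScalars A ≤ L.comap q :=
    ker_mkₐ_eq_restrictScalars.ge.trans (Submodule.comap_mono bot_le)
  have hsup : M.comap q * N.comap q ⊔ 𝔣.restrictScalars A = 1 ⊔ 𝔣.restrictScalars A := by
    rw [← ker_mkₐ_eq_restrictScalars, ← Submodule.comap_map_eq, ← Submodule.comap_map_eq, hq,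
      Submodule.map_mul, ← hq, Submodule.map_comap_eq_of_surjective hqs,
      Submodule.map_comap_eq_of_surjective hqs, hMN, Submodule.map_one]
  have hle := le_mul_of_one_le_mul_sup ((restrictScalars_ideal_mul_le _).trans (le_comap M))
    (mul_le_mul' (le_comap M) (le_comap N)) (hsup ▸ le_sup_left)
  rwa [sup_eq_left.mpr hle, sup_eq_left.mpr h𝔣] at hsup

theorem unitsMap_mapHom_mkₐ_surjective (h𝔣 : 𝔣.restrictScalars A ≤ 1) :
    Function.Surjective
      (Units.map (Submodule.mapHom (Ideal.Quotient.mkₐ A 𝔣)).toMonoidHom) := fun N =>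
  ⟨⟨_, _, comap_mkₐ_mul_comap_mkₐ h𝔣 N.mul_inv, comap_mkₐ_mul_comap_mkₐ h𝔣 N.inv_mul⟩,
    Units.ext (Submodule.map_comap_eq_of_surjective (Ideal.Quotient.mkₐ_surjective A 𝔣) _)⟩

theorem card_units_submodule_mul_card_units_bot
    [Subsingleton (CommRing.Pic (⊥ : Subalgebra A (R ⧸ 𝔣)))] (h𝔣 : 𝔣.restrictScalars A ≤ 1) :
    Nat.card (Submodule A R)ˣ * Nat.card (⊥ : Subalgebra A (R ⧸ 𝔣))ˣ = Nat.card (R ⧸ 𝔣)ˣ := by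
  rw [Nat.card_congr (Equiv.ofBijective _
      ⟨unitsMap_mapHom_mkₐ_injective h𝔣, unitsMap_mapHom_mkₐ_surjective h𝔣⟩),
    ← Nat.card_congr (Units.mapEquiv (submoduleBotEquiv A (R ⧸ 𝔣))).toEquiv]
  exact card_units_submodule_mul_card_units _ _

end Conductor

section PicSurjective

open CommRing TensorProduct

theorem exists_span_singleton_sup_smul_top_eq_top {R : Type*} [CommRing R] (𝔞 : Ideal R)
    [Subsingleton (Pic (R ⧸ 𝔞))] (M : Type*) [AddCommGroup M] [Module R M]
    [Module.Invertible R M] :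
    ∃ u : M, Submodule.span R {u} ⊔ 𝔞 • ⊤ = ⊤ := by
  obtain ⟨e⟩ := (Invertible.free_iff_linearEquiv (R := R ⧸ 𝔞)
    (M := (R ⧸ 𝔞) ⊗[R] M)).mp inferInstance
  let e' : (M ⧸ (𝔞 • ⊤ : Submodule R M)) ≃ₗ[R] R ⧸ 𝔞 :=
    (quotTensorEquivQuotSMul M 𝔞).symm ≪≫ₗ e.restrictScalars R
  obtain ⟨u, hu⟩ := Submodule.mkQ_surjective _ (e'.symm 1)
  refine ⟨u, eq_top_iff.mpr fun x _ => ?_⟩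
  obtain ⟨r, hr⟩ := Ideal.Quotient.mk_surjective (e' (Submodule.mkQ _ x))
  have hx : Submodule.mkQ (𝔞 • ⊤ : Submodule R M) x = Submodule.mkQ _ (r • u) := by
    apply e'.injective
    rw [map_smul, map_smul, hu, e'.apply_symm_apply, ← hr, Algebra.smul_def, mul_one]
    rfl
  rw [Submodule.mkQ_apply, Submodule.mkQ_apply, Submodule.Quotient.eq] at hx
  exact Submodule.mem_sup.mpr ⟨_, Submodule.smul_mem _ r (Submodule.mem_span_singleton_self u), _,
    hx, add_sub_cancel _ _⟩

theorem exists_mul_add_algebraMap_eq_one {R S : Type*} [CommRing R] [CommRing S] [Algebra R S]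
    [FaithfulSMul R S] (𝔞 : Ideal R) [Subsingleton (Pic (R ⧸ 𝔞))] (I : (Submodule R S)ˣ) :
    ∃ u ∈ I.val, ∃ v ∈ I⁻¹.val, ∃ a ∈ 𝔞, u * v + algebraMap R S a = 1 := by
  obtain ⟨u, hu⟩ := exists_span_singleton_sup_smul_top_eq_top 𝔞 I.val
  have hI : Submodule.span R {u.val} ⊔ 𝔞 • I.val = I := by
    simpa [Submodule.map_sup, Submodule.map_span, Submodule.map_smul'', -map_smul] using
      congrArg (Submodule.map I.val.subtype) hu
  have hone : Submodule.span R {u.val} * I⁻¹.val ⊔ 𝔞 • 1 = 1 := by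
    rw [← I.mul_inv, ← smul_mul_assoc, ← Submodule.sup_mul, hI]
  obtain ⟨_, huv, _, ha, h⟩ := Submodule.mem_sup.mp (hone.ge (Submodule.one_le.mp le_rfl))
  obtain ⟨v, hv, rfl⟩ := Submodule.mem_span_singleton_mul.mp huv
  rw [← Algebra.algebraMap_eq_smul_one] at ha
  obtain ⟨a, ha, rfl⟩ := ha
  exact ⟨u, u.2, v, hv, a, ha, h⟩

section Lift

variable {A R S : Type*} [CommRing A] [CommRing R] [CommRing S] [Algebra A R] [Algebra R S]
  [Algebra A S] [IsScalarTower A R S] {𝔣 : Ideal R}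

variable (A) in
/-- `u A + 𝔣 I`. For `𝔣` inside the image of `A`, `I` invertible and `u` a generator of `I`
modulo `𝔣 I`, it is an invertible `A`-submodule of `S` whose `R`-span is `I`. -/
def conductorLift (𝔣 : Ideal R) (I : Submodule R S) (u : S) : Submodule A S :=
  Submodule.span A {u} ⊔ (𝔣 • I).restrictScalars A

theorem mem_conductorLift (I : Submodule R S) (u : S) : u ∈ conductorLift A 𝔣 I u :=
  Submodule.mem_sup_left (Submodule.mem_span_singleton_self u)

theorem conductorLift_le {I : Submodule R S} {u : S} (hu : u ∈ I) :
    conductorLift A 𝔣 I u ≤ I.restrictScalars A :=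
  sup_le (Submodule.span_singleton_le_iff_mem _ _ |>.mpr hu)
    (Submodule.restrictScalars_mono _ Submodule.smul_le_right)

theorem smul_one_restrictScalars_le_one (h𝔣 : 𝔣.restrictScalars A ≤ 1) :
    (𝔣 • (1 : Submodule R S)).restrictScalars A ≤ 1 := by
  rw [← Algebra.algebraMap_eq_smul_one]
  rintro _ ⟨x, hx, rfl⟩
  obtain ⟨a, rfl⟩ := Submodule.mem_one.mp (h𝔣 hx)
  exact Submodule.mem_one.mpr ⟨a, IsScalarTower.algebraMap_apply A R S a⟩

theorem restrictScalars_smul_mul_restrictScalars {I J : Submodule R S} (hIJ : I * J = 1) :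
    (𝔣 • I).restrictScalars A * J.restrictScalars A =
      (𝔣 • 1 : Submodule R S).restrictScalars A := by
  rw [← Submodule.restrictScalars_mul, smul_mul_assoc, hIJ]

theorem conductorLift_mul_le_one (h𝔣 : 𝔣.restrictScalars A ≤ 1) {I J : Submodule R S}
    (hIJ : I * J = 1) {u v : S} (hu : u ∈ I) (hv : v ∈ J) (huv : u * v ∈ (1 : Submodule A S)) :
    conductorLift A 𝔣 I u * conductorLift A 𝔣 J v ≤ 1 := by
  have h𝔣S := smul_one_restrictScalars_le_one (S := S) h𝔣
  have hleft : conductorLift A 𝔣 I u * (𝔣 • J).restrictScalars A ≤ 1 :=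
    (mul_le_mul_left (conductorLift_le hu) _).trans <| by
      rwa [mul_comm, restrictScalars_smul_mul_restrictScalars (mul_comm I J ▸ hIJ)]
  have hvJ : Submodule.span A {v} ≤ J.restrictScalars A :=
    (Submodule.span_singleton_le_iff_mem _ _).mpr hv
  have hright : (𝔣 • I).restrictScalars A * Submodule.span A {v} ≤ 1 :=
    (mul_le_mul_right hvJ _).trans (by rwa [restrictScalars_smul_mul_restrictScalars hIJ])
  refine (Submodule.mul_sup ..).trans_le (sup_le ?_ hleft)
  rw [conductorLift, Submodule.sup_mul, Submodule.span_mul_span, Set.singleton_mul_singleton,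
    sup_le_iff, Submodule.span_singleton_le_iff_mem]
  exact ⟨huv, hright⟩

theorem conductorLift_mul_conductorLift (h𝔣 : 𝔣.restrictScalars A ≤ 1) {I J : Submodule R S}
    (hIJ : I * J = 1) {u v : S} (hu : u ∈ I) (hv : v ∈ J) {a : R} (ha : a ∈ 𝔣)
    (huv : u * v + algebraMap R S a = 1) :
    conductorLift A 𝔣 I u * conductorLift A 𝔣 J v = 1 := by
  set φ := (𝔣 • 1 : Submodule R S).restrictScalars A with hφ
  have hφ1 : φ ≤ 1 := smul_one_restrictScalars_le_one h𝔣
  have haφ : algebraMap R S a ∈ φ := by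
    rw [hφ, ← Algebra.algebraMap_eq_smul_one]
    exact ⟨a, ha, rfl⟩
  have hmul : conductorLift A 𝔣 I u * conductorLift A 𝔣 J v ⊔ φ = 1 := by
    refine le_antisymm (sup_le (conductorLift_mul_le_one h𝔣 hIJ hu hv ?_) hφ1) ?_
    · rw [eq_sub_of_add_eq huv]
      exact sub_mem (Submodule.one_le.mp le_rfl) (hφ1 haφ)
    · rw [Submodule.one_le, ← huv]
      exact add_mem (Submodule.mem_sup_left (Submodule.mul_mem_mul (mem_conductorLift _ _)
        (mem_conductorLift _ _))) (Submodule.mem_sup_right haφ)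
  have hφI : φ * conductorLift A 𝔣 I u ≤ conductorLift A 𝔣 I u :=
    calc φ * conductorLift A 𝔣 I u ≤ φ * I.restrictScalars A :=
          mul_le_mul_right (conductorLift_le hu) _
      _ = (𝔣 • I).restrictScalars A := by
        rw [hφ, ← Submodule.restrictScalars_mul, smul_mul_assoc, one_mul]
      _ ≤ conductorLift A 𝔣 I u := le_sup_right
  have hφφ : φ * φ ≤ conductorLift A 𝔣 I u * conductorLift A 𝔣 J v :=
    calc φ * φ = (𝔣 • I).restrictScalars A * (𝔣 • J).restrictScalars A := by
          rw [← Submodule.restrictScalars_mul, ← Submodule.restrictScalars_mul, smul_mul_smul_comm,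
            smul_mul_smul_comm, hIJ, mul_one]
      _ ≤ _ := mul_le_mul' le_sup_right le_sup_right
  rwa [sup_eq_left.mpr (le_mul_of_one_le_mul_sup hφI hφφ hmul.ge)] at hmul

theorem span_conductorLift_eq {I J : Submodule R S} (hIJ : I * J = 1) {u v : S} (hu : u ∈ I)
    (hv : v ∈ J) {a : R} (ha : a ∈ 𝔣) (huv : u * v + algebraMap R S a = 1) :
    Submodule.span R (conductorLift A 𝔣 I u : Set S) = I := by
  refine le_antisymm (Submodule.span_le.mpr (conductorLift_le hu)) fun x hx => ?_
  obtain ⟨r, hr⟩ := Submodule.mem_one.mp (hIJ.le (Submodule.mul_mem_mul hx hv))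
  have hxeq : r • u + a • x = x := by
    rw [Algebra.smul_def, Algebra.smul_def, hr]
    linear_combination x * huv
  have hax : a • x ∈ 𝔣 • I := Submodule.smul_mem_smul ha hx
  rw [← hxeq]
  refine add_mem (Submodule.smul_mem _ r (Submodule.subset_span (mem_conductorLift I u))) ?_
  exact Submodule.subset_span (Submodule.mem_sup_right ((Submodule.restrictScalars_mem ..).mpr hax))

open Submodule in
theorem mapAlgebra_unitsToPic [FaithfulSMul A S] [FaithfulSMul R S] {I' : (Submodule A S)ˣ}
    {I : (Submodule R S)ˣ} (h : span R (I' : Set S) = I) :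
    Pic.mapAlgebra A R (unitsToPic A S I') = unitsToPic R S I := by
  have hle : I'.val ≤ I.val.restrictScalars A := fun x hx => h.le (subset_span hx)
  let f : R ⊗[A] I' →ₗ[R] I := (inclusion hle).liftBaseChange R
  have hspan : span R (I' : Set S) ≤ (LinearMap.range f).map I.val.subtype :=
    span_le.mpr fun x hx => ⟨f (1 ⊗ₜ ⟨x, hx⟩), ⟨_, rfl⟩, one_smul R x⟩
  have hf : Function.Surjective f := fun y => by
    obtain ⟨_, ⟨z, rfl⟩, hz⟩ := hspan (h.ge y.2)
    exact ⟨z, Subtype.ext hz⟩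
  exact Pic.mk_eq_mk_iff.mpr ⟨AlgebraTensorModule.congr (.refl ..) (unitsToPicEquiv I') ≪≫ₗ
    .ofBijective f (Invertible.bijective_of_surjective hf)⟩

variable (S) in
theorem relPic_le_range_mapAlgebra [FaithfulSMul A S] [FaithfulSMul R S]
    [Subsingleton (Pic (R ⧸ 𝔣))] (h𝔣 : 𝔣.restrictScalars A ≤ 1) :
    relPic R S ≤ (Pic.mapAlgebra A R).range := by
  rw [← Submodule.range_unitsToPic]
  rintro _ ⟨I, rfl⟩
  obtain ⟨u, hu, v, hv, a, ha, huv⟩ := exists_mul_add_algebraMap_eq_one 𝔣 I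
  have hmul := conductorLift_mul_conductorLift h𝔣 I.mul_inv hu hv ha huv
  exact ⟨_, mapAlgebra_unitsToPic (I' := .mkOfMulEqOne _ _ hmul)
    (span_conductorLift_eq I.mul_inv hu hv ha huv)⟩

end Lift

theorem mapAlgebra_surjective {A R : Type*} [CommRing A] [CommRing R] [Algebra A R]
    [FaithfulSMul A R] {𝔣 : Ideal R} [Subsingleton (Pic (R ⧸ 𝔣))]
    [Subsingleton (Pic (FractionRing R))] (h𝔣 : 𝔣.restrictScalars A ≤ 1) :
    Function.Surjective (Pic.mapAlgebra A R) := by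
  have : FaithfulSMul A (FractionRing R) := .trans A R _
  rw [← MonoidHom.range_eq_top, eq_top_iff, ← relPic_eq_top R (FractionRing R)]
  exact relPic_le_range_mapAlgebra _ h𝔣

end PicSurjective

section ClassNumber

open CommRing

variable {A R : Type*} [CommRing A] [CommRing R] [Algebra A R] [FaithfulSMul A R] {𝔣 : Ideal R}
  [Finite (R ⧸ 𝔣)]

theorem card_pic_mul_index_mul_card_units [Subsingleton (Pic (FractionRing R))]
    (h𝔣 : 𝔣.restrictScalars A ≤ 1) :
    Nat.card (Pic A) * (Units.map (algebraMap A R).toMonoidHom).range.index *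
        Nat.card (⊥ : Subalgebra A (R ⧸ 𝔣))ˣ =
      Nat.card (Pic R) * Nat.card (R ⧸ 𝔣)ˣ := by
  have hpic : Nat.card (Pic A) = Nat.card (Pic R) * Nat.card (relPic A R) := by
    rw [← Subgroup.index_mul_card (relPic A R), relPic, Subgroup.index_ker,
      MonoidHom.range_eq_top.mpr (mapAlgebra_surjective h𝔣), Subgroup.card_top]
  rw [hpic, mul_assoc (Nat.card (Pic R)), card_relPic_mul_index, mul_assoc,
    card_units_submodule_mul_card_units_bot h𝔣]

theorem card_classGroup_mul_index_mul_card_units [IsDomain A] [IsDomain R]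
    (h𝔣 : 𝔣.restrictScalars A ≤ 1) :
    Nat.card (ClassGroup A) * (Units.map (algebraMap A R).toMonoidHom).range.index *
        Nat.card (⊥ : Subalgebra A (R ⧸ 𝔣))ˣ =
      Nat.card (ClassGroup R) * Nat.card (R ⧸ 𝔣)ˣ := by
  rw [Nat.card_congr (ClassGroup.equivPic A).toEquiv,
    Nat.card_congr (ClassGroup.equivPic R).toEquiv, card_pic_mul_index_mul_card_units h𝔣]

end ClassNumber

/-! ### Units of quotient rings -/

section UnitsQuotient

variable {R : Type*} [CommRing R] {I J : Ideal R}

theorem card_units_eq_of_isNilpotent (hI : IsNilpotent I) :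
    Nat.card Rˣ = Nat.card I * Nat.card (R ⧸ I)ˣ := by
  have isUnit_of_mk {x : R} : IsUnit (Ideal.Quotient.mk I x) → IsUnit x :=
    (IsNilpotent.isUnit_quotient_mk_iff hI).mp
  set π := Units.map (Ideal.Quotient.mk I).toMonoidHom
  have hsurj : Function.Surjective π :=
    IsLocalRing.surjective_units_map_of_local_ringHom _ Ideal.Quotient.mk_surjective
      ⟨fun _ => isUnit_of_mk⟩
  have mem_ker (u : Rˣ) : u ∈ π.ker ↔ (u : R) - 1 ∈ I := by
    rw [MonoidHom.mem_ker, ← Ideal.Quotient.eq, map_one, Units.ext_iff]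
    rfl
  have isUnit_one_add (i : I) : IsUnit (1 + i : R) :=
    isUnit_of_mk (by simp [Ideal.Quotient.eq_zero_iff_mem.mpr i.2])
  let e : π.ker ≃ I :=
    { toFun u := ⟨(u : Rˣ) - 1, (mem_ker u).mp u.2⟩
      invFun i := ⟨(isUnit_one_add i).unit, (mem_ker _).mpr (by simp)⟩
      left_inv u := Subtype.ext (Units.ext (by simp))
      right_inv i := Subtype.ext (by simp) }
  rw [← Subgroup.card_mul_index π.ker, Nat.card_congr e, Subgroup.index_ker,
    MonoidHom.range_eq_top.mpr hsurj, Subgroup.card_top]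

theorem card_units_quotient_mul_card_quotient (hIJ : I ≤ J) {n : ℕ} (hn : J ^ n ≤ I) :
    Nat.card (R ⧸ I)ˣ * Nat.card (R ⧸ J) = Nat.card (R ⧸ I) * Nat.card (R ⧸ J)ˣ := by
  have hnil : IsNilpotent (J.map (Ideal.Quotient.mk I)) :=
    ⟨n, by rwa [← Ideal.map_pow, Ideal.zero_eq_bot, Ideal.map_eq_bot_iff_le_ker, Ideal.mk_ker]⟩
  let e : ((R ⧸ I) ⧸ J.map (Ideal.Quotient.mk I)) ≃+* R ⧸ J :=
    DoubleQuot.quotQuotEquivQuotOfLE hIJ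
  rw [card_units_eq_of_isNilpotent hnil,
    Submodule.card_eq_card_quotient_mul_card (J.map (Ideal.Quotient.mk I)),
    Nat.card_congr (Units.mapEquiv e.toMulEquiv).toEquiv, Nat.card_congr e.toEquiv]
  ring

theorem card_units_quotient_mul (h : IsCoprime I J) :
    Nat.card (R ⧸ I * J)ˣ = Nat.card (R ⧸ I)ˣ * Nat.card (R ⧸ J)ˣ := by
  rw [Nat.card_congr (Units.mapEquiv (Ideal.quotientMulEquivQuotientProd I J h).toMulEquiv).toEquiv,
    Nat.card_congr MulEquiv.prodUnits.toEquiv, Nat.card_prod]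

theorem card_units_quotient_prod {ι : Type*} {s : Finset ι} {I : ι → Ideal R}
    (h : (s : Set ι).Pairwise (Function.onFun IsCoprime I)) :
    Nat.card (R ⧸ ∏ i ∈ s, I i)ˣ = ∏ i ∈ s, Nat.card (R ⧸ I i)ˣ := by
  classical
  induction s using Finset.induction_on with
  | empty =>
    rw [Finset.prod_empty, Finset.prod_empty, Ideal.one_eq_top]
    exact Nat.card_unique
  | insert i s hi ih =>
    have hcoprime : IsCoprime (I i) (∏ j ∈ s, I j) := IsCoprime.prod_right fun j hj =>
      h (Finset.mem_insert_self i s) (Finset.mem_insert_of_mem hj) (ne_of_mem_of_not_mem hj hi).symm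
    rw [Finset.prod_insert hi, Finset.prod_insert hi, card_units_quotient_mul hcoprime,
      ih (h.mono (Finset.coe_subset.mpr (Finset.subset_insert i s)))]

end UnitsQuotient

section NatCast

open Ideal

variable {R : Type*} [CommRing R] [IsDedekindDomain R] [Module.Free ℤ R] [Module.Finite ℤ R]

theorem card_quotient_span_natCast (n : ℕ) :
    Nat.card (R ⧸ span {(n : R)}) = n ^ finrank ℤ R := by
  rw [← absNorm_span_natCast, absNorm_apply, Submodule.cardQuot_apply]

variable (R) in
theorem finite_quotient_span_natCast (n : ℕ) [NeZero n] : Finite (R ⧸ span {(n : R)}) :=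
  Nat.finite_of_card_ne_zero (card_quotient_span_natCast (R := R) n ▸ NeZero.ne _)

theorem card_units_quotient_span_natCast_mul {n : ℕ} (hn : n ≠ 0) :
    Nat.card (R ⧸ span {(n : R)})ˣ * (∏ p ∈ n.primeFactors, p) ^ finrank ℤ R =
      n ^ finrank ℤ R * ∏ p ∈ n.primeFactors, Nat.card (R ⧸ span {(p : R)})ˣ := by
  have hprod : span {((∏ p ∈ n.primeFactors, p : ℕ) : R)} =
      ∏ p ∈ n.primeFactors, span {(p : R)} := by
    rw [Nat.cast_prod, prod_span_singleton]
  have hcoprime : (n.primeFactors : Set ℕ).Pairwise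
      (Function.onFun IsCoprime fun p => span {(p : R)}) := fun p hp q hq hpq =>
    (isCoprime_span_singleton_iff _ _).mpr <| Nat.Coprime.cast <|
      (Nat.coprime_primes (Nat.prime_of_mem_primeFactors hp) (Nat.prime_of_mem_primeFactors hq)).mpr
        hpq
  have hle : span {(n : R)} ≤ span {((∏ p ∈ n.primeFactors, p : ℕ) : R)} :=
    span_singleton_le_span_singleton.mpr (Nat.cast_dvd_cast (Nat.prod_primeFactors_dvd n))
  have hpow : span {((∏ p ∈ n.primeFactors, p : ℕ) : R)} ^ n ≤ span {(n : R)} := by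
    rw [span_singleton_pow, ← Nat.cast_pow]
    exact span_singleton_le_span_singleton.mpr
      (Nat.cast_dvd_cast (Nat.dvd_prod_primeFactors_pow_self hn))
  rw [← card_units_quotient_prod hcoprime, ← hprod, ← card_quotient_span_natCast,
    ← card_quotient_span_natCast, card_units_quotient_mul_card_quotient hle hpow]

theorem card_units_quotient_of_isPrime {P : Ideal R} (hP : P.IsPrime) (hP0 : absNorm P ≠ 0) :
    (Nat.card (R ⧸ P)ˣ : ℤ) = absNorm P - 1 := by
  have hcard : Nat.card (R ⧸ P) = absNorm P := by rw [absNorm_apply, Submodule.cardQuot_apply]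
  have : Finite (R ⧸ P) := Nat.finite_of_card_ne_zero (hcard ▸ hP0)
  have : P.IsMaximal := hP.isMaximal (by rintro rfl; exact hP0 absNorm_bot)
  let := Quotient.field P
  rw [Nat.card_units, hcard, Nat.cast_pred (Nat.pos_of_ne_zero hP0)]

theorem absNorm_eq_of_span_eq_mul (hrank : finrank ℤ R = 2) {p : ℕ} (hp : p.Prime) {P Q : Ideal R}
    (hP : P ≠ ⊤) (hQ : Q ≠ ⊤) (h : span {(p : R)} = P * Q) : absNorm P = p ∧ absNorm Q = p := by
  rw [← Nat.Prime.mul_eq_prime_sq_iff hp (absNorm_eq_one_iff.not.mpr hP)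
    (absNorm_eq_one_iff.not.mpr hQ), ← map_mul, ← h, absNorm_span_natCast, hrank]

theorem isPrime_or_eq_sq_or_eq_mul (hrank : finrank ℤ R = 2) {p : ℕ} (hp : p.Prime) :
    (span {(p : R)}).IsPrime ∨ (∃ P : Ideal R, P.IsPrime ∧ span {(p : R)} = P ^ 2) ∨
      ∃ P Q : Ideal R, P.IsPrime ∧ Q.IsPrime ∧ P ≠ Q ∧ span {(p : R)} = P * Q := by
  have hne : span {(p : R)} ≠ ⊤ := by
    rw [Ne, ← absNorm_eq_one_iff, absNorm_span_natCast, hrank]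
    exact (Nat.one_lt_pow two_ne_zero hp.one_lt).ne'
  obtain ⟨P, hP, hle⟩ := exists_le_maximal _ hne
  obtain ⟨Q, hPQ⟩ := dvd_iff_le.mpr hle
  by_cases hQ : Q = ⊤
  · exact .inl (by rw [hPQ, hQ, mul_top]; exact hP.isPrime)
  have hQprime : Q.IsPrime := isPrime_of_irreducible_absNorm <|
    (absNorm_eq_of_span_eq_mul hrank hp hP.ne_top hQ hPQ).2 ▸ hp
  by_cases h : P = Q
  · exact .inr (.inl ⟨P, hP.isPrime, by rw [hPQ, ← h, sq]⟩)
  · exact .inr (.inr ⟨P, Q, hP.isPrime, hQprime, h, hPQ⟩)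

theorem card_units_quotient_span_of_isPrime (hrank : finrank ℤ R = 2) {p : ℕ} (hp : p.Prime)
    (h : (span {(p : R)}).IsPrime) :
    (Nat.card (R ⧸ span {(p : R)})ˣ : ℤ) = (p - 1) * (p + 1) := by
  have hN : absNorm (span {(p : R)}) = p ^ 2 := by rw [absNorm_span_natCast, hrank]
  rw [card_units_quotient_of_isPrime h (hN ▸ pow_ne_zero 2 hp.ne_zero), hN]
  push_cast
  ring

theorem card_units_quotient_span_of_eq_sq (hrank : finrank ℤ R = 2) {p : ℕ} (hp : p.Prime)
    {P : Ideal R} (hP : P.IsPrime) (h : span {(p : R)} = P ^ 2) :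
    (Nat.card (R ⧸ span {(p : R)})ˣ : ℤ) = (p - 1) * p := by
  have hN : absNorm P = p :=
    (absNorm_eq_of_span_eq_mul hrank hp hP.ne_top hP.ne_top (h.trans (sq P))).1
  have hcard : Nat.card (R ⧸ P) = p := by rw [← Submodule.cardQuot_apply, ← absNorm_apply, hN]
  have hmul := card_units_quotient_mul_card_quotient (h.trans_le (pow_le_self two_ne_zero)) h.ge
  rw [hcard, card_quotient_span_natCast, hrank] at hmul
  have hP1 := card_units_quotient_of_isPrime hP (hN ▸ hp.ne_zero)
  rw [hN] at hP1
  apply mul_right_cancel₀ (Nat.cast_ne_zero.mpr hp.ne_zero : (p : ℤ) ≠ 0)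
  calc (Nat.card (R ⧸ span {(p : R)})ˣ : ℤ) * p = p ^ 2 * Nat.card (R ⧸ P)ˣ := mod_cast hmul
    _ = (p - 1) * p * p := by rw [hP1]; ring

theorem card_units_quotient_span_of_eq_mul (hrank : finrank ℤ R = 2) {p : ℕ} (hp : p.Prime)
    {P Q : Ideal R} (hP : P.IsPrime) (hQ : Q.IsPrime) (hPQ : P ≠ Q)
    (h : span {(p : R)} = P * Q) :
    (Nat.card (R ⧸ span {(p : R)})ˣ : ℤ) = (p - 1) * (p - 1) := by
  obtain ⟨hNP, hNQ⟩ := absNorm_eq_of_span_eq_mul hrank hp hP.ne_top hQ.ne_top h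
  have isMaximal {I : Ideal R} (hI : I.IsPrime) (hNI : absNorm I = p) : I.IsMaximal :=
    hI.isMaximal (by rintro rfl; exact hp.ne_zero (hNI ▸ absNorm_bot))
  have hcoprime : IsCoprime P Q :=
    isCoprime_iff_sup_eq.mpr ((isMaximal hP hNP).coprime_of_ne (isMaximal hQ hNQ) hPQ)
  rw [h, card_units_quotient_mul hcoprime, Nat.cast_mul,
    card_units_quotient_of_isPrime hP (hNP ▸ hp.ne_zero),
    card_units_quotient_of_isPrime hQ (hNQ ▸ hp.ne_zero), hNP, hNQ]

theorem card_units_quotient_span_prime (hrank : finrank ℤ R = 2) {p : ℕ} (hp : p.Prime) {χ : ℤ}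
    (hsplit : (∃ P Q : Ideal R, P.IsPrime ∧ Q.IsPrime ∧ P ≠ Q ∧ span {(p : R)} = P * Q) → χ = 1)
    (hinert : (span {(p : R)}).IsPrime → χ = -1)
    (hram : (∃ P : Ideal R, P.IsPrime ∧ span {(p : R)} = P ^ 2) → χ = 0) :
    (Nat.card (R ⧸ span {(p : R)})ˣ : ℤ) = (p - 1) * (p - χ) := by
  rcases isPrime_or_eq_sq_or_eq_mul hrank hp with h | ⟨P, hP, h⟩ | ⟨P, Q, hP, hQ, hPQ, h⟩
  · rw [hinert h, card_units_quotient_span_of_isPrime hrank hp h, sub_neg_eq_add]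
  · rw [hram ⟨P, hP, h⟩, card_units_quotient_span_of_eq_sq hrank hp hP h, sub_zero]
  · rw [hsplit ⟨P, Q, hP, hQ, hPQ, h⟩, card_units_quotient_span_of_eq_mul hrank hp hP hQ hPQ h]

theorem card_units_quotient_span_natCast_mul_prod (hrank : finrank ℤ R = 2) {n : ℕ} (hn : n ≠ 0)
    {χ : ℕ → ℤ}
    (hχ : ∀ p ∈ n.primeFactors,
      (Nat.card (R ⧸ span {(p : R)})ˣ : ℤ) = (p - 1) * (p - χ p)) :
    (Nat.card (R ⧸ span {(n : R)})ˣ : ℤ) * ∏ p ∈ n.primeFactors, (p : ℤ) =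
      n * n.totient * ∏ p ∈ n.primeFactors, ((p : ℤ) - χ p) := by
  set r : ℤ := ∏ p ∈ n.primeFactors, (p : ℤ)
  have hr0 : r ≠ 0 := Finset.prod_ne_zero_iff.mpr fun p hp =>
    Nat.cast_ne_zero.mpr (Nat.prime_of_mem_primeFactors hp).ne_zero
  have hunits : (Nat.card (R ⧸ span {(n : R)})ˣ : ℤ) * r ^ 2 =
      n ^ 2 * ∏ p ∈ n.primeFactors, (Nat.card (R ⧸ span {(p : R)})ˣ : ℤ) := by
    have := congrArg (Nat.cast (R := ℤ)) (card_units_quotient_span_natCast_mul (R := R) hn)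
    push_cast [hrank] at this
    exact this
  have htotient : (n.totient : ℤ) * r = n * ∏ p ∈ n.primeFactors, ((p : ℤ) - 1) := by
    have := congrArg (Nat.cast (R := ℤ)) (Nat.totient_mul_prod_primeFactors n)
    push_cast at this
    rw [this, Finset.prod_congr rfl fun p hp =>
      Nat.cast_pred (Nat.prime_of_mem_primeFactors hp).pos]
  apply mul_right_cancel₀ hr0
  calc (Nat.card (R ⧸ span {(n : R)})ˣ : ℤ) * r * r
      = n ^ 2 * ((∏ p ∈ n.primeFactors, ((p : ℤ) - 1)) *
          ∏ p ∈ n.primeFactors, ((p : ℤ) - χ p)) := by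
        rw [mul_assoc, ← sq, hunits, Finset.prod_congr rfl hχ, Finset.prod_mul_distrib]
    _ = n * n.totient * (∏ p ∈ n.primeFactors, ((p : ℤ) - χ p)) * r := by
        linear_combination -(n : ℤ) * (∏ p ∈ n.primeFactors, ((p : ℤ) - χ p)) * htotient

end NatCast

/-! ### Orders of conductor `c` -/

theorem charP_quotient_span_natCast (R : Type*) [CommRing R] [FaithfullyFlat ℤ R] (n : ℕ) :
    CharP (R ⧸ Ideal.span {(n : R)}) n where
  cast_eq_zero_iff m := by
    have hspan : Ideal.span {(n : R)} = (Ideal.span {(n : ℤ)}).map (algebraMap ℤ R) := by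
      simp [Ideal.map_span]
    rw [← map_natCast (Ideal.Quotient.mk _), Ideal.Quotient.eq_zero_iff_mem, hspan,
      ← map_natCast (algebraMap ℤ R), ← Ideal.mem_comap,
      Ideal.comap_map_eq_self_of_faithfullyFlat, Ideal.mem_span_singleton, Int.natCast_dvd_natCast]

theorem card_units_eq_totient_of_intCast_surjective {R : Type*} [CommRing R] {n : ℕ} [NeZero n]
    [CharP R n] (h : Function.Surjective (Int.cast : ℤ → R)) : Nat.card Rˣ = n.totient := by
  have hbij : Function.Bijective (ZMod.castHom dvd_rfl R : ZMod n →+* R) :=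
    ⟨ZMod.castHom_injective R, fun x => (h x).elim fun a ha => ⟨a, by simpa using ha⟩⟩
  rw [← Nat.card_congr (Units.mapEquiv (RingEquiv.ofBijective _ hbij).toMulEquiv).toEquiv,
    Nat.card_eq_fintype_card, ZMod.card_units_eq_totient]

theorem card_units_bot_eq_totient {A R : Type*} [CommRing A] [CommRing R] [Algebra A R] {n : ℕ}
    [NeZero n] [CharP R n] (h : ∀ a : A, ∃ m : ℤ, (m : R) = algebraMap A R a) :
    Nat.card (⊥ : Subalgebra A R)ˣ = n.totient := by
  have : CharP (⊥ : Subalgebra A R) n :=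
    (⊥ : Subalgebra A R).subtype.charP Subtype.val_injective n
  refine card_units_eq_totient_of_intCast_surjective ?_
  rintro ⟨_, hx⟩
  obtain ⟨a, rfl⟩ := Algebra.mem_bot.mp hx
  obtain ⟨m, hm⟩ := h a
  exact ⟨m, Subtype.ext hm⟩

section CondOrder

variable (K : Type*) [Field K] [NumberField K] (c : ℕ)

theorem span_natCast_restrictScalars_condOrder_le_one :
    (Ideal.span {(c : 𝓞 K)}).restrictScalars (condOrder K c) ≤ 1 := fun z hz => by
  obtain ⟨x, rfl⟩ := Ideal.mem_span_singleton.mp hz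
  exact Submodule.mem_one.mpr ⟨⟨c * x, 0, x, by simp⟩, rfl⟩

theorem card_units_bot_condOrder [NeZero c] :
    Nat.card (⊥ : Subalgebra (condOrder K c) (𝓞 K ⧸ Ideal.span {(c : 𝓞 K)}))ˣ = c.totient := by
  have := charP_quotient_span_natCast (𝓞 K) c
  refine card_units_bot_eq_totient ?_
  rintro ⟨_, a, x, rfl⟩
  refine ⟨a, ?_⟩
  change (a : 𝓞 K ⧸ Ideal.span {(c : 𝓞 K)}) = Ideal.Quotient.mk _ (a + c * x)
  rw [map_add, map_intCast, left_eq_add, Ideal.Quotient.eq_zero_iff_mem]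
  exact Ideal.mul_mem_right _ _ (Ideal.mem_span_singleton_self _)

theorem card_classGroup_condOrder_mul_index_mul_totient [NeZero c] :
    Nat.card (ClassGroup (condOrder K c)) *
        (Units.map (condOrder K c).subtype.toMonoidHom).range.index * c.totient =
      classNumber K * Nat.card (𝓞 K ⧸ Ideal.span {(c : 𝓞 K)})ˣ := by
  have := finite_quotient_span_natCast (𝓞 K) c
  rw [← card_units_bot_condOrder K c, classNumber, ← Nat.card_eq_fintype_card]
  exact card_classGroup_mul_index_mul_card_units (span_natCast_restrictScalars_condOrder_le_one K c)

theorem card_classGroup_condOrder_pos [NeZero c] : 0 < Nat.card (ClassGroup (condOrder K c)) := by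
  have := finite_quotient_span_natCast (𝓞 K) c
  have hpos : 0 < classNumber K * Nat.card (𝓞 K ⧸ Ideal.span {(c : 𝓞 K)})ˣ :=
    Nat.mul_pos (classNumber_pos K) Nat.card_pos
  rw [← card_classGroup_condOrder_mul_index_mul_totient, mul_assoc] at hpos
  exact Nat.pos_of_mul_pos_right hpos

end CondOrder

theorem classNumber_order_formula_general
    (K : Type*) [Field K] [NumberField K]
    (hquad : finrank ℚ K = 2)
    (c : ℕ) (hc : 1 ≤ c)
    (χ : ℕ → ℤ)
    (hχ : ∀ p : ℕ, p.Prime →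
      ((χ p = 1 ↔ ∃ P Q : Ideal (𝓞 K), P.IsPrime ∧ Q.IsPrime ∧ P ≠ Q ∧
          Ideal.span {(p : 𝓞 K)} = P * Q) ∧
        (χ p = -1 ↔ (Ideal.span {(p : 𝓞 K)}).IsPrime) ∧
        (χ p = 0 ↔ ∃ P : Ideal (𝓞 K), P.IsPrime ∧ Ideal.span {(p : 𝓞 K)} = P ^ 2))) :
    0 < Nat.card (ClassGroup (condOrder K c)) ∧
      (Nat.card (ClassGroup (condOrder K c)) : ℤ) *
          (Units.map (condOrder K c).subtype.toMonoidHom).range.index *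
          ∏ p ∈ c.primeFactors, (p : ℤ) =
        (classNumber K : ℤ) * c * ∏ p ∈ c.primeFactors, ((p : ℤ) - χ p) := by
  have : NeZero c := ⟨Nat.ne_of_gt hc⟩
  have hrank : finrank ℤ (𝓞 K) = 2 := (RingOfIntegers.rank K).trans hquad
  refine ⟨card_classGroup_condOrder_pos K c, ?_⟩
  have hclass := congrArg (Nat.cast (R := ℤ)) (card_classGroup_condOrder_mul_index_mul_totient K c)
  have hunits := card_units_quotient_span_natCast_mul_prod (R := 𝓞 K)
    hrank (NeZero.ne c) fun p hpc => by
      have hp := Nat.prime_of_mem_primeFactors hpc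
      obtain ⟨hsplit, hinert, hram⟩ := hχ p hp
      exact card_units_quotient_span_prime hrank hp hsplit.mpr hinert.mpr hram.mpr
  have htotient : (c.totient : ℤ) ≠ 0 := mod_cast (Nat.totient_pos.mpr hc).ne'
  push_cast at hclass
  apply mul_right_cancel₀ htotient
  linear_combination (∏ p ∈ c.primeFactors, (p : ℤ)) * hclass + (classNumber K : ℤ) * hunits

/-- **class number of an order.**  Let `K` be an imaginary quadratic number field,
`c ≥ 1` an integer, and `O = ℤ + c𝓞_K` the order of conductor `c` in `K`.  Let `h_O` be the
cardinality of the class group of `O`, and `u = [𝓞_K^× : O^×]`.  With `χ(p) = 1, −1, 0`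
according as the prime `p` is split, inert or ramified in `𝓞_K`, one has
`h_O · u · ∏_{p ∣ c} p = h_K · c · ∏_{p ∣ c} (p − χ(p))`; in particular `h_O` is finite. -/
theorem classNumber_order_formula
    (K : Type*) [Field K] [NumberField K]
    (hquad : finrank ℚ K = 2) (himag : IsEmpty (K →+* ℝ))
    (c : ℕ) (hc : 1 ≤ c)
    (χ : ℕ → ℤ)
    (hχ : ∀ p : ℕ, p.Prime →
      ((χ p = 1 ↔ ∃ P Q : Ideal (𝓞 K), P.IsPrime ∧ Q.IsPrime ∧ P ≠ Q ∧
          Ideal.span {(p : 𝓞 K)} = P * Q) ∧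
        (χ p = -1 ↔ (Ideal.span {(p : 𝓞 K)}).IsPrime) ∧
        (χ p = 0 ↔ ∃ P : Ideal (𝓞 K), P.IsPrime ∧ Ideal.span {(p : 𝓞 K)} = P ^ 2))) :
    0 < Nat.card (ClassGroup (condOrder K c)) ∧
      (Nat.card (ClassGroup (condOrder K c)) : ℤ) *
          (Units.map (condOrder K c).subtype.toMonoidHom).range.index *
          ∏ p ∈ c.primeFactors, (p : ℤ) =
        (classNumber K : ℤ) * c * ∏ p ∈ c.primeFactors, ((p : ℤ) - χ p) :=
  classNumber_order_formula_general K hquad c hc χ hχ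
end

section
/- Let q be a prime number, and t an integer with t² < 4q, so that R = ℤ[X]/(X² − tX + q) is an order in an imaginary quadratic field. Let ℓ be a prime number such that the polynomial X² − tX + q has two distinct roots modulo ℓ. Then there exist exactly two distinct prime ideals 𝔩₁ ≠ 𝔩₂ of R whose residue rings R/𝔩₁ and R/𝔩₂ have cardinality ℓ; their product 𝔩₁𝔩₂ equals the principal ideal ℓR; and every ideal I of R with card(R/I) = ℓ equals 𝔩₁ or 𝔩₂. -/
/-!
Ideals of prime index `ℓ` in a ring are the kernels of its homomorphisms to `𝔽_ℓ`, and the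
homomorphisms from `ℤ[X]/(f)` to `𝔽_ℓ` are the evaluations at the roots of `f` modulo `ℓ`.  If `f`
is a product of distinct linear factors modulo `ℓ`, a polynomial vanishes at all these roots iff
it is divisible by `f` modulo `ℓ`, so the kernels intersect in `(ℓ)`; being pairwise comaximal,
they also have product `(ℓ)`.
-/

open Polynomial

/-- The quadratic order `R = ℤ[X]/(X² − tX + q)`. -/
def quadOrder (t q : ℤ) : Type :=
  Polynomial ℤ ⧸ Ideal.span {Polynomial.X ^ 2 - Polynomial.C t * Polynomial.X + Polynomial.C q}

noncomputable instance (t q : ℤ) : CommRing (quadOrder t q) :=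
  Ideal.Quotient.commRing _

section PrimeIndex

variable {R : Type*}

theorem card_quotient_ker_zmod [Ring R] {n : ℕ} (φ : R →+* ZMod n) :
    Nat.card (R ⧸ RingHom.ker φ) = n := by
  rw [Nat.card_congr (RingHom.quotientKerEquivOfSurjective (ZMod.ringHom_surjective φ)).toEquiv,
    Nat.card_zmod]

theorem exists_ker_eq_of_card_quotient_eq_prime [CommRing R] {p : ℕ} (hp : p.Prime) {I : Ideal R}
    (hI : Nat.card (R ⧸ I) = p) : ∃ φ : R →+* ZMod p, RingHom.ker φ = I := by
  have : Finite (R ⧸ I) := Nat.finite_of_card_ne_zero (hI ▸ hp.ne_zero)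
  have := Fintype.ofFinite (R ⧸ I)
  let e := ZMod.ringEquivOfPrime (R ⧸ I) hp (by rw [← Nat.card_eq_fintype_card, hI])
  refine ⟨e.symm.toRingHom.comp (Ideal.Quotient.mk I), ?_⟩
  exact (RingHom.ker_equiv_comp (Ideal.Quotient.mk I) e.symm).trans Ideal.mk_ker

end PrimeIndex

section Domain

variable {A : Type*} [CommRing A] [IsDomain A]

theorem prod_X_sub_C_dvd_iff {s : Finset A} {g : A[X]} :
    ∏ r ∈ s, (X - C r) ∣ g ↔ ∀ r ∈ s, g.eval r = 0 := by
  rcases eq_or_ne g 0 with rfl | hg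
  · simp
  rw [Finset.prod_eq_multiset_prod, Multiset.prod_X_sub_C_dvd_iff_le_roots hg,
    Multiset.le_iff_subset s.nodup]
  simp [Multiset.subset_iff, hg]

theorem X_sq_sub_mul_add_eq_mul_of_roots {b c r s : A} (hrs : r ≠ s)
    (hr : r ^ 2 - b * r + c = 0) (hs : s ^ 2 - b * s + c = 0) :
    (X ^ 2 - C b * X + C c : A[X]) = (X - C r) * (X - C s) := by
  have hb : b = r + s :=
    mul_left_cancel₀ (sub_ne_zero.2 hrs) (by linear_combination hs - hr)
  have hc : c = r * s := by linear_combination hr + r * hb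
  rw [hb, hc, C_add, C_mul]
  ring

end Domain

section Reduction

variable {A B : Type*} [CommRing A] [CommRing B] {φ : A →+* B} {f : A[X]}

theorem adjoinRoot_map_mk {g : B[X]} (h : g ∣ f.map φ) (p : A[X]) :
    AdjoinRoot.map φ f g h (AdjoinRoot.mk f p) = AdjoinRoot.mk g (p.map φ) := by
  rw [AdjoinRoot.map, AdjoinRoot.lift_mk, ← eval₂_map, ← AdjoinRoot.aeval_eq, aeval_def,
    AdjoinRoot.algebraMap_eq]

theorem adjoinRoot_mk_mem_map_ker_iff (hφ : Function.Surjective φ) {p : A[X]} :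
    AdjoinRoot.mk f p ∈ (RingHom.ker φ).map (AdjoinRoot.of f) ↔ f.map φ ∣ p.map φ := by
  constructor
  · intro hp
    have hle : (RingHom.ker φ).map (AdjoinRoot.of f) ≤
        RingHom.ker (AdjoinRoot.map φ f (f.map φ) dvd_rfl) :=
      Ideal.map_le_iff_le_comap.2 fun a ha ↦ by simp [RingHom.mem_ker.1 ha]
    rw [← AdjoinRoot.mk_eq_zero, ← adjoinRoot_map_mk dvd_rfl]
    exact hle hp
  · rintro ⟨h, hh⟩
    obtain ⟨g, rfl⟩ := map_surjective φ hφ h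
    have hker : p - f * g ∈ (RingHom.ker φ).map C := by
      rw [← ker_mapRingHom, RingHom.mem_ker, coe_mapRingHom, Polynomial.map_sub,
        Polynomial.map_mul, hh, sub_self]
    simpa [AdjoinRoot.of, Ideal.map_map] using Ideal.mem_map_of_mem (AdjoinRoot.mk f) hker

/-- The ideal of `A[X]/(f)` generated by the classes of the polynomials that vanish at `r` after
reduction along `φ : A → B`. For `A = ℤ`, `B = 𝔽_ℓ` and `r` a root of `f` modulo `ℓ` this is the
ideal `(ℓ, X - r)` of the Kummer–Dedekind theorem. It is defined for every `r`, but if `φ` is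
surjective and the reduction of `f` takes a unit value at `r`, it is the unit ideal. -/
noncomputable def rootIdeal (φ : A →+* B) (f : A[X]) (r : B) : Ideal (AdjoinRoot f) :=
  (RingHom.ker (eval₂RingHom φ r)).map (AdjoinRoot.mk f)

namespace rootIdeal

theorem eq_ker_lift {r : B} (hr : f.eval₂ φ r = 0) :
    rootIdeal φ f r = RingHom.ker (AdjoinRoot.lift φ r hr) := by
  have hcomap : RingHom.ker (eval₂RingHom φ r) =
      (RingHom.ker (AdjoinRoot.lift φ r hr)).comap (AdjoinRoot.mk f) := by
    ext p
    simp [RingHom.mem_ker]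
  rw [rootIdeal, hcomap, Ideal.map_comap_of_surjective _ AdjoinRoot.mk_surjective]

theorem mk_mem_iff {r : B} (hr : f.eval₂ φ r = 0) {p : A[X]} :
    AdjoinRoot.mk f p ∈ rootIdeal φ f r ↔ p.eval₂ φ r = 0 := by
  rw [eq_ker_lift hr, RingHom.mem_ker, AdjoinRoot.lift_mk]

theorem isCoprime_of_isUnit_sub (hφ : Function.Surjective φ) {r s : B} (hrs : IsUnit (s - r)) :
    IsCoprime (rootIdeal φ f r) (rootIdeal φ f s) := by
  obtain ⟨a, rfl⟩ := hφ r
  obtain ⟨u, hu⟩ := hrs.exists_left_inv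
  obtain ⟨c, rfl⟩ := hφ u
  refine Ideal.isCoprime_iff_exists.2
    ⟨AdjoinRoot.mk f (C c * (X - C a)), Ideal.mem_map_of_mem _ ?_,
      AdjoinRoot.mk f (1 - C c * (X - C a)), Ideal.mem_map_of_mem _ ?_, ?_⟩
  · simp [RingHom.mem_ker]
  · simp [RingHom.mem_ker, hu]
  · rw [← map_add, add_sub_cancel, map_one]

variable {K : Type*} [Field K] {φ : A →+* K}

theorem isMaximal (hφ : Function.Surjective φ) {r : K} (hr : f.eval₂ φ r = 0) :
    (rootIdeal φ f r).IsMaximal := by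
  rw [eq_ker_lift hr]
  refine RingHom.ker_isMaximal_of_surjective _ fun x ↦ ?_
  obtain ⟨a, rfl⟩ := hφ x
  exact ⟨AdjoinRoot.of f a, AdjoinRoot.lift_of hr⟩

theorem isCoprime (hφ : Function.Surjective φ) {r s : K} (hrs : r ≠ s) :
    IsCoprime (rootIdeal φ f r) (rootIdeal φ f s) :=
  isCoprime_of_isUnit_sub hφ (sub_ne_zero.2 hrs.symm).isUnit

theorem ne_of_ne (hφ : Function.Surjective φ) {r s : K} (hr : f.eval₂ φ r = 0) (hrs : r ≠ s) :
    rootIdeal φ f r ≠ rootIdeal φ f s := fun h ↦ by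
  have hself : IsCoprime (rootIdeal φ f r) (rootIdeal φ f r) := by
    simpa only [← h] using isCoprime (f := f) hφ hrs
  exact (isMaximal hφ hr).ne_top (by simpa using Ideal.isCoprime_iff_sup_eq.1 hself)

theorem prod_eq_map_ker (hφ : Function.Surjective φ) {s : Finset K}
    (hf : f.map φ = ∏ r ∈ s, (X - C r)) :
    ∏ r ∈ s, rootIdeal φ f r = (RingHom.ker φ).map (AdjoinRoot.of f) := by
  have hroot : ∀ r ∈ s, f.eval₂ φ r = 0 := fun r hr ↦ by
    rw [eval₂_eq_eval_map]
    exact prod_X_sub_C_dvd_iff.1 hf.symm.dvd r hr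
  rw [Ideal.prod_eq_iInf_of_pairwise_isCoprime fun r _ r' _ hne ↦ isCoprime hφ hne]
  ext z
  obtain ⟨p, rfl⟩ := AdjoinRoot.mk_surjective z
  calc AdjoinRoot.mk f p ∈ ⨅ r ∈ s, rootIdeal φ f r
      ↔ ∀ r ∈ s, AdjoinRoot.mk f p ∈ rootIdeal φ f r := by simp only [Ideal.mem_iInf]
    _ ↔ ∀ r ∈ s, (p.map φ).eval r = 0 :=
      forall₂_congr fun r hr ↦ by rw [mk_mem_iff (hroot r hr), eval₂_eq_eval_map]
    _ ↔ f.map φ ∣ p.map φ := by rw [hf, prod_X_sub_C_dvd_iff]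
    _ ↔ AdjoinRoot.mk f p ∈ (RingHom.ker φ).map (AdjoinRoot.of f) :=
      (adjoinRoot_mk_mem_map_ker_iff hφ).symm

end rootIdeal

end Reduction

section Integers

variable {p : ℕ} [Fact p.Prime] {f : ℤ[X]}

theorem adjoinRoot_card_quotient_eq_prime_iff {I : Ideal (AdjoinRoot f)} :
    Nat.card (AdjoinRoot f ⧸ I) = p ↔ ∃ r : ZMod p,
      f.eval₂ (Int.castRingHom (ZMod p)) r = 0 ∧ rootIdeal (Int.castRingHom (ZMod p)) f r = I := by
  constructor
  · intro hI
    obtain ⟨θ, rfl⟩ := exists_ker_eq_of_card_quotient_eq_prime Fact.out hI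
    have hroot : f.eval₂ (Int.castRingHom (ZMod p)) (θ (AdjoinRoot.root f)) = 0 := by
      have := congrArg θ (AdjoinRoot.eval₂_root f)
      rwa [hom_eval₂, map_zero, RingHom.ext_int (θ.comp _) (Int.castRingHom _)] at this
    have hθ : AdjoinRoot.lift (Int.castRingHom (ZMod p)) (θ (AdjoinRoot.root f)) hroot = θ :=
      AdjoinRoot.ringHom_ext (RingHom.ext_int _ _) (AdjoinRoot.lift_root hroot)
    exact ⟨θ (AdjoinRoot.root f), hroot, by rw [rootIdeal.eq_ker_lift hroot, hθ]⟩
  · rintro ⟨r, hr, rfl⟩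
    rw [rootIdeal.eq_ker_lift hr, card_quotient_ker_zmod]

theorem prod_rootIdeal_eq_span_natCast {s : Finset (ZMod p)}
    (hf : f.map (Int.castRingHom (ZMod p)) = ∏ r ∈ s, (X - C r)) :
    ∏ r ∈ s, rootIdeal (Int.castRingHom (ZMod p)) f r = Ideal.span {(p : AdjoinRoot f)} := by
  rw [rootIdeal.prod_eq_map_ker (ZMod.ringHom_surjective _) hf, ZMod.ker_intCastRingHom,
    Ideal.map_span, Set.image_singleton, map_natCast]

end Integers

theorem elkies_prime_splits_general (q t : ℤ) (ℓ : ℕ) (hℓ : ℓ.Prime)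
    (hroots : ∃ r s : ZMod ℓ, r ≠ s ∧
      r ^ 2 - (t : ZMod ℓ) * r + (q : ZMod ℓ) = 0 ∧
      s ^ 2 - (t : ZMod ℓ) * s + (q : ZMod ℓ) = 0) :
    ∃ 𝔩₁ 𝔩₂ : Ideal (quadOrder t q), 𝔩₁ ≠ 𝔩₂ ∧ 𝔩₁.IsPrime ∧ 𝔩₂.IsPrime ∧
      Nat.card (quadOrder t q ⧸ 𝔩₁) = ℓ ∧ Nat.card (quadOrder t q ⧸ 𝔩₂) = ℓ ∧
      𝔩₁ * 𝔩₂ = Ideal.span {(ℓ : quadOrder t q)} ∧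
      ∀ I : Ideal (quadOrder t q), Nat.card (quadOrder t q ⧸ I) = ℓ →
        I = 𝔩₁ ∨ I = 𝔩₂ := by
  have : Fact ℓ.Prime := ⟨hℓ⟩
  obtain ⟨r, s, hrs, hr, hs⟩ := hroots
  let φ := Int.castRingHom (ZMod ℓ)
  -- `quadOrder t q` unfolds to `AdjoinRoot f`.
  let f : ℤ[X] := X ^ 2 - C t * X + C q
  have hφ : Function.Surjective φ := ZMod.ringHom_surjective φ
  have hf : f.map φ = ∏ x ∈ {r, s}, (X - C x) := by
    rw [Finset.prod_pair hrs, ← X_sq_sub_mul_add_eq_mul_of_roots hrs hr hs]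
    simp [f, φ]
  have hroot (x : ZMod ℓ) : f.eval₂ φ x = 0 ↔ x = r ∨ x = s := by
    simp [eval₂_eq_eval_map, hf, Finset.prod_pair hrs, sub_eq_zero]
  have hr : f.eval₂ φ r = 0 := (hroot r).2 (.inl rfl)
  have hs : f.eval₂ φ s = 0 := (hroot s).2 (.inr rfl)
  refine ⟨rootIdeal φ f r, rootIdeal φ f s, rootIdeal.ne_of_ne hφ hr hrs,
    (rootIdeal.isMaximal hφ hr).isPrime, (rootIdeal.isMaximal hφ hs).isPrime,
    adjoinRoot_card_quotient_eq_prime_iff.2 ⟨r, hr, rfl⟩,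
    adjoinRoot_card_quotient_eq_prime_iff.2 ⟨s, hs, rfl⟩,
    (Finset.prod_pair hrs).symm.trans (prod_rootIdeal_eq_span_natCast hf), fun I hI ↦ ?_⟩
  obtain ⟨x, hx, rfl⟩ := adjoinRoot_card_quotient_eq_prime_iff.1 hI
  exact ((hroot x).1 hx).imp (congrArg _) (congrArg _)

/-- Let `q` be a prime number and `t` an integer with `t² < 4q`, so that
`R = ℤ[X]/(X² − tX + q)` is an order in an imaginary quadratic field.  Let `ℓ` be a prime such
that `X² − tX + q` has two distinct roots modulo `ℓ`.  Then there are exactly two distinct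
prime ideals `𝔩₁ ≠ 𝔩₂` of `R` of residue cardinality `ℓ`, their product is the principal ideal
`ℓR`, and every ideal of `R` of residue cardinality `ℓ` is `𝔩₁` or `𝔩₂`. -/
theorem elkies_prime_splits
    (q : ℕ) (hq : q.Prime) (t : ℤ) (ht : t ^ 2 < 4 * q)
    (ℓ : ℕ) (hℓ : ℓ.Prime)
    (hroots : ∃ r s : ZMod ℓ, r ≠ s ∧
      r ^ 2 - (t : ZMod ℓ) * r + (q : ZMod ℓ) = 0 ∧
      s ^ 2 - (t : ZMod ℓ) * s + (q : ZMod ℓ) = 0) :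
    ∃ 𝔩₁ 𝔩₂ : Ideal (quadOrder t (q : ℤ)), 𝔩₁ ≠ 𝔩₂ ∧ 𝔩₁.IsPrime ∧ 𝔩₂.IsPrime ∧
      Nat.card (quadOrder t (q : ℤ) ⧸ 𝔩₁) = ℓ ∧ Nat.card (quadOrder t (q : ℤ) ⧸ 𝔩₂) = ℓ ∧
      𝔩₁ * 𝔩₂ = Ideal.span {(ℓ : quadOrder t (q : ℤ))} ∧
      ∀ I : Ideal (quadOrder t (q : ℤ)), Nat.card (quadOrder t (q : ℤ) ⧸ I) = ℓ →
        I = 𝔩₁ ∨ I = 𝔩₂ := by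
  simpa using elkies_prime_splits_general q t ℓ hℓ (by simpa using hroots)
end
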